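/- For every automorphism φ of the free group F_n of finite rank n, the fixed subgroup Fix(φ) = {g ∈ F_n : φ(g) = g} is inert in F_n: rk(Fix(φ) ∩ G) ≤ rk(G) for every finitely generated subgroup G of F_n. -/

import Mathlib

/-- The rank of a subgroup: the minimal cardinality of a generating set.
For subgroups of free groups (which are free by Nielsen–Schreier) this is the
cardinality of a free basis. -/
noncomputable def rk {G : Type*} [Group G] (H : Subgroup G) : Cardinal :=
  ⨅ S : {S : Set G // Subgroup.closure S = H}, Cardinal.mk S.1

/-- A subgroup `H` is inert if `rk (H ⊓ K) ≤ rk K` for every finitely generated `K`. -/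
def IsInert {G : Type*} [Group G] (H : Subgroup G) : Prop :=
  ∀ K : Subgroup G, K.FG → rk (H ⊓ K) ≤ rk K

/-- `stage x i` is the subgroup generated by the first `i` elements of `x`. -/
def stage {n : ℕ} {F : Type*} [Group F] (x : Fin n → F) (i : ℕ) : Subgroup F :=
  Subgroup.closure (x '' {j | (j : ℕ) < i})

/-- `x` is an ordered free basis of `F`. -/
def IsOrderedBasis {n : ℕ} {F : Type*} [Group F] (x : Fin n → F) : Prop :=
  Function.Bijective (FreeGroup.lift x)

/-- `H` is in echelon form with respect to the ordered basis `x`: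
`rk (H ⊓ F_i) ≤ rk (H ⊓ F_{i-1}) + 1` for `i = 1, …, n`. -/
def InEchelonForm {n : ℕ} {F : Type*} [Group F] (x : Fin n → F) (H : Subgroup F) : Prop :=
  ∀ i : ℕ, i < n → rk (H ⊓ stage x (i + 1)) ≤ rk (H ⊓ stage x i) + 1

/-- `H` is an echelon subgroup: it is in echelon form with respect to
some ordered free basis. -/
def IsEchelon {n : ℕ} (H : Subgroup (FreeGroup (Fin n))) : Prop :=
  ∃ x : Fin n → FreeGroup (Fin n), IsOrderedBasis x ∧ InEchelonForm x H

/-- A 1-generator (subgroup) endomorphism: an endomorphism fixing all but (possibly)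
one member of some set of free generators. -/
def IsOneGenEndo {G : Type*} [Group G] (φ : G →* G) : Prop :=
  ∃ (ι : Type) (b : FreeGroupBasis ι G) (s : Set ι),
    s.Subsingleton ∧ ∀ i ∉ s, φ (b i) = b i

/-- The subgroup of points fixed by an endomorphism. -/
def fixedSubgroup {G : Type*} [Group G] (φ : G →* G) : Subgroup G where
  carrier := {g | φ g = g}
  one_mem' := by simp
  mul_mem' := by intro a b ha hb; simp only [Set.mem_setOf_eq, map_mul] at *; rw [ha, hb]
  inv_mem' := by intro a ha; simp only [Set.mem_setOf_eq, map_inv] at *; rw [ha]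

/-- An element is primitive if it belongs to some free basis. -/
def IsPrimitive {n : ℕ} (g : FreeGroup (Fin n)) : Prop :=
  ∃ x : Fin n → FreeGroup (Fin n), IsOrderedBasis x ∧ ∃ j, x j = g

/-!
Let `K` be generated by `T`, let `l` be `k` elements of a basis of `Fix φ ⊓ K`, and let `F` act on a
finite set `Q` with a nonempty `K`-invariant subset `I`. Derivations from a subgroup `P` into the
functions on `Q` take values on `l`; consider the linear relations that all of them satisfy and that
are supported over `I`. A derivation on `K` with values over `I` is determined by its values on `T`,
so for `P = K`, hence for `P = F`, there are at least `(k - #T) * #I` relations. If `I` is disjoint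
from its translates by finitely many suitable elements of `Fix φ` outside `K`, which subgroup
separability provides, then the values on `l` of derivations on `Fix φ` are arbitrary over `I`, and
for `P = Fix φ` there are no relations. It remains to see that passing from `F` to `Fix φ` costs
less than `#I` relations as soon as `Q` is free enough.

A relation over `P` is turned into a relation over `P'` by killing a vector in the left kernel of a
matrix over the group ring. The dimension of such a kernel is bounded by a von Neumann trace, which
does not depend on `Q`.

From `F` to `Fix (φ ^ m)`: the powers of `φ ^ m` fix `l`, so they produce from one relation
arbitrarily many. For suitable `m` the coset representatives involved have infinite orbits, and
the orbit matrix is nearly orthogonal.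

From `Fix (α ^ p)` to `Fix α` for a prime `p`: the matrix is the Fox Jacobian of the inclusion. By
the equivariant cohomology of products of Cayley trees, homomorphisms `Fix α → ℤ/p` extend to
`Fix (α ^ p)`, so the augmented Jacobian is injective modulo `p`. Hence it is injective on every
finite `p`-quotient, where integrality bounds a Gram determinant below by `1` and so limits the
number of small eigenvalues.
-/

namespace DicksVentura

universe u v

/-! ### Cochains on products of Cayley trees -/

section EdgeIntegral

variable {P Y M : Type*} [Group P] [AddCommGroup M]

theorem closure_range_basis (b : FreeGroupBasis Y P) : Subgroup.closure (Set.range b) = ⊤ := by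
  have range_eq : Set.range b = b.repr.symm.toMonoidHom '' Set.range FreeGroup.of := by
    rw [← Set.range_comp]
    rfl
  rw [range_eq, ← MonoidHom.map_closure, FreeGroup.closure_range_of,
    Subgroup.map_top_of_surjective _ b.repr.symm.surjective]

theorem eq_apply_one_of_mul_basis_invariant {W : Type*} (b : FreeGroupBasis Y P) (h : P → W)
    (hb : ∀ z y, h (z * b y) = h z) (z : P) : h z = h 1 := by
  have invariant : ∀ w ∈ Subgroup.closure (Set.range b), ∀ z, h (z * w) = h z := by
    intro w hw
    induction hw using Subgroup.closure_induction with
    | mem x hx =>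
      obtain ⟨y, rfl⟩ := hx
      exact fun z => hb z y
    | one => simp
    | mul x y _ _ hx hy => exact fun z => by rw [← mul_assoc, hy, hx]
    | inv x _ hx => exact fun z => by rw [← hx (z * x⁻¹), inv_mul_cancel_right]
  simpa using invariant z (by simp [closure_range_basis]) 1

/-- The permutation `(z, m) ↦ (z * w, m + g z)` of `P × M`: traverse the edge from `z` to `z * w`
and add the weight `g z` of that edge to an accumulator. -/
def edgeStep (w : P) (g : P → M) : Equiv.Perm (P × M) where
  toFun q := (q.1 * w, q.2 + g q.1)
  invFun q := (q.1 * w⁻¹, q.2 - g (q.1 * w⁻¹))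
  left_inv q := by ext <;> simp
  right_inv q := by ext <;> simp

theorem exists_edgeIntegral (b : FreeGroupBasis Y P) (g : P → Y → M) :
    ∃ I : P → M, I 1 = 0 ∧ ∀ z y, I (z * b y) = I z + g z y := by
  let θ : P →* (Equiv.Perm (P × M))ᵐᵒᵖ :=
    b.lift fun y => MulOpposite.op (edgeStep (b y) fun z => g z y)
  have θ_step : ∀ z y, (θ (z * b y)).unop (1, 0) =
      edgeStep (b y) (fun z => g z y) ((θ z).unop (1, 0)) := fun z y => by
    simp [θ, map_mul]
  have θ_fst : ∀ z, ((θ z).unop (1, 0)).1 = z := fun z => by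
    have const := eq_apply_one_of_mul_basis_invariant b
      (fun z => ((θ z).unop (1, 0)).1 * z⁻¹) (fun z y => by
        simp only [θ_step]
        simp [edgeStep]) z
    simpa [mul_inv_eq_one] using const
  refine ⟨fun z => ((θ z).unop (1, 0)).2, by simp, fun z y => ?_⟩
  simp only [θ_step]
  simp [edgeStep, θ_fst]

/-- The function on the Cayley tree of `P` with respect to `b` that vanishes at `1` and whose
increment along the edge from `z` to `z * b y` is `g z y`. -/
noncomputable def edgeIntegral (b : FreeGroupBasis Y P) (g : P → Y → M) : P → M :=
  (exists_edgeIntegral b g).choose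

theorem edgeIntegral_one (b : FreeGroupBasis Y P) (g : P → Y → M) : edgeIntegral b g 1 = 0 :=
  (exists_edgeIntegral b g).choose_spec.1

theorem edgeIntegral_mul_basis (b : FreeGroupBasis Y P) (g : P → Y → M) (z : P) (y : Y) :
    edgeIntegral b g (z * b y) = edgeIntegral b g z + g z y :=
  (exists_edgeIntegral b g).choose_spec.2 z y

theorem edgeIntegral_mul_left (b : FreeGroupBasis Y P) {g g' : P → Y → M} {φ : M →+ M} {x : P}
    (h : ∀ z y, g' (x * z) y = φ (g z y)) (z : P) :
    edgeIntegral b g' (x * z) = edgeIntegral b g' x + φ (edgeIntegral b g z) := by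
  have const := eq_apply_one_of_mul_basis_invariant b
    (fun z => edgeIntegral b g' (x * z) - φ (edgeIntegral b g z)) (fun z y => by
      simp only [← mul_assoc, edgeIntegral_mul_basis, map_add, h]
      abel) z
  simpa [edgeIntegral_one, sub_eq_iff_eq_add] using const

end EdgeIntegral

section CubeDiff

open Finset

variable {P C Y M : Type*} [Group P] [DecidableEq C] [AddCommGroup M]

/-- Functions of a vertex `a` of a product of Cayley trees indexed by `C` together with a direction
`y j` in every factor. For a finite set `S` of coordinates such a pair spans a cube of dimension
`#S` with corner `a`, so a function that only uses the directions in `S` is a cellular cochain. -/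
abbrev CubeFun (C P Y M : Type*) := (C → P) → (C → Y) → M

/-- The corner of the cube at `a` in directions `y` obtained by moving the coordinates in `R`. -/
def bump (b : Y → P) (R : Finset C) (a : C → P) (y : C → Y) : C → P :=
  fun j => if j ∈ R then a j * b (y j) else a j

/-- The iterated difference of `f` in the coordinates of `S`: the alternating sum of the values of
`f` at the corners of a cube. -/
def cubeDiff (b : Y → P) (S : Finset C) (f : CubeFun C P Y M) : CubeFun C P Y M :=
  fun a y => ∑ R ∈ S.powerset, (-1 : ℤ) ^ (#S + #R) • f (bump b R a y) y

@[simp]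
theorem cubeDiff_empty (b : Y → P) (f : CubeFun C P Y M) : cubeDiff b ∅ f = f := by
  funext a y
  have bump_empty : bump b ∅ a y = a := funext fun j => by simp [bump]
  simp [cubeDiff, bump_empty]

theorem bump_insert (b : Y → P) {R : Finset C} {l : C} (hl : l ∉ R) (a : C → P) (y : C → Y) :
    bump b (insert l R) a y = bump b R (Function.update a l (a l * b (y l))) y := by
  funext j
  by_cases hj : j = l
  · subst hj
    simp [bump, hl]
  · simp [bump, hj]

theorem bump_update_of_notMem (b : Y → P) {R : Finset C} {l : C} (hl : l ∉ R) (a : C → P)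
    (y : C → Y) (w : P) :
    bump b R (Function.update a l w) y = Function.update (bump b R a y) l w := by
  funext j
  by_cases hj : j = l
  · subst hj
    simp [bump, hl]
  · simp [bump, hj]

theorem cubeDiff_insert (b : Y → P) {S : Finset C} {l : C} (hl : l ∉ S) (f : CubeFun C P Y M)
    (a : C → P) (y : C → Y) :
    cubeDiff b (insert l S) f a y =
      cubeDiff b S f (Function.update a l (a l * b (y l))) y - cubeDiff b S f a y := by
  unfold cubeDiff
  rw [sum_powerset_insert hl, card_insert_of_notMem hl, sub_eq_neg_add, ← sum_neg_distrib]
  congr 1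
  · refine sum_congr rfl fun R _ => ?_
    rw [← neg_smul, add_right_comm, pow_succ, mul_neg_one]
  · refine sum_congr rfl fun R hR => ?_
    have hlR : l ∉ R := fun h => hl (mem_powerset.mp hR h)
    rw [card_insert_of_notMem hlR, bump_insert b hlR]
    congr 1
    ring

theorem cubeDiff_sub (b : Y → P) (S : Finset C) (f g : CubeFun C P Y M) (a : C → P) (y : C → Y) :
    cubeDiff b S (fun a y => f a y - g a y) a y = cubeDiff b S f a y - cubeDiff b S g a y := by
  simp [cubeDiff, smul_sub, sum_sub_distrib]

theorem cubeDiff_sum {ι : Type*} (b : Y → P) (S : Finset C) (T : Finset ι)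
    (f : ι → CubeFun C P Y M) (a : C → P) (y : C → Y) :
    cubeDiff b S (fun a y => ∑ i ∈ T, f i a y) a y = ∑ i ∈ T, cubeDiff b S (f i) a y := by
  simp only [cubeDiff, smul_sum]
  rw [sum_comm]

theorem cubeDiff_addMonoidHom (b : Y → P) (S : Finset C) (φ : M →+ M) (f : CubeFun C P Y M)
    (a : C → P) (y : C → Y) :
    cubeDiff b S (fun a y => φ (f a y)) a y = φ (cubeDiff b S f a y) := by
  simp [cubeDiff, map_sum, map_zsmul]

theorem cubeDiff_eq_zero_of_update_invariant (b : Y → P) {S : Finset C} {l : C} (hl : l ∈ S)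
    {f : CubeFun C P Y M} (hf : ∀ a y w, f (Function.update a l w) y = f a y)
    (a : C → P) (y : C → Y) : cubeDiff b S f a y = 0 := by
  rw [← insert_erase hl, cubeDiff_insert b (notMem_erase l S), sub_eq_zero]
  refine sum_congr rfl fun R hR => ?_
  have hlR : l ∉ R := fun h => notMem_erase l S (mem_powerset.mp hR h)
  rw [bump_update_of_notMem b hlR, hf]

theorem cubeDiff_const (b : Y → P) {S : Finset C} (hS : S.Nonempty) (m : M) (a : C → P)
    (y : C → Y) : cubeDiff b S (fun _ _ => m) a y = 0 :=
  cubeDiff_eq_zero_of_update_invariant b hS.choose_spec (fun _ _ _ => rfl) a y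

theorem dependsOn_cubeDiff_direction (b : Y → P) (S : Finset C) (f : (C → P) → M) (a : C → P) :
    DependsOn (cubeDiff b S (fun a _ => f a) a) S := by
  intro y y' h
  refine sum_congr rfl fun R hR => ?_
  have bump_eq : bump b R a y = bump b R a y' := by
    funext j
    by_cases hj : j ∈ R
    · simp [bump, hj, h j (mem_powerset.mp hR hj)]
    · simp [bump, hj]
  rw [bump_eq]

theorem cubeDiff_update_of_notMem (b : FreeGroupBasis Y P) {S : Finset C} {f : (C → P) → M} {l : C}
    (hl : l ∉ S) (h : ∀ a y, cubeDiff b (insert l S) (fun a _ => f a) a y = 0)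
    (a : C → P) (w : P) (y : C → Y) :
    cubeDiff b S (fun a _ => f a) (Function.update a l w) y =
      cubeDiff b S (fun a _ => f a) a y := by
  have const : ∀ z, cubeDiff b S (fun a _ => f a) (Function.update a l z) y =
      cubeDiff b S (fun a _ => f a) (Function.update a l 1) y := by
    refine eq_apply_one_of_mul_basis_invariant b _ fun z u => ?_
    have direction_irrelevant : ∀ j ∈ (S : Set C), Function.update y l u j = y j := fun j hj =>
      Function.update_of_ne (by rintro rfl; exact hl hj) _ _
    have step := h (Function.update a l z) (Function.update y l u)
    rwa [cubeDiff_insert _ hl, sub_eq_zero, Function.update_self, Function.update_self,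
      Function.update_idem, dependsOn_cubeDiff_direction _ _ _ _ direction_irrelevant,
      dependsOn_cubeDiff_direction _ _ _ _ direction_irrelevant] at step
  rw [const w, ← const (a l), Function.update_eq_self]

theorem dependsOn_of_update_invariant {C P W : Type*} [Finite C] [DecidableEq C]
    {g : (C → P) → W} {S : Set C}
    (h : ∀ l ∉ S, ∀ a w, g (Function.update a l w) = g a) : DependsOn g S := by
  classical
  have := Fintype.ofFinite C
  intro a a' haa'
  have change : ∀ T : Finset C, (∀ l ∈ T, l ∉ S) →
      g (fun j => if j ∈ T then a' j else a j) = g a := by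
    intro T
    induction T using Finset.induction_on with
    | empty => simp
    | insert l T _ ih =>
      intro hT
      rw [← ih fun l hl => hT l (mem_insert_of_mem hl),
        ← h l (hT l (mem_insert_self _ _)) (fun j => if j ∈ T then a' j else a j) (a' l)]
      congr 1
      funext j
      by_cases hj : j = l
      · subst hj
        simp
      · simp [hj]
  rw [← change {j | j ∉ S} (by simp)]
  congr 1
  funext j
  by_cases hj : j ∈ S
  · simp [hj, haa' j hj]
  · simp [hj]

theorem dependsOn_cubeDiff_vertex [Finite C] (b : FreeGroupBasis Y P) {S : Finset C}
    {f : (C → P) → M}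
    (h : ∀ l ∉ S, ∀ a y, cubeDiff b (insert l S) (fun a _ => f a) a y = 0) (y : C → Y) :
    DependsOn (fun a => cubeDiff b S (fun a _ => f a) a y) S :=
  dependsOn_of_update_invariant fun l hl a w => cubeDiff_update_of_notMem b hl (h l hl) a w y

end CubeDiff

section CubeIntegral

open Finset

variable {P C Y M : Type*} [Group P] [CommGroup C] [DecidableEq C] [AddCommGroup M]

/-- The diagonal action of `P` on the vertices of the product of Cayley trees indexed by `C`, where
`P` acts on the `j`-th factor through the automorphism `τ j⁻¹`. -/
def translate (τ : C →* MulAut P) (x : P) (a : C → P) : C → P := fun j => τ j⁻¹ x * a j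

theorem translate_update (τ : C →* MulAut P) (x : P) (a : C → P) (l : C) (z : P) :
    translate τ x (Function.update a l z) = Function.update (translate τ x a) l (τ l⁻¹ x * z) := by
  funext j
  by_cases hj : j = l
  · subst hj
    simp [translate]
  · simp [translate, hj]

/-- Translating the vertex by `x` transforms the values of `f` by `φ`. -/
def IsEquivariantAt (τ : C →* MulAut P) (x : P) (φ : M →+ M) (f : CubeFun C P Y M) : Prop :=
  ∀ a y, f (translate τ x a) y = φ (f a y)

/-- The integral of `f` in the coordinate `l`. The base point of the integration is read off from
the coordinate `ν`, which makes the integral equivariant under `translate`. -/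
noncomputable def coordIntegral (b : FreeGroupBasis Y P) (τ : C →* MulAut P) (l ν : C)
    (f : CubeFun C P Y M) : CubeFun C P Y M := fun a y =>
  edgeIntegral b (fun z u => f (Function.update a l z) (Function.update y l u)) (a l) -
  edgeIntegral b (fun z u => f (Function.update a l z) (Function.update y l u))
    (τ (l⁻¹ * ν) (a ν))

theorem coordIntegral_update_sub (b : FreeGroupBasis Y P) (τ : C →* MulAut P) {l ν : C}
    (h : ν ≠ l) (f : CubeFun C P Y M) (a : C → P) (y : C → Y) :
    coordIntegral b τ l ν f (Function.update a l (a l * b (y l))) y - coordIntegral b τ l ν f a y =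
      f a y := by
  simp only [coordIntegral, Function.update_idem, Function.update_self, Function.update_of_ne h,
    edgeIntegral_mul_basis, Function.update_eq_self]
  abel

theorem IsEquivariantAt.coordIntegral {b : FreeGroupBasis Y P} {τ : C →* MulAut P} {l ν : C}
    {f : CubeFun C P Y M} {x : P} {φ : M →+ M} (h : IsEquivariantAt τ x φ f) :
    IsEquivariantAt τ x φ (coordIntegral b τ l ν f) := by
  intro a y
  have integral_mul := edgeIntegral_mul_left b (φ := φ) (x := τ l⁻¹ x)
    (g := fun z u => f (Function.update a l z) (Function.update y l u))
    (g' := fun z u => f (Function.update (translate τ x a) l z) (Function.update y l u))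
    fun z u => by rw [← translate_update, h]
  have basePoint : τ (l⁻¹ * ν) (translate τ x a ν) = τ l⁻¹ x * τ (l⁻¹ * ν) (a ν) := by
    rw [translate, map_mul, ← MulAut.mul_apply, ← map_mul, mul_inv_cancel_right]
  rw [DicksVentura.coordIntegral, basePoint, translate, integral_mul, integral_mul,
    add_sub_add_left_eq_sub, ← map_sub, DicksVentura.coordIntegral]

theorem dependsOn_coordIntegral_vertex (b : FreeGroupBasis Y P) (τ : C →* MulAut P) {l ν : C}
    {S : Finset C} (hl : l ∈ S) (hν : ν ∈ S) {f : CubeFun C P Y M}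
    (h : ∀ y, DependsOn (fun a => f a y) S) (y : C → Y) :
    DependsOn (fun a => coordIntegral b τ l ν f a y) S := by
  intro a a' ha
  have integrand_eq : (fun z u => f (Function.update a l z) (Function.update y l u)) =
      fun z u => f (Function.update a' l z) (Function.update y l u) := by
    funext z u
    refine h _ fun j hj => ?_
    by_cases hjl : j = l
    · subst hjl
      simp
    · simp [hjl, ha j hj]
  simp only [coordIntegral, integrand_eq, ha l hl, ha ν hν]

theorem dependsOn_coordIntegral_direction (b : FreeGroupBasis Y P) (τ : C →* MulAut P) {l ν : C}
    {U : Finset C} {f : CubeFun C P Y M} (h : ∀ a, DependsOn (f a) U) (a : C → P) :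
    DependsOn (coordIntegral b τ l ν f a) (U.erase l) := by
  intro y y' hy
  have integrand_eq : (fun z u => f (Function.update a l z) (Function.update y l u)) =
      fun z u => f (Function.update a l z) (Function.update y' l u) := by
    funext z u
    refine h _ fun j hj => ?_
    by_cases hjl : j = l
    · subst hjl
      simp
    · simp [hjl, hy j (mem_coe.mpr (mem_erase.mpr ⟨hjl, hj⟩))]
  simp only [coordIntegral, integrand_eq]

theorem exists_equivariant_cubeDiff_eq (b : FreeGroupBasis Y P) (τ : C →* MulAut P)
    {S T : Finset C} {ν : C} (hν : ν ∈ S) (hT : T ⊆ S) (hνT : ν ∉ T) {U : Finset C}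
    {f : CubeFun C P Y M} (hS : ∀ y, DependsOn (fun a => f a y) S) (hU : ∀ a, DependsOn (f a) U) :
    ∃ f' : CubeFun C P Y M, (∀ y, DependsOn (fun a => f' a y) S) ∧
      (∀ a, DependsOn (f' a) (U \ T : Finset C)) ∧ cubeDiff b T f' = f ∧
      ∀ x φ, IsEquivariantAt τ x φ f → IsEquivariantAt τ x φ f' := by
  induction T using Finset.induction_on generalizing U f with
  | empty => exact ⟨f, hS, by simpa using hU, cubeDiff_empty b f, fun _ _ h => h⟩
  | insert l T hl ih =>
    have hνl : ν ≠ l := fun h => hνT (h ▸ mem_insert_self _ _)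
    obtain ⟨f', vertex, direction, diff, equivariant⟩ :=
      ih (fun j hj => hT (mem_insert_of_mem hj)) (fun h => hνT (mem_insert_of_mem h))
        (dependsOn_coordIntegral_vertex b τ (hT (mem_insert_self _ _)) hν hS)
        (dependsOn_coordIntegral_direction b τ (ν := ν) hU)
    refine ⟨f', vertex, ?_, ?_, fun x φ h => equivariant x φ h.coordIntegral⟩
    · rwa [sdiff_insert, ← erase_sdiff_comm]
    · funext a y
      rw [cubeDiff_insert _ hl, diff, coordIntegral_update_sub b τ hνl]

theorem exists_equivariant_vertex_cubeDiff_eq [Nonempty Y] (b : FreeGroupBasis Y P)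
    (τ : C →* MulAut P) {S : Finset C} (hS : 1 < #S) {f : CubeFun C P Y M}
    (hvertex : ∀ y, DependsOn (fun a => f a y) S) (hdirection : ∀ a, DependsOn (f a) S) :
    ∃ f' : (C → P) → M, DependsOn f' S ∧ cubeDiff b S (fun a _ => f' a) = f ∧
      ∀ x φ, IsEquivariantAt τ x φ f → ∀ a, f' (translate τ x a) = φ (f' a) := by
  obtain ⟨ν, hν, ν', hν', hne⟩ := Finset.one_lt_card.mp hS
  obtain ⟨f', vertex, direction, diff, equivariant⟩ :=
    exists_equivariant_cubeDiff_eq b τ hν (erase_subset ν S) (by simp)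
      (dependsOn_coordIntegral_vertex b τ hν hν' hvertex)
      (dependsOn_coordIntegral_direction b τ (ν := ν') hdirection)
  have direction_irrelevant : ∀ a y y', f' a y = f' a y' := fun a y y' =>
    direction a (by simp)
  let y₀ : C → Y := fun _ => Classical.arbitrary Y
  refine ⟨fun a => f' a y₀, vertex y₀, ?_, fun x φ h a => equivariant x φ h.coordIntegral a y₀⟩
  have f'_eq : (fun a _ => f' a y₀) = f' := by
    funext a y
    exact direction_irrelevant a y₀ y
  funext a y
  rw [f'_eq, ← insert_erase hν, cubeDiff_insert _ (notMem_erase ν S), diff,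
    coordIntegral_update_sub b τ hne.symm]

end CubeIntegral

section Selection

variable {G X Z : Type*} [Group G]

theorem exists_equivariant_selection (α : G →* Function.End X) (β : G →* Function.End Z)
    (R : X → Z → Prop) (hR : ∀ γ x z, R x z → R (α γ x) (β γ z))
    (h : ∀ x, ∃ z, R x z ∧ ∀ γ, α γ x = x → β γ z = z) :
    ∃ f : X → Z, (∀ x, R x (f x)) ∧ ∀ γ x, f (α γ x) = β γ (f x) := by
  let _ : MulAction G X := MulAction.ofEndHom α
  let _ : MulAction G Z := MulAction.ofEndHom β
  choose z z_rel z_fixed using h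
  let rep : X → X := fun x => Quotient.out (Quotient.mk (MulAction.orbitRel G X) x)
  have exists_smul_rep : ∀ x, ∃ γ : G, γ • rep x = x := fun x =>
    (MulAction.orbitRel G X).symm (Quotient.exact (Quotient.out_eq _))
  have rep_smul : ∀ (γ : G) x, rep (γ • x) = rep x := fun γ x =>
    congrArg Quotient.out (Quotient.sound (MulAction.mem_orbit x γ))
  choose c smul_rep using exists_smul_rep
  refine ⟨fun x => c x • z (rep x), fun x => ?_, fun γ x => ?_⟩
  · have := hR (c x) _ _ (z_rel (rep x))
    rwa [show α (c x) (rep x) = x from smul_rep x] at this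
  · have rep_fixed : ((c x)⁻¹ * (γ⁻¹ * c (γ • x))) • rep x = rep x := by
      have := smul_rep (γ • x)
      rw [rep_smul] at this
      rw [mul_smul, mul_smul, this, inv_smul_smul, inv_smul_eq_iff, smul_rep]
    have fixed := z_fixed (rep x) _ rep_fixed
    change ((c x)⁻¹ * (γ⁻¹ * c (γ • x))) • z (rep x) = z (rep x) at fixed
    rw [mul_smul, inv_smul_eq_iff, mul_smul, inv_smul_eq_iff] at fixed
    change c (γ • x) • z (rep (γ • x)) = γ • c x • z (rep x)
    rw [rep_smul, fixed]

end Selection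

section Splitting

open SemidirectProduct

variable {P C : Type*} [Group P] [CommGroup C]

/-- A splitting of the projection `P ⋊[τ] C →* C`. -/
@[ext]
structure Splitting (τ : C →* MulAut P) where
  /-- The underlying homomorphism. -/
  toHom : C →* P ⋊[τ] C
  right_toHom : ∀ j, (toHom j).right = j

variable {τ : C →* MulAut P}

instance : FunLike (Splitting τ) C (P ⋊[τ] C) where
  coe t := t.toHom
  coe_injective _ _ h := Splitting.ext (DFunLike.coe_injective h)

instance : MonoidHomClass (Splitting τ) C (P ⋊[τ] C) where
  map_mul t := t.toHom.map_mul
  map_one t := t.toHom.map_one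

@[simp]
theorem Splitting.right_apply (t : Splitting τ) (j : C) : (t j).right = j := t.right_toHom j

theorem inr_mul_inl_apply_inv (j : C) (x : P) :
    (inr j : P ⋊[τ] C) * inl (τ j⁻¹ x) = inl x * inr j := by
  ext <;> simp

theorem eq_bot_or_eq_range_splitting [Finite C] (hp : (Nat.card C).Prime)
    (H : Subgroup (P ⋊[τ] C)) (h : ∀ x : P, inl x ∈ H → x = 1) :
    H = ⊥ ∨ ∃ t : Splitting τ, H = t.toHom.range := by
  have : Fact (Nat.card C).Prime := ⟨hp⟩
  let π : H →* C := rightHom.comp H.subtype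
  have π_injective : Function.Injective π := by
    rw [injective_iff_map_eq_one]
    intro γ hγ
    have eq_inl : (γ : P ⋊[τ] C) = inl γ.1.left := SemidirectProduct.ext rfl hγ
    have left_eq_one : γ.1.left = 1 := h _ (by rw [← eq_inl]; exact γ.2)
    exact Subtype.ext (by rw [eq_inl, left_eq_one, map_one, Subgroup.coe_one])
  rcases Subgroup.eq_bot_or_eq_top_of_prime_card π.range with range_bot | range_top
  · left
    rw [Subgroup.eq_bot_iff_forall]
    intro γ hγ
    have π_trivial : π ⟨γ, hγ⟩ ∈ π.range := ⟨_, rfl⟩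
    rw [range_bot, Subgroup.mem_bot] at π_trivial
    exact congrArg Subtype.val (π_injective (π_trivial.trans (map_one π).symm))
  · right
    let e : H ≃* C := MulEquiv.ofBijective π ⟨π_injective, MonoidHom.range_eq_top.mp range_top⟩
    refine ⟨⟨H.subtype.comp e.symm.toMonoidHom, e.apply_symm_apply⟩, ?_⟩
    rw [MonoidHom.range_comp, MonoidHom.range_eq_top.mpr e.symm.surjective,
      ← MonoidHom.range_eq_map, Subgroup.range_subtype]

theorem exists_stabilized_of_splitting [Finite C] (hp : (Nat.card C).Prime) {X Z : Type*}
    (α : P ⋊[τ] C →* Function.End X) (β : P ⋊[τ] C →* Function.End Z) {x : X}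
    (free : ∀ u : P, α (inl u) x = x → u = 1) {R : Z → Prop} {z₀ : Z} (hz₀ : R z₀)
    (h : ∀ t : Splitting τ, (∀ j, α (t j) x = x) → ∃ z, R z ∧ ∀ j, β (t j) z = z) :
    ∃ z, R z ∧ ∀ γ, α γ x = x → β γ z = z := by
  let _ : MulAction (P ⋊[τ] C) X := MulAction.ofEndHom α
  have mem_stabilizer : ∀ γ, γ ∈ MulAction.stabilizer (P ⋊[τ] C) x ↔ α γ x = x := fun _ => Iff.rfl
  rcases eq_bot_or_eq_range_splitting hp (MulAction.stabilizer (P ⋊[τ] C) x) free with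
    stab_bot | ⟨t, stab_range⟩
  · refine ⟨z₀, hz₀, fun γ hγ => ?_⟩
    rw [← mem_stabilizer, stab_bot, Subgroup.mem_bot] at hγ
    rw [hγ, map_one]
    rfl
  · obtain ⟨z, hz, fixed⟩ := h t fun j => by
      rw [← mem_stabilizer, stab_range]
      exact ⟨j, rfl⟩
    refine ⟨z, hz, fun γ hγ => ?_⟩
    rw [← mem_stabilizer, stab_range] at hγ
    obtain ⟨j, rfl⟩ := hγ
    exact fixed j

end Splitting

section Cell

variable {P C Y : Type*} [DecidableEq C]

/-- The cell spanned by the edges at `a` in directions `y` in the coordinates of `S`. -/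
def cellMk (S : Finset C) (a : C → P) (y : C → Y) : C → Option (P × Y) :=
  fun j => if j ∈ S then some (a j, y j) else none

theorem cellMk_congr {S : Finset C} {a a' : C → P} {y y' : C → Y} (ha : ∀ j ∈ S, a j = a' j)
    (hy : ∀ j ∈ S, y j = y' j) : cellMk S a y = cellMk S a' y' := by
  funext j
  by_cases hj : j ∈ S
  · simp [cellMk, hj, ha j hj, hy j hj]
  · simp [cellMk, hj]

theorem cellMk_eq_iff {S S' : Finset C} {a a' : C → P} {y y' : C → Y} :
    cellMk S a y = cellMk S' a' y' ↔
      S = S' ∧ (∀ j ∈ S, a j = a' j) ∧ ∀ j ∈ S, y j = y' j := by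
  refine ⟨fun h => ?_, fun ⟨hS, ha, hy⟩ => hS ▸ cellMk_congr ha hy⟩
  have support_eq : S = S' := by
    ext j
    have := congrFun h j
    by_cases hj : j ∈ S <;> by_cases hj' : j ∈ S' <;> simp_all [cellMk]
  subst support_eq
  have entries : ∀ j ∈ S, a j = a' j ∧ y j = y' j := fun j hj => by
    simpa [cellMk, hj] using congrFun h j
  exact ⟨rfl, fun j hj => (entries j hj).1, fun j hj => (entries j hj).2⟩

end Cell

section Actions

open Finset SemidirectProduct

variable {P C Y M : Type*} [Group P] [CommGroup C] [AddCommGroup M]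
  {τ : C →* MulAut P}

/-- The action of `P ⋊[τ] C` on the vertices of the product of Cayley trees indexed by `C`: `P`
acts by `translate τ` and `C` permutes the factors. -/
def vertexAct : P ⋊[τ] C →* Function.End (C → P) where
  toFun γ a := fun j => τ j⁻¹ γ.left * a (γ.right⁻¹ * j)
  map_one' := by
    funext a j
    change τ j⁻¹ 1 * a (1⁻¹ * j) = a j
    simp
  map_mul' γ δ := by
    funext a j
    change τ j⁻¹ (γ * δ).left * a ((γ * δ).right⁻¹ * j) =
      τ j⁻¹ γ.left * (τ (γ.right⁻¹ * j)⁻¹ δ.left * a (δ.right⁻¹ * (γ.right⁻¹ * j)))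
    simp [mul_assoc]

/-- The action of `P ⋊[τ] C` on the directions of edges, compatible with `vertexAct`. -/
def directionAct (γ : P ⋊[τ] C) (y : C → Y) : C → Y := fun j => y (γ.right⁻¹ * j)

/-- The action of `P ⋊[τ] C` on cells. A cell is a product of vertices and edges of the Cayley
trees; only its edges are recorded, by their starting points and directions. -/
def cellAct : P ⋊[τ] C →* Function.End (C → Option (P × Y)) where
  toFun γ c := fun j => (c (γ.right⁻¹ * j)).map fun q => (τ j⁻¹ γ.left * q.1, q.2)
  map_one' := by
    funext c j
    change (c (1⁻¹ * j)).map (fun q => (τ j⁻¹ 1 * q.1, q.2)) = c j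
    simp
  map_mul' γ δ := by
    funext c j
    change (c ((γ * δ).right⁻¹ * j)).map (fun q => (τ j⁻¹ (γ * δ).left * q.1, q.2)) =
      ((c (δ.right⁻¹ * (γ.right⁻¹ * j))).map fun q =>
        (τ (γ.right⁻¹ * j)⁻¹ δ.left * q.1, q.2)).map fun q => (τ j⁻¹ γ.left * q.1, q.2)
    simp [mul_assoc, Function.comp_def]

theorem vertexAct_apply (γ : P ⋊[τ] C) (a : C → P) (j : C) :
    vertexAct γ a j = τ j⁻¹ γ.left * a (γ.right⁻¹ * j) := rfl

theorem cellAct_apply (γ : P ⋊[τ] C) (c : C → Option (P × Y)) (j : C) :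
    cellAct γ c j = (c (γ.right⁻¹ * j)).map fun q => (τ j⁻¹ γ.left * q.1, q.2) := rfl

theorem vertexAct_mul (γ δ : P ⋊[τ] C) (a : C → P) :
    vertexAct (γ * δ) a = vertexAct γ (vertexAct δ a) :=
  congrFun (map_mul vertexAct γ δ) a

theorem cellAct_mul (γ δ : P ⋊[τ] C) (c : C → Option (P × Y)) :
    cellAct (γ * δ) c = cellAct γ (cellAct δ c) :=
  congrFun (map_mul cellAct γ δ) c

theorem vertexAct_inl (x : P) (a : C → P) : vertexAct (inl x : P ⋊[τ] C) a = translate τ x a := by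
  funext j
  simp [vertexAct_apply, translate]

theorem directionAct_inl (x : P) (y : C → Y) : directionAct (inl x : P ⋊[τ] C) y = y := by
  funext j
  simp [directionAct]

section AffineEquivariant

variable [DistribMulAction (P ⋊[τ] C) M]

/-- Equivariance with respect to the affine action of `P ⋊[τ] C` on `M` with linear part the given
action and translation part `D`. -/
def IsAffineEquivariant (D : P ⋊[τ] C → M) (f : (C → P) → M) : Prop :=
  ∀ γ a, f (vertexAct γ a) = D γ + γ • f a

open groupCohomology in
theorem exists_isAffineEquivariant [Finite C] (hp : (Nat.card C).Prime) {D : P ⋊[τ] C → M}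
    (hD : IsCocycle₁ D) (principal : ∀ t : Splitting τ, ∃ m, ∀ j, D (t j) + t j • m = m) :
    ∃ f : (C → P) → M, IsAffineEquivariant D f := by
  let affineAct : P ⋊[τ] C →* Function.End M :=
    { toFun γ m := D γ + γ • m
      map_one' := by
        funext m
        change D 1 + (1 : P ⋊[τ] C) • m = m
        rw [map_one_of_isCocycle₁ hD, zero_add, one_smul]
      map_mul' γ δ := by
        funext m
        change D (γ * δ) + (γ * δ) • m = D γ + γ • (D δ + δ • m)
        rw [hD, mul_smul, smul_add, add_left_comm, add_assoc] }
  have vertexAct_free : ∀ (a : C → P) (u : P), vertexAct (inl u : P ⋊[τ] C) a = a → u = 1 := by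
    intro a u h
    simpa [vertexAct_apply] using congrFun h 1
  obtain ⟨f, -, hf⟩ := exists_equivariant_selection vertexAct affineAct (fun _ _ => True)
    (fun _ _ _ _ => trivial) fun a =>
      exists_stabilized_of_splitting hp vertexAct affineAct (vertexAct_free a) (z₀ := 0) trivial
        fun t _ => (principal t).imp fun m hm => ⟨trivial, hm⟩
  exact ⟨f, hf⟩

end AffineEquivariant

variable [DecidableEq C]

theorem cellAct_cellMk (γ : P ⋊[τ] C) (S : Finset C) (a : C → P) (y : C → Y) :
    cellAct γ (cellMk S a y) =
      cellMk (S.image (γ.right * ·)) (vertexAct γ a) (directionAct γ y) := by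
  funext j
  by_cases hj : γ.right⁻¹ * j ∈ S <;>
    simp [cellAct_apply, cellMk, vertexAct_apply, directionAct, hj]

theorem cellMk_translate (S : Finset C) (x : P) (a : C → P) (y : C → Y) :
    cellMk S (translate τ x a) y = cellAct (inl x : P ⋊[τ] C) (cellMk S a y) := by
  rw [cellAct_cellMk, vertexAct_inl]
  simp [directionAct_inl]

theorem inl_eq_one_of_cellAct_cellMk {S : Finset C} (hS : S.Nonempty) {a : C → P} {y : C → Y}
    {x : P} (h : cellAct (inl x : P ⋊[τ] C) (cellMk S a y) = cellMk S a y) : x = 1 := by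
  obtain ⟨i, hi⟩ := hS
  simpa [cellAct_apply, cellMk, hi] using congrFun h i

theorem card_image_mul_left (i : C) (S : Finset C) : #(S.image (i * ·)) = #S :=
  card_image_of_injective _ (mul_right_injective i)

theorem cubeDiff_vertexAct (b : Y → P) (S : Finset C) (f : CubeFun C P Y M) (γ : P ⋊[τ] C)
    (a : C → P) (y : C → Y) :
    cubeDiff b (S.image (γ.right * ·)) f (vertexAct γ a) (directionAct γ y) =
      cubeDiff b S (fun a y => f (vertexAct γ a) (directionAct γ y)) a y := by
  induction S using Finset.induction_on generalizing a with
  | empty => simp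
  | insert l S hl ih =>
    have vertexAct_update : Function.update (vertexAct γ a) (γ.right * l)
        (vertexAct γ a (γ.right * l) * b (directionAct γ y (γ.right * l))) =
        vertexAct γ (Function.update a l (a l * b (y l))) := by
      funext j
      by_cases hj : j = γ.right * l
      · subst hj
        simp [vertexAct_apply, directionAct, mul_assoc]
      · have : γ.right⁻¹ * j ≠ l := by
          rintro rfl
          simp at hj
        simp [vertexAct_apply, hj, this]
    rw [image_insert, cubeDiff_insert _ (by simpa using hl), cubeDiff_insert _ hl, ← ih, ← ih,
      vertexAct_update]

variable [DistribMulAction (P ⋊[τ] C) M]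

theorem cubeDiff_smul (b : Y → P) (S : Finset C) (γ : P ⋊[τ] C) (f : CubeFun C P Y M)
    (a : C → P) (y : C → Y) :
    cubeDiff b S (fun a y => γ • f a y) a y = γ • cubeDiff b S f a y :=
  cubeDiff_addMonoidHom b S (DistribSMul.toAddMonoidHom M γ) f a y

theorem IsAffineEquivariant.cubeDiff_vertexAct {D : P ⋊[τ] C → M} {f : (C → P) → M}
    (hf : IsAffineEquivariant D f) (b : Y → P) {S : Finset C} (hS : S.Nonempty) (γ : P ⋊[τ] C)
    (a : C → P) (y : C → Y) :
    cubeDiff b (S.image (γ.right * ·)) (fun a _ => f a) (vertexAct γ a) (directionAct γ y) =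
      γ • cubeDiff b S (fun a _ => f a) a y := by
  have smul_eq : (fun a _ => γ • f a : CubeFun C P Y M) = fun a _ => f (vertexAct γ a) - D γ := by
    funext a _
    rw [hf, add_sub_cancel_left]
  rw [DicksVentura.cubeDiff_vertexAct, ← cubeDiff_smul, smul_eq, cubeDiff_sub b S _ fun _ _ => D γ,
    cubeDiff_const _ hS, sub_zero]

end Actions

section Degree

open Finset SemidirectProduct

variable {P C Y M : Type*} [Group P] [DecidableEq C] [AddCommGroup M]

/-- `f` has polynomial degree less than `r` on the product of Cayley trees: its differences over
all cubes of dimension at least `r` vanish. -/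
def HasDegreeLT (b : Y → P) (r : ℕ) (f : (C → P) → M) : Prop :=
  ∀ S : Finset C, r ≤ #S → ∀ a y, cubeDiff b S (fun a _ => f a) a y = 0

theorem HasDegreeLT.cubeDiff_congr [Finite C] {b : FreeGroupBasis Y P} {r : ℕ} {f : (C → P) → M}
    (hf : HasDegreeLT b (r + 1) f) {S : Finset C} (hS : #S = r) {a a' : C → P} {y y' : C → Y}
    (ha : ∀ j ∈ S, a j = a' j) (hy : ∀ j ∈ S, y j = y' j) :
    cubeDiff b S (fun a _ => f a) a y = cubeDiff b S (fun a _ => f a) a' y' := by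
  rw [dependsOn_cubeDiff_direction b S f a hy]
  refine dependsOn_cubeDiff_vertex b (fun l hl => hf _ ?_) y' ha
  rw [card_insert_of_notMem hl, hS]

theorem HasDegreeLT.apply_eq [Finite C] {b : FreeGroupBasis Y P} {f : (C → P) → M}
    (hf : HasDegreeLT b 1 f) [Nonempty Y] (a a' : C → P) : f a = f a' := by
  simpa using hf.cubeDiff_congr (S := ∅) (a := a) (a' := a')
    (y := fun _ => Classical.arbitrary Y) (y' := fun _ => Classical.arbitrary Y) rfl
    (by simp) (by simp)

/-- `F` integrates the function `g` on `r`-dimensional cells, up to functions of degree less than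
`r`. -/
def IsCellPrimitive (b : Y → P) (r : ℕ) (g : (C → Option (P × Y)) → M) (F : (C → P) → M) : Prop :=
  ∀ S : Finset C, r ≤ #S → ∀ a y,
    cubeDiff b S (fun a _ => F a) a y = if #S = r then g (cellMk S a y) else 0

theorem isCellPrimitive_sum [Fintype C] (b : Y → P) {r : ℕ} {g : (C → Option (P × Y)) → M}
    {f : Finset C → (C → P) → M} (depends : ∀ S, #S = r → DependsOn (f S) S)
    (diff : ∀ S, #S = r → ∀ a y, cubeDiff b S (fun a _ => f S a) a y = g (cellMk S a y)) :
    IsCellPrimitive b r g fun a => ∑ S ∈ univ.powersetCard r, f S a := by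
  intro S hS a y
  rw [cubeDiff_sum b S (univ.powersetCard r) fun S' a _ => f S' a]
  have other_zero : ∀ S' ∈ univ.powersetCard r, S' ≠ S →
      cubeDiff b S (fun a _ => f S' a) a y = 0 := by
    intro S' hS' hne
    have card_S' := (mem_powersetCard.mp hS').2
    obtain ⟨l, hl, hlS'⟩ : ∃ l ∈ S, l ∉ S' :=
      not_subset.mp fun h => hne (eq_of_subset_of_card_le h (card_S'.trans_le hS)).symm
    refine cubeDiff_eq_zero_of_update_invariant b hl (fun a _ w => ?_) a y
    refine depends S' card_S' fun j hj => Function.update_of_ne ?_ _ _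
    rintro rfl
    exact hlS' hj
  split_ifs with h
  · rw [sum_eq_single_of_mem S (mem_powersetCard.mpr ⟨subset_univ _, h⟩) other_zero, diff S h]
  · refine sum_eq_zero fun S' hS' => other_zero S' hS' ?_
    rintro rfl
    exact h (mem_powersetCard.mp hS').2

/-- The entries of the tuple `μ` add up to the difference of `f` over the cell `c`, provided that
this cell has dimension `r`. -/
def SumsToDiff [Fintype C] (b : Y → P) (r : ℕ) (f : (C → P) → M) (c : C → Option (P × Y))
    (μ : C → M) : Prop :=
  ∀ S a y, #S = r → c = cellMk S a y → ∑ j, μ j = cubeDiff b S (fun a _ => f a) a y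

theorem sumsToDiff_cellMk [Fintype C] {b : FreeGroupBasis Y P} {r : ℕ} {f : (C → P) → M}
    (hdeg : HasDegreeLT b (r + 1) f) {S : Finset C} (hS : #S = r) {a : C → P} {y : C → Y}
    {μ : C → M} (hμ : ∑ j, μ j = cubeDiff b S (fun a _ => f a) a y) :
    SumsToDiff b r f (cellMk S a y) μ := by
  intro S' a' y' _ hc
  obtain ⟨rfl, ha, hy⟩ := cellMk_eq_iff.mp hc
  rw [hμ, hdeg.cubeDiff_congr hS ha hy]

end Degree

section CellPrimitive

open Finset SemidirectProduct

variable {P C Y M : Type*} [Group P] [CommGroup C] [Finite C] [DecidableEq C] [AddCommGroup M]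
  {τ : C →* MulAut P} [DistribMulAction (P ⋊[τ] C) M]

theorem exists_equivariant_isCellPrimitive [Nonempty Y] (b : FreeGroupBasis Y P) {r : ℕ}
    (hr : 1 < r) {g : (C → Option (P × Y)) → M}
    (hg : ∀ x c, g (cellAct (inl x : P ⋊[τ] C) c) = (inl x : P ⋊[τ] C) • g c) :
    ∃ F : (C → P) → M, IsCellPrimitive b r g F ∧
      ∀ x a, F (translate τ x a) = (inl x : P ⋊[τ] C) • F a := by
  cases nonempty_fintype C
  have exists_integral : ∀ S : Finset C, ∃ f : (C → P) → M, #S = r → DependsOn f S ∧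
      (cubeDiff b S (fun a _ => f a) = fun a y => g (cellMk S a y)) ∧
      ∀ x a, f (translate τ x a) = (inl x : P ⋊[τ] C) • f a := by
    intro S
    by_cases hS : #S = r
    · obtain ⟨f, depends, diff, equivariant⟩ := exists_equivariant_vertex_cubeDiff_eq b τ
        (hr.trans_eq hS.symm) (f := fun a y => g (cellMk S a y))
        (fun y a a' h => congrArg g (cellMk_congr h fun _ _ => rfl))
        (fun a y y' h => congrArg g (cellMk_congr (fun _ _ => rfl) h))
      refine ⟨f, fun _ => ⟨depends, diff, fun x a => ?_⟩⟩
      exact equivariant x (DistribSMul.toAddMonoidHom M (inl x : P ⋊[τ] C))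
        (fun a y => (congrArg g (cellMk_translate S x a y)).trans (hg x _)) a
    · exact ⟨0, fun h => absurd h hS⟩
  choose f hf using exists_integral
  refine ⟨_, isCellPrimitive_sum b (fun S hS => (hf S hS).1)
    fun S hS a y => congrFun₂ (hf S hS).2.1 a y, fun x a => ?_⟩
  rw [smul_sum]
  exact sum_congr rfl fun S hS => (hf S (mem_powersetCard.mp hS).2).2.2 x a

theorem exists_affine_isCellPrimitive_one (b : FreeGroupBasis Y P)
    {g : (C → Option (P × Y)) → M}
    (hg : ∀ x c, g (cellAct (inl x : P ⋊[τ] C) c) = (inl x : P ⋊[τ] C) • g c) :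
    ∃ (F : (C → P) → M) (E : P → M), IsCellPrimitive b 1 g F ∧
      ∀ x a, F (translate τ x a) = E x + (inl x : P ⋊[τ] C) • F a := by
  cases nonempty_fintype C
  let edgeWeight : C → P → Y → M := fun i z u => g (cellMk {i} (fun _ => z) fun _ => u)
  have edgeWeight_mul : ∀ i x z u,
      edgeWeight i (τ i⁻¹ x * z) u = (inl x : P ⋊[τ] C) • edgeWeight i z u := by
    intro i x z u
    rw [← hg, ← cellMk_translate]
    exact congrArg g (cellMk_congr (by simp [translate]) fun _ _ => rfl)
  refine ⟨fun a => ∑ S ∈ univ.powersetCard 1, ∑ i ∈ S, edgeIntegral b (edgeWeight i) (a i),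
    fun x => ∑ S ∈ univ.powersetCard 1, ∑ i ∈ S, edgeIntegral b (edgeWeight i) (τ i⁻¹ x),
    isCellPrimitive_sum b (fun S _ a a' h => sum_congr rfl fun i hi => by rw [h i hi]) ?_, ?_⟩
  · intro S hS a y
    obtain ⟨i, rfl⟩ := card_eq_one.mp hS
    rw [← insert_empty, cubeDiff_insert _ (notMem_empty i)]
    simp only [cubeDiff_empty, insert_empty, sum_singleton, Function.update_self,
      edgeIntegral_mul_basis, add_sub_cancel_left]
    exact congrArg g (cellMk_congr (by simp) (by simp))
  · intro x a
    simp only [smul_sum, ← sum_add_distrib]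
    exact sum_congr rfl fun S _ => sum_congr rfl fun i _ => edgeIntegral_mul_left b
      (φ := DistribSMul.toAddMonoidHom M (inl x : P ⋊[τ] C)) (edgeWeight_mul i x) (a i)

end CellPrimitive

section NormSum

open Finset SemidirectProduct

variable {P C Y M : Type*} [Group P] [CommGroup C] [AddCommGroup M]
  {τ : C →* MulAut P} [Fintype C] [DistribMulAction (P ⋊[τ] C) M]

variable (τ) in
/-- The norm of `F` with respect to the action of `C`. -/
def normSum (F : (C → P) → M) (a : C → P) : M :=
  ∑ j, (inr j : P ⋊[τ] C) • F (vertexAct (inr j : P ⋊[τ] C)⁻¹ a)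

theorem normSum_inr (F : (C → P) → M) (d : C) (a : C → P) :
    normSum τ F (vertexAct (inr d : P ⋊[τ] C) a) = (inr d : P ⋊[τ] C) • normSum τ F a := by
  unfold normSum
  rw [smul_sum]
  refine Fintype.sum_equiv (Equiv.mulLeft d⁻¹) _ _ fun j => ?_
  rw [← vertexAct_mul, ← mul_smul]
  simp only [Equiv.coe_mulLeft, ← map_mul, ← map_inv, mul_inv_cancel_left, mul_inv_rev, inv_inv]

theorem normSum_inl {F : (C → P) → M} {E : P → M}
    (hF : ∀ x a, F (translate τ x a) = E x + (inl x : P ⋊[τ] C) • F a) (x : P) (a : C → P) :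
    normSum τ F (vertexAct (inl x : P ⋊[τ] C) a) =
      ∑ j, (inr j : P ⋊[τ] C) • E (τ j⁻¹ x) + (inl x : P ⋊[τ] C) • normSum τ F a := by
  unfold normSum
  rw [smul_sum, ← sum_add_distrib]
  refine sum_congr rfl fun j _ => ?_
  have inv_inr_mul_inl : (inr j : P ⋊[τ] C)⁻¹ * inl x = inl (τ j⁻¹ x) * (inr j)⁻¹ := by
    ext <;> simp
  rw [← vertexAct_mul, inv_inr_mul_inl, vertexAct_mul, vertexAct_inl, hF, smul_add, ← mul_smul,
    inr_mul_inl_apply_inv, mul_smul]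

theorem normSum_vertexAct {F : (C → P) → M}
    (hF : ∀ x a, F (translate τ x a) = (inl x : P ⋊[τ] C) • F a) (γ : P ⋊[τ] C) (a : C → P) :
    normSum τ F (vertexAct γ a) = γ • normSum τ F a := by
  have inl_part := normSum_inl (E := (0 : P → M)) (by simpa using hF) γ.left
    (vertexAct (inr γ.right : P ⋊[τ] C) a)
  rw [← vertexAct_mul, normSum_inr, ← mul_smul] at inl_part
  simpa [inl_left_mul_inr_right] using inl_part

variable [DecidableEq C]

theorem cubeDiff_normSum (b : Y → P) (S : Finset C) (F : (C → P) → M) (a : C → P) (y : C → Y) :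
    cubeDiff b S (fun a _ => normSum τ F a) a y = ∑ j, (inr j : P ⋊[τ] C) •
      cubeDiff b (S.image (j⁻¹ * ·)) (fun a _ => F a) (vertexAct (inr j : P ⋊[τ] C)⁻¹ a)
        (directionAct (inr j : P ⋊[τ] C)⁻¹ y) := by
  unfold normSum
  rw [cubeDiff_sum b S univ fun j a _ => (inr j : P ⋊[τ] C) • F (vertexAct (inr j)⁻¹ a)]
  refine sum_congr rfl fun j _ => ?_
  have act := cubeDiff_vertexAct b S (fun a _ => F a) (inr j : P ⋊[τ] C)⁻¹ a y
  rw [inv_right, right_inr] at act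
  rw [act, ← cubeDiff_smul]

/-- The top differences of `f` are norms of the function `g` on `r`-dimensional cells. -/
def HasNormDiff (τ : C →* MulAut P) [DistribMulAction (P ⋊[τ] C) M] (b : Y → P) (r : ℕ)
    (g : (C → Option (P × Y)) → M) (f : (C → P) → M) : Prop :=
  ∀ S : Finset C, #S = r → ∀ a y, cubeDiff b S (fun a _ => f a) a y =
    ∑ j, (inr j : P ⋊[τ] C) • g (cellAct (inr j : P ⋊[τ] C)⁻¹ (cellMk S a y))

theorem HasDegreeLT.sub_normSum {b : Y → P} {r : ℕ} {f F : (C → P) → M}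
    {g : (C → Option (P × Y)) → M} (hf : HasDegreeLT b (r + 1) f) (hg : HasNormDiff τ b r g f)
    (hF : IsCellPrimitive b r g F) : HasDegreeLT b r fun a => f a - normSum τ F a := by
  intro S hS a y
  rw [cubeDiff_sub b S (fun a _ => f a) fun a _ => normSum τ F a, cubeDiff_normSum]
  simp only [hF _ (hS.trans_eq (card_image_mul_left _ S).symm), card_image_mul_left]
  by_cases h : #S = r
  · simp only [hg S h, cellAct_cellMk, h, if_true, inv_right, right_inr, sub_self]
  · simp [hf S (lt_of_le_of_ne hS (Ne.symm h)), h]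

end NormSum

section Descent

open Finset SemidirectProduct

variable {P C Y M : Type*} [Group P] [CommGroup C] [AddCommGroup M]
  {τ : C →* MulAut P} [DistribMulAction (P ⋊[τ] C) M]

/-- The action of `P ⋊[τ] C` on `C → M` as the module induced from the restriction of `M` to
`P`. -/
def tupleAct : P ⋊[τ] C →* Function.End (C → M) where
  toFun γ μ := fun j => γ • μ (γ.right⁻¹ * j)
  map_one' := by
    funext μ j
    change (1 : P ⋊[τ] C) • μ (1⁻¹ * j) = μ j
    simp
  map_mul' γ δ := by
    funext μ j
    change (γ * δ) • μ ((γ * δ).right⁻¹ * j) = γ • δ • μ (δ.right⁻¹ * (γ.right⁻¹ * j))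
    simp [mul_smul, mul_assoc]

theorem tupleAct_apply (γ : P ⋊[τ] C) (μ : C → M) (j : C) :
    tupleAct γ μ j = γ • μ (γ.right⁻¹ * j) := rfl

variable [Fintype C]

theorem sum_tupleAct (γ : P ⋊[τ] C) (μ : C → M) : ∑ j, tupleAct γ μ j = γ • ∑ j, μ j := by
  rw [smul_sum]
  exact Fintype.sum_equiv (Equiv.mulLeft γ.right⁻¹) _ _ fun j => rfl

/-- Every element of `M` fixed by a splitting of `P ⋊[τ] C` is a norm for this splitting. -/
def FixedIsNorm (τ : C →* MulAut P) (M : Type*) [AddCommGroup M]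
    [DistribMulAction (P ⋊[τ] C) M] : Prop :=
  ∀ (t : Splitting τ) (m : M), (∀ j, t j • m = m) → ∃ m', m = ∑ j, t j • m'

variable [DecidableEq C]

theorem SumsToDiff.tupleAct {b : Y → P} {D : P ⋊[τ] C → M} {f : (C → P) → M}
    (hf : IsAffineEquivariant D f) {r : ℕ} (hr : 0 < r) {c : C → Option (P × Y)} {μ : C → M}
    (h : SumsToDiff b r f c μ) (γ : P ⋊[τ] C) :
    SumsToDiff b r f (cellAct γ c) (tupleAct γ μ) := by
  intro S a y hS hc
  have c_eq : c = cellAct γ⁻¹ (cellMk S a y) := by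
    rw [← hc, ← cellAct_mul, inv_mul_cancel, map_one]
    rfl
  have diff_eq := hf.cubeDiff_vertexAct b (card_pos.mp (hS ▸ hr)) γ⁻¹ a y
  rw [cellAct_cellMk] at c_eq
  rw [sum_tupleAct, h _ _ _ (by rw [card_image_mul_left, hS]) c_eq, diff_eq, smul_inv_smul]

theorem exists_sumsToDiff (hp : (Nat.card C).Prime) (hM : FixedIsNorm τ M)
    (b : FreeGroupBasis Y P) {D : P ⋊[τ] C → M} {f : (C → P) → M} (hf : IsAffineEquivariant D f)
    {r : ℕ} (hr : 0 < r) (hdeg : HasDegreeLT b (r + 1) f) (c : C → Option (P × Y)) :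
    ∃ μ, SumsToDiff b r f c μ ∧ ∀ γ : P ⋊[τ] C, cellAct γ c = c → tupleAct γ μ = μ := by
  by_cases hc : ∃ S a y, #S = r ∧ c = cellMk S a y
  · obtain ⟨S, a, y, hS, rfl⟩ := hc
    have S_nonempty : S.Nonempty := card_pos.mp (hS ▸ hr)
    refine exists_stabilized_of_splitting hp cellAct tupleAct
      (fun u hu => inl_eq_one_of_cellAct_cellMk S_nonempty hu)
      (sumsToDiff_cellMk hdeg hS
        (μ := Pi.single 1 (cubeDiff b S (fun a _ => f a) a y)) (by simp))
      fun t ht => ?_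
    obtain ⟨m', hm'⟩ := hM t (cubeDiff b S (fun a _ => f a) a y) fun j => by
      obtain ⟨image_eq, ha, hy⟩ := cellMk_eq_iff.mp ((cellAct_cellMk (t j) S a y).symm.trans (ht j))
      rw [← hf.cubeDiff_vertexAct b S_nonempty,
        hdeg.cubeDiff_congr (by rw [card_image_mul_left, hS]) ha hy, image_eq]
    refine ⟨fun j => t j • m', sumsToDiff_cellMk hdeg hS hm'.symm, fun j => ?_⟩
    funext i
    rw [tupleAct_apply, ← mul_smul, ← map_mul, t.right_apply, mul_inv_cancel_left]
  · refine ⟨0, fun S a y hS h => absurd ⟨S, a, y, hS, h⟩ hc, fun γ _ => ?_⟩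
    funext j
    simp [tupleAct_apply]

theorem exists_hasNormDiff (hp : (Nat.card C).Prime) (hM : FixedIsNorm τ M)
    (b : FreeGroupBasis Y P) {D : P ⋊[τ] C → M} {f : (C → P) → M} (hf : IsAffineEquivariant D f)
    {r : ℕ} (hr : 0 < r) (hdeg : HasDegreeLT b (r + 1) f) :
    ∃ g : (C → Option (P × Y)) → M, HasNormDiff τ b r g f ∧
      ∀ x c, g (cellAct (inl x : P ⋊[τ] C) c) = (inl x : P ⋊[τ] C) • g c := by
  obtain ⟨μ, μ_sum, μ_act⟩ := exists_equivariant_selection cellAct tupleAct (SumsToDiff b r f)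
    (fun γ _ _ h => h.tupleAct hf hr γ) (exists_sumsToDiff hp hM b hf hr hdeg)
  refine ⟨fun c => μ c 1, fun S hS a y => ?_, fun x c => ?_⟩
  · rw [← μ_sum _ S a y hS rfl]
    refine sum_congr rfl fun j _ => ?_
    have act := congrFun (μ_act (inr j)⁻¹ (cellMk S a y)) 1
    simp only [act, tupleAct_apply, inv_right, right_inr, inv_inv, mul_one, smul_inv_smul]
  · have act := congrFun (μ_act (inl x) c) 1
    simpa [tupleAct_apply] using act

theorem IsAffineEquivariant.exists_hasDegreeLT [Nonempty Y] (hp : (Nat.card C).Prime)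
    (hM : FixedIsNorm τ M) (b : FreeGroupBasis Y P) {D : P ⋊[τ] C → M} {f : (C → P) → M}
    (hf : IsAffineEquivariant D f) :
    ∃ f' : (C → P) → M, IsAffineEquivariant D f' ∧ HasDegreeLT b 2 f' := by
  refine Nat.decreasingInduction' (P := fun r => ∃ f', IsAffineEquivariant D f' ∧
    HasDegreeLT b r f') (n := Fintype.card C + 2) (fun r _ hr => ?_) (Nat.le_add_left _ _)
    ⟨f, hf, fun S hS => absurd (hS.trans S.card_le_univ) (by omega)⟩
  rintro ⟨f', hf', degree⟩
  obtain ⟨g, diff_eq, g_equivariant⟩ := exists_hasNormDiff hp hM b hf' (by omega) degree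
  obtain ⟨F, F_primitive, F_equivariant⟩ := exists_equivariant_isCellPrimitive b hr g_equivariant
  refine ⟨fun a => f' a - normSum τ F a, fun γ a => ?_, degree.sub_normSum diff_eq F_primitive⟩
  simp only [hf' γ, normSum_vertexAct F_equivariant, smul_sub, add_sub_assoc]

omit [DecidableEq C] in
theorem exists_eq_principal_add_norm [Nonempty Y] (hp : (Nat.card C).Prime)
    (b : FreeGroupBasis Y P) {D : P ⋊[τ] C → M} (hD : groupCohomology.IsCocycle₁ D)
    (hM : FixedIsNorm τ M) (principal : ∀ t : Splitting τ, ∃ m, ∀ j, D (t j) + t j • m = m) :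
    ∃ (E : P → M) (m : M), (∀ x x', E (x * x') = E x + (inl x : P ⋊[τ] C) • E x') ∧
      ∀ x, D (inl x) = m - (inl x : P ⋊[τ] C) • m + ∑ j, (inr j : P ⋊[τ] C) • E (τ j⁻¹ x) := by
  classical
  obtain ⟨f₀, hf₀⟩ := exists_isAffineEquivariant hp hD principal
  obtain ⟨f, hf, degree⟩ := hf₀.exists_hasDegreeLT hp hM b
  obtain ⟨g, diff_eq, g_equivariant⟩ := exists_hasNormDiff hp hM b hf one_pos degree
  obtain ⟨F, E, F_primitive, F_affine⟩ := exists_affine_isCellPrimitive_one b g_equivariant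
  have const := (degree.sub_normSum diff_eq F_primitive).apply_eq
  refine ⟨E, f 1 - normSum τ F 1, fun x x' => ?_, fun x => ?_⟩
  · have F_mul := F_affine (x * x') 1
    rw [← vertexAct_inl, map_mul, vertexAct_mul, vertexAct_inl, vertexAct_inl, F_affine, F_affine,
      smul_add, mul_smul, ← add_assoc] at F_mul
    exact (add_right_cancel F_mul).symm
  · have at_translate := const (vertexAct (inl x : P ⋊[τ] C) 1) 1
    rw [hf, normSum_inl F_affine] at at_translate
    rw [smul_sub, ← at_translate]
    abel

end Descent

/-! ### Extension of characters from fixed subgroups -/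

section FunctionCoefficients

attribute [local instance] arrowAction

section FunctionModule

open groupCohomology

variable {G X k : Type*} [Group G] [MulAction G X] [AddCommGroup k]

/-- The `G`-module of functions `X → k`, with action `(γ • f) x = f (γ⁻¹ • x)`. -/
abbrev arrowDistribMulAction : DistribMulAction G (X → k) where
  smul_zero _ := rfl
  smul_add _ _ _ := rfl

attribute [local instance] arrowDistribMulAction

theorem arrow_smul_apply (γ : G) (f : X → k) (x : X) : (γ • f) x = f (γ⁻¹ • x) := rfl

variable (X k) in
/-- Functions on `X` modulo constant functions. -/
abbrev ModConst : Type _ := (X → k) ⧸ (Pi.constAddMonoidHom X k).range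

variable (X k) in
/-- The class of a function modulo constants. -/
abbrev ModConst.mk : (X → k) →+ ModConst X k := QuotientAddGroup.mk' _

theorem ModConst.mk_eq_mk {f g : X → k} : mk X k f = mk X k g ↔ ∃ c, ∀ x, g x = f x + c := by
  rw [QuotientAddGroup.mk'_eq_mk']
  constructor
  · rintro ⟨_, ⟨c, rfl⟩, rfl⟩
    exact ⟨c, fun x => rfl⟩
  · rintro ⟨c, hc⟩
    exact ⟨_, ⟨c, rfl⟩, funext fun x => (hc x).symm⟩

theorem ModConst.mk_surjective : Function.Surjective (mk X k) := QuotientAddGroup.mk'_surjective _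

noncomputable instance : DistribMulAction G (ModConst X k) where
  smul γ := QuotientAddGroup.map _ _ (DistribSMul.toAddMonoidHom (X → k) γ) <| by
    rintro _ ⟨c, rfl⟩
    exact ⟨c, rfl⟩
  one_smul m := by
    obtain ⟨f, rfl⟩ := ModConst.mk_surjective m
    exact congrArg (ModConst.mk X k) (one_smul G f)
  mul_smul γ δ m := by
    obtain ⟨f, rfl⟩ := ModConst.mk_surjective m
    exact congrArg (ModConst.mk X k) (mul_smul γ δ f)
  smul_zero _ := map_zero _
  smul_add _ := map_add _

theorem ModConst.smul_mk (γ : G) (f : X → k) : γ • mk X k f = mk X k (γ • f) := rfl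

section CompHom

variable {H : Type*} [Group H] [MulAction H X] {φ : H →* G}

theorem arrow_smul_eq_map_smul (h : ∀ (η : H) (x : X), η • x = φ η • x) (η : H) (f : X → k) :
    η • f = φ η • f := by
  funext x
  rw [arrow_smul_apply, arrow_smul_apply, h, map_inv]

theorem ModConst.smul_eq_map_smul (h : ∀ (η : H) (x : X), η • x = φ η • x) (η : H)
    (m : ModConst X k) : η • m = φ η • m := by
  obtain ⟨f, rfl⟩ := mk_surjective m
  rw [smul_mk, smul_mk, arrow_smul_eq_map_smul h]

end CompHom

theorem exists_smul_eq_mul_of_free {x₀ : X} (fixed : ∀ γ : G, γ • x₀ = x₀)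
    (free : ∀ x ≠ x₀, ∀ γ : G, γ • x = x → γ = 1) :
    ∃ κ : X → G, ∀ x ≠ x₀, ∀ γ, κ (γ • x) = γ * κ x := by
  obtain ⟨f, f_some, f_smul⟩ := exists_equivariant_selection MulAction.toEndHom
    (MulAction.toEndHom (M := G) (α := Option G)) (fun (x : X) z => x ≠ x₀ → z.isSome)
    (fun γ x z h hx => by
      have := h fun hx' => hx (by rw [hx']; exact fixed γ)
      obtain ⟨δ, rfl⟩ := Option.isSome_iff_exists.mp this
      rfl) fun x => by
      by_cases hx : x = x₀
      · exact ⟨none, fun h => absurd hx h, fun _ _ => rfl⟩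
      · refine ⟨some 1, fun _ => rfl, fun γ hγ => ?_⟩
        rw [free x hx γ hγ, map_one]
        rfl
  refine ⟨fun x => (f x).getD 1, fun x hx γ => ?_⟩
  obtain ⟨δ, hδ⟩ := Option.isSome_iff_exists.mp (f_some x hx)
  have f_smul_x := f_smul γ x
  rw [hδ] at f_smul_x
  change f (γ • x) = some (γ * δ) at f_smul_x
  simp only [f_smul_x, hδ, Option.getD_some]

theorem ModConst.exists_eq_sum_smul [Fintype G] {x₀ : X} (fixed : ∀ γ : G, γ • x₀ = x₀)
    (free : ∀ x ≠ x₀, ∀ γ : G, γ • x = x → γ = 1) {m : ModConst X k}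
    (hm : ∀ γ : G, γ • m = m) : ∃ m', m = ∑ γ : G, γ • m' := by
  classical
  obtain ⟨κ, hκ⟩ := exists_smul_eq_mul_of_free fixed free
  obtain ⟨f, rfl⟩ := mk_surjective m
  have f_invariant : ∀ (γ : G) x, f (γ⁻¹ • x) = f x := by
    intro γ x
    obtain ⟨c, hc⟩ : ∃ c, ∀ x, f x = f (γ⁻¹ • x) + c := mk_eq_mk.mp (hm γ)
    have c_eq_zero : c = 0 := by
      have := hc x₀
      rwa [fixed, left_eq_add] at this
    rw [hc x, c_eq_zero, add_zero]
  refine ⟨mk X k fun x => if κ x = 1 then f x - f x₀ else 0, ?_⟩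
  simp only [smul_mk, ← map_sum]
  refine mk_eq_mk.mpr ⟨- f x₀, fun x => ?_⟩
  simp only [Finset.sum_apply, arrow_smul_apply, f_invariant]
  by_cases hx : x = x₀
  · simp [hx]
  · simp [hκ x hx, inv_mul_eq_one, sub_eq_add_neg]

theorem ModConst.exists_mk_add_smul_eq {x₀ : X} (fixed : ∀ γ : G, γ • x₀ = x₀)
    (free : ∀ x ≠ x₀, ∀ γ : G, γ • x = x → γ = 1) {D : G → X → k} (hD : IsCocycle₁ D) :
    ∃ m, ∀ γ : G, mk X k (D γ) + γ • m = m := by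
  obtain ⟨κ, hκ⟩ := exists_smul_eq_mul_of_free fixed free
  let D' : G → X → k := fun γ x => D γ x - D γ x₀
  have D'_mul : ∀ γ δ x, D' (γ * δ) x = D' γ x + D' δ (γ⁻¹ • x) := by
    intro γ δ x
    simp only [D', hD γ δ, Pi.add_apply, arrow_smul_apply, fixed]
    abel
  let v : X → k := fun x => D' (κ x) x
  refine ⟨mk X k v, fun γ => ?_⟩
  rw [smul_mk, ← map_add]
  refine mk_eq_mk.mpr ⟨- D γ x₀, fun x => ?_⟩
  have v_eq : D' γ x + v (γ⁻¹ • x) = v x := by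
    by_cases hx : x = x₀
    · simp [hx, v, D', fixed]
    · simp only [v, hκ x hx, ← D'_mul, mul_inv_cancel_left]
  rw [← v_eq, Pi.add_apply, arrow_smul_apply, ← sub_eq_add_neg, add_sub_right_comm]

open MulAction in
/-- Shapiro's lemma: the induced cocycle is computed from orbit representatives. -/
theorem exists_isCocycle₁_of_stabilizer (x₀ : X) (χ : stabilizer G x₀ →* Multiplicative k) :
    ∃ D : G → X → k, IsCocycle₁ D ∧ ∀ h : stabilizer G x₀, D h x₀ = (χ h).toAdd := by
  classical
  have exists_rep : ∀ x : orbit G x₀, ∃ γ : G, γ • x₀ = x ∧ (x.1 = x₀ → γ = 1) := by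
    rintro ⟨x, γ, rfl⟩
    by_cases h : γ • x₀ = x₀
    · exact ⟨1, by simp [h], fun _ => rfl⟩
    · exact ⟨γ, rfl, fun h' => absurd h' h⟩
  choose r r_smul r_base using exists_rep
  let defect : G → orbit G x₀ → stabilizer G x₀ := fun γ x =>
    ⟨(r x)⁻¹ * γ * r (γ⁻¹ • x), by
      rw [mem_stabilizer_iff, mul_smul, mul_smul, r_smul, orbit.coe_smul, smul_inv_smul,
        inv_smul_eq_iff, r_smul]⟩
  have defect_mul : ∀ γ δ x, defect (γ * δ) x = defect γ x * defect δ (γ⁻¹ • x) := by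
    intro γ δ x
    ext
    simp only [defect, Subgroup.coe_mul, mul_inv_rev, mul_smul]
    group
  refine ⟨fun γ x => if hx : x ∈ orbit G x₀ then (χ (defect γ ⟨x, hx⟩)).toAdd else 0,
    fun γ δ => ?_, fun h => ?_⟩
  · funext x
    rw [Pi.add_apply, arrow_smul_apply]
    by_cases hx : x ∈ orbit G x₀
    · have hx' : γ⁻¹ • x ∈ orbit G x₀ := (γ⁻¹ • (⟨x, hx⟩ : orbit G x₀)).2
      simp only [hx, hx', dif_pos, defect_mul, map_mul, toAdd_mul]
      exact add_comm _ _
    · have hx' : γ⁻¹ • x ∉ orbit G x₀ := fun h => hx (by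
        simpa using (γ • (⟨_, h⟩ : orbit G x₀)).2)
      simp only [hx, hx', dif_neg, not_false_eq_true, add_zero]
  · have defect_base : defect h ⟨x₀, mem_orbit_self x₀⟩ = h := by
      have inv_smul_base : (h : G)⁻¹ • (⟨x₀, mem_orbit_self x₀⟩ : orbit G x₀) =
          ⟨x₀, mem_orbit_self x₀⟩ := Subtype.ext (inv_smul_eq_iff.mpr h.2.symm)
      ext
      simp only [defect, inv_smul_base, r_base, inv_one, one_mul, mul_one]
    simp only [mem_orbit_self, dif_pos, defect_base]

end FunctionModule

section CocycleLift

open groupCohomology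

variable {P Y A B : Type*} [Group P] [AddCommGroup A] [AddCommGroup B] [DistribMulAction P A]
  [DistribMulAction P B]

theorem exists_isCocycle₁_lift (b : FreeGroupBasis Y P) {π : A →+[P] B}
    (hπ : Function.Surjective π) {E : P → B} (hE : IsCocycle₁ E) :
    ∃ E' : P → A, IsCocycle₁ E' ∧ ∀ x, π (E' x) = E x := by
  choose s hs using fun y => hπ (E (b y))
  have E_one : E 1 = 0 := map_one_of_isCocycle₁ hE
  refine ⟨edgeIntegral b fun z y => z • s y, fun x z => ?_, fun x => ?_⟩
  · rw [add_comm]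
    exact edgeIntegral_mul_left b (φ := DistribSMul.toAddMonoidHom A x)
      (fun z y => mul_smul x z (s y)) z
  · have const := eq_apply_one_of_mul_basis_invariant b
      (fun x => π (edgeIntegral b (fun z y => z • s y) x) - E x) (fun z y => by
        simp only [edgeIntegral_mul_basis, map_add, map_smul, hs, hE z (b y)]
        abel) x
    simpa [edgeIntegral_one, E_one, sub_eq_zero] using const

end CocycleLift

section Splitting

open SemidirectProduct groupCohomology

variable {P C Y k : Type*} [Group P] [CommGroup C] [AddCommGroup k] {τ : C →* MulAut P}

attribute [local instance] arrowDistribMulAction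

namespace Splitting

instance : MulAction (P ⋊[τ] C) (Splitting τ) where
  smul γ t := ⟨(MulAut.conj γ).toMonoidHom.comp t.toHom, fun j => by simp [t.right_toHom]⟩
  one_smul t := by
    apply Splitting.ext
    change (MulAut.conj 1).toMonoidHom.comp t.toHom = t.toHom
    ext1 j
    simp
  mul_smul γ δ t := by
    apply Splitting.ext
    change (MulAut.conj (γ * δ)).toMonoidHom.comp t.toHom =
      (MulAut.conj γ).toMonoidHom.comp ((MulAut.conj δ).toMonoidHom.comp t.toHom)
    ext1 j
    simp

theorem smul_apply (γ : P ⋊[τ] C) (t : Splitting τ) (j : C) : (γ • t) j = γ * t j * γ⁻¹ := rfl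

theorem apply_smul_self (t : Splitting τ) (j : C) : t j • t = t := by
  refine DFunLike.ext _ _ fun i => ?_
  rw [smul_apply, ← map_mul, mul_comm, map_mul, mul_inv_cancel_right]

theorem eq_one_of_apply_smul_eq [Finite C] (hp : (Nat.card C).Prime)
    (htf : ∀ x : P, x ^ Nat.card C = 1 → x = 1) {t t' : Splitting τ} (hne : t' ≠ t) {i : C}
    (h : t i • t' = t') : i = 1 := by
  have : Fact (Nat.card C).Prime := ⟨hp⟩
  have commute : Commute (t i) (t' i) := by
    have := DFunLike.congr_fun h i
    rwa [smul_apply, mul_inv_eq_iff_eq_mul] at this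
  have apply_pow : ∀ s : Splitting τ, s i ^ Nat.card C = 1 := fun s => by
    rw [← map_pow, pow_card_eq_one', map_one]
  have eq_inl : t i * (t' i)⁻¹ = inl (t i * (t' i)⁻¹).left := by
    ext <;> simp
  have apply_eq : t i = t' i := by
    have pow_eq_one : (t i * (t' i)⁻¹) ^ Nat.card C = 1 := by
      rw [commute.inv_right.mul_pow, inv_pow, apply_pow, apply_pow, inv_one, mul_one]
    rw [eq_inl, ← map_pow] at pow_eq_one
    rw [← mul_inv_eq_one, eq_inl, htf _ (inl_injective (pow_eq_one.trans (map_one inl).symm)),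
      map_one]
  have mem_eqLocus : i ∈ t.toHom.eqLocus t'.toHom := apply_eq
  rcases Subgroup.eq_bot_or_eq_top_of_prime_card (t.toHom.eqLocus t'.toHom) with bot | top
  · rwa [bot, Subgroup.mem_bot] at mem_eqLocus
  · exact absurd (Splitting.ext (MonoidHom.eq_of_eqOn_top fun j _ => top.ge trivial)) hne.symm

variable (τ) in
/-- The splitting of a semidirect product by its second factor. -/
def standard : Splitting τ := ⟨inr, right_inr⟩

theorem smul_standard_eq_iff {γ : P ⋊[τ] C} :
    γ • standard τ = standard τ ↔ ∀ j, τ j γ.left = γ.left := by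
  have apply_eq_iff : ∀ j, (γ • standard τ) j = standard τ j ↔ τ j γ.left = γ.left := by
    intro j
    rw [smul_apply, mul_inv_eq_iff_eq_mul]
    change γ * inr j = inr j * γ ↔ _
    simp [SemidirectProduct.ext_iff, mul_comm, eq_comm]
  simp only [DFunLike.ext_iff, apply_eq_iff]

theorem inv_smul_standard {γ : P ⋊[τ] C} (h : ∀ j, τ j γ.left = γ.left) :
    γ⁻¹ • standard τ = standard τ :=
  inv_smul_eq_iff.mpr (smul_standard_eq_iff.mpr h).symm

theorem fixedIsNorm_modConst [Fintype C] (hp : (Nat.card C).Prime)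
    (htf : ∀ x : P, x ^ Nat.card C = 1 → x = 1) : FixedIsNorm τ (ModConst (Splitting τ) k) := by
  intro t m hm
  let _ : MulAction C (Splitting τ) := MulAction.compHom _ t.toHom
  have smul_eq := ModConst.smul_eq_map_smul (k := k) (φ := t.toHom)
    fun j (s : Splitting τ) => (rfl : j • s = t j • s)
  obtain ⟨m', hm'⟩ := ModConst.exists_eq_sum_smul (G := C) (x₀ := t) t.apply_smul_self
    (fun _ hne _ h => eq_one_of_apply_smul_eq hp htf hne h) fun j => (smul_eq j m).trans (hm j)
  exact ⟨m', hm'.trans (Finset.sum_congr rfl fun j _ => smul_eq j m')⟩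

theorem exists_mk_add_smul_eq [Finite C] (hp : (Nat.card C).Prime)
    (htf : ∀ x : P, x ^ Nat.card C = 1 → x = 1) {D : P ⋊[τ] C → Splitting τ → k}
    (hD : IsCocycle₁ D) (t : Splitting τ) :
    ∃ m, ∀ j, ModConst.mk _ k (D (t j)) + t j • m = m := by
  let _ : MulAction C (Splitting τ) := MulAction.compHom _ t.toHom
  have smul_eq : ∀ (j : C) (s : Splitting τ), j • s = t.toHom j • s := fun _ _ => rfl
  have cocycle : IsCocycle₁ fun j => D (t j) := fun i j => by
    rw [arrow_smul_eq_map_smul smul_eq]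
    exact (congrArg D (map_mul t i j)).trans (hD (t i) (t j))
  obtain ⟨m, hm⟩ := ModConst.exists_mk_add_smul_eq (x₀ := t) t.apply_smul_self
    (fun _ hne _ h => eq_one_of_apply_smul_eq hp htf hne h) cocycle
  refine ⟨m, fun j => ?_⟩
  exact (congrArg (_ + ·) (ModConst.smul_eq_map_smul smul_eq j m)).symm.trans (hm j)

end Splitting

theorem exists_isCocycle₁_standard {H : Subgroup P} (hH : ∀ h, h ∈ H ↔ ∀ j, τ j h = h)
    (χ : H →* Multiplicative k) : ∃ D : P ⋊[τ] C → Splitting τ → k, IsCocycle₁ D ∧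
      ∀ h : H, D (inl h) (Splitting.standard τ) = (χ h).toAdd := by
  let left : MulAction.stabilizer (P ⋊[τ] C) (Splitting.standard τ) →* H :=
    { toFun γ := ⟨γ.1.left, (hH _).mpr (Splitting.smul_standard_eq_iff.mp γ.2)⟩
      map_one' := rfl
      map_mul' γ δ := Subtype.ext (by
        simp [mul_left, Splitting.smul_standard_eq_iff.mp δ.2]) }
  obtain ⟨D, hD, D_stabilizer⟩ := exists_isCocycle₁_of_stabilizer _ (χ.comp left)
  exact ⟨D, hD, fun h => D_stabilizer
    ⟨inl h, Splitting.smul_standard_eq_iff.mpr fun j => by simpa using (hH h).mp h.2 j⟩⟩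

theorem norm_mul [Fintype C] {A : Type*} [AddCommGroup A] [DistribMulAction (P ⋊[τ] C) A]
    {E : P → A} (hE : ∀ x x', E (x * x') = E x + (inl x : P ⋊[τ] C) • E x') (x x' : P) :
    ∑ j, (inr j : P ⋊[τ] C) • E (τ j⁻¹ (x * x')) = ∑ j, (inr j : P ⋊[τ] C) • E (τ j⁻¹ x) +
      (inl x : P ⋊[τ] C) • ∑ j, (inr j : P ⋊[τ] C) • E (τ j⁻¹ x') := by
  rw [Finset.smul_sum, ← Finset.sum_add_distrib]
  refine Finset.sum_congr rfl fun j _ => ?_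
  rw [map_mul, hE, smul_add, smul_smul, smul_smul, inr_mul_inl_apply_inv]

theorem exists_crossedHom_lift (b : FreeGroupBasis Y P) {E : P → ModConst (Splitting τ) k}
    (hE : ∀ x x', E (x * x') = E x + (inl x : P ⋊[τ] C) • E x') :
    ∃ E' : P → Splitting τ → k, (∀ x x', E' (x * x') = E' x + (inl x : P ⋊[τ] C) • E' x') ∧
      ∀ x, ModConst.mk _ k (E' x) = E x := by
  let _ : DistribMulAction P (Splitting τ → k) :=
    DistribMulAction.compHom _ (inl : P →* P ⋊[τ] C)
  let _ : DistribMulAction P (ModConst (Splitting τ) k) :=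
    DistribMulAction.compHom _ (inl : P →* P ⋊[τ] C)
  let π : (Splitting τ → k) →+[P] ModConst (Splitting τ) k :=
    { ModConst.mk _ k with map_smul' := fun _ _ => rfl }
  obtain ⟨E', hE', lift⟩ := exists_isCocycle₁_lift b (π := π) ModConst.mk_surjective
    (E := E) fun x x' => (hE x x').trans (add_comm _ _)
  exact ⟨E', fun x x' => (hE' x x').trans (add_comm _ _), lift⟩

theorem exists_hom_of_mk_eq_zero {u : P → Splitting τ → k}
    (u_mul : ∀ x x', u (x * x') = u x + (inl x : P ⋊[τ] C) • u x')
    (mk_u : ∀ x, ModConst.mk _ k (u x) = 0) (t : Splitting τ) :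
    ∃ φ : P →* Multiplicative k, ∀ x, φ x = .ofAdd (u x t) := by
  have u_const : ∀ x t', u x t' = u x t := by
    intro x t'
    obtain ⟨c, hc⟩ := ModConst.mk_eq_mk.mp ((map_zero (ModConst.mk (Splitting τ) k)).trans
      (mk_u x).symm)
    rw [hc, hc, Pi.zero_apply, Pi.zero_apply]
  refine ⟨MonoidHom.mk' (fun x => .ofAdd (u x t)) fun x x' => ?_, fun x => rfl⟩
  rw [u_mul, Pi.add_apply, arrow_smul_apply, u_const x', ofAdd_add]

theorem exists_extension_of_fixed [Finite C] (hp : (Nat.card C).Prime) (b : FreeGroupBasis Y P)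
    (htf : ∀ x : P, x ^ Nat.card C = 1 → x = 1) (hk : ∀ z : k, Nat.card C • z = 0)
    {H : Subgroup P} (hH : ∀ h, h ∈ H ↔ ∀ j, τ j h = h) (χ : H →* Multiplicative k) :
    ∃ u : P →* Multiplicative k, ∀ h : H, u h = χ h := by
  rcases isEmpty_or_nonempty Y with hY | hY
  · have eq_one : ∀ h : H, h = 1 := fun h => Subtype.ext <|
      eq_apply_one_of_mul_basis_invariant b id (fun _ y => hY.elim y) h
    exact ⟨1, fun h => by rw [eq_one h, map_one, Subgroup.coe_one, map_one]⟩
  cases nonempty_fintype C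
  obtain ⟨D, hD, D_standard⟩ := exists_isCocycle₁_standard hH χ
  obtain ⟨E₀, m, hE₀, D_eq⟩ := exists_eq_principal_add_norm hp b
    (D := fun γ => ModConst.mk _ k (D γ))
    (fun γ δ => (congrArg _ (hD γ δ)).trans (map_add _ _ _))
    (Splitting.fixedIsNorm_modConst hp htf) (Splitting.exists_mk_add_smul_eq hp htf hD)
  obtain ⟨E, hE, mk_E⟩ := exists_crossedHom_lift b hE₀
  obtain ⟨f, rfl⟩ := ModConst.mk_surjective m
  let u : P → Splitting τ → k := fun x => D (inl x) - (f - (inl x : P ⋊[τ] C) • f) -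
    ∑ j, (inr j : P ⋊[τ] C) • E (τ j⁻¹ x)
  have mk_u : ∀ x, ModConst.mk _ k (u x) = 0 := by
    intro x
    simp only [u, map_sub, map_sum, ← ModConst.smul_mk, D_eq x, mk_E, add_sub_cancel_left, sub_self]
  have u_mul : ∀ x x', u (x * x') = u x + (inl x : P ⋊[τ] C) • u x' := by
    intro x x'
    simp only [u, norm_mul hE x x']
    simp only [map_mul, hD (inl x), smul_sub, mul_smul]
    abel
  obtain ⟨φ, hφ⟩ := exists_hom_of_mk_eq_zero u_mul mk_u (Splitting.standard τ)
  refine ⟨φ, fun h => (hφ h).trans ?_⟩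
  have h_fixed := (hH h).mp h.2
  have inl_fixed := Splitting.inv_smul_standard (γ := (inl (h : P) : P ⋊[τ] C))
    (by simpa using h_fixed)
  have inr_fixed := fun j => Splitting.inv_smul_standard (γ := (inr j : P ⋊[τ] C)) (by simp)
  have principal_term : (f - (inl (h : P) : P ⋊[τ] C) • f) (Splitting.standard τ) = 0 := by
    rw [Pi.sub_apply, arrow_smul_apply, inl_fixed, sub_self]
  have norm_term : (∑ j, (inr j : P ⋊[τ] C) • E (τ j⁻¹ h)) (Splitting.standard τ) = 0 := by
    simp only [Finset.sum_apply, arrow_smul_apply, inr_fixed, h_fixed, Finset.sum_const,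
      Finset.card_univ, ← Nat.card_eq_fintype_card, hk]
  simp only [u, Pi.sub_apply] at principal_term norm_term ⊢
  rw [principal_term, norm_term, sub_zero, sub_zero, D_standard, ofAdd_toAdd]

theorem exists_extension_of_pow_eq_one {p : ℕ} (hp : p.Prime) {a : MulAut P} (ha : a ^ p = 1)
    (b : FreeGroupBasis Y P) (htf : ∀ x : P, x ^ p = 1 → x = 1) (hk : ∀ z : k, p • z = 0)
    {H : Subgroup P} (hH : ∀ h, h ∈ H ↔ a h = h) (χ : H →* Multiplicative k) :
    ∃ u : P →* Multiplicative k, ∀ h : H, u h = χ h := by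
  rcases (Nat.dvd_prime hp).mp (orderOf_dvd_of_pow_eq_one ha) with order_one | order_p
  · rw [orderOf_eq_one_iff] at order_one
    exact ⟨χ.comp ((MonoidHom.id P).codRestrict H fun h => (hH h).mpr (by simp [order_one])),
      fun h => rfl⟩
  · have card_zpowers : Nat.card (Subgroup.zpowers a) = p := by rw [Nat.card_zpowers, order_p]
    have : Finite (Subgroup.zpowers a) :=
      Nat.finite_of_card_ne_zero (by rw [card_zpowers]; exact hp.ne_zero)
    let _ : CommGroup (Subgroup.zpowers a) := IsCyclic.commGroup
    refine exists_extension_of_fixed (τ := (Subgroup.zpowers a).subtype) (by rwa [card_zpowers]) b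
      (by rwa [card_zpowers]) (by rwa [card_zpowers]) (fun h => (hH h).trans ?_) χ
    refine ⟨?_, fun fixed => fixed ⟨a, Subgroup.mem_zpowers a⟩⟩
    rintro fixed ⟨_, j, rfl⟩
    exact (MulAction.stabilizer (MulAut P) h).zpow_mem fixed j

end Splitting

end FunctionCoefficients

/-! ### Kernels of matrices over the group ring -/

open Module Matrix
open scoped MonoidAlgebra Pointwise

section GroupRingMatrix

variable {k F Q s t w : Type*} [CommRing k] [Group F] [MulAction F Q] [Fintype Q] [DecidableEq Q]

variable (k F Q) in
/-- The permutation representation of the group ring on `Q → k`. -/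
noncomputable def permRep : k[F] →ₐ[k] Matrix Q Q k :=
  MonoidAlgebra.lift k (Matrix Q Q k) F (Matrix.permMatrixHom.comp (MulAction.toPermHom F Q))

theorem permRep_single_apply (f : F) (c : k) (q r : Q) :
    permRep k F Q (.single f c) q r = if f⁻¹ • q = r then c else 0 := by
  simp [permRep, MonoidAlgebra.lift_single, PEquiv.toMatrix_apply, eq_comm]

theorem permRep_apply (a : k[F]) (q r : Q) :
    permRep k F Q a q r = a.coeff.sum fun f c => if f⁻¹ • q = r then c else 0 := by
  conv_lhs => rw [← MonoidAlgebra.sum_coeff_single a, Finsupp.sum, map_sum, Matrix.sum_apply]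
  simp only [permRep_single_apply, Finsupp.sum]

theorem permRep_mapDomain_inv (a : k[F]) :
    permRep k F Q (a.mapDomain Inv.inv) = (permRep k F Q a)ᵀ := by
  induction a using MonoidAlgebra.induction_linear with
  | zero => simp
  | add a a' ha ha' => simp only [MonoidAlgebra.mapDomain_add, map_add, ha, ha', transpose_add]
  | single f c =>
    ext q r
    have swap : f • q = r ↔ f⁻¹ • r = q := by rw [inv_smul_eq_iff, eq_comm]
    simp only [MonoidAlgebra.mapDomain_single, transpose_apply, permRep_single_apply, inv_inv, swap]

theorem permRep_apply_self {a : k[F]} {q : Q} (h : ∀ f ∈ a.coeff.support, f ≠ 1 → f • q ≠ q) :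
    permRep k F Q a q q = a.coeff 1 := by
  rw [permRep_apply, Finsupp.sum, Finset.sum_eq_single 1 _ (by simp)]
  · simp
  · exact fun f hf hf_one => if_neg fun fixed => h f hf hf_one (inv_smul_eq_iff.mp fixed).symm

theorem map_permRep {k' : Type*} [CommRing k'] (φ : k →+* k') (a : k[F]) :
    (permRep k F Q a).map φ = permRep k' F Q (MonoidAlgebra.mapRingHom F φ a) := by
  induction a using MonoidAlgebra.induction_linear with
  | zero => ext; simp
  | add a a' ha ha' => simp only [map_add, ← ha, ← ha', Matrix.map_add φ (map_add φ)]
  | single f c =>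
    ext q r
    simp only [Matrix.map_apply, MonoidAlgebra.mapRingHom_single, permRep_single_apply, apply_ite φ,
      map_zero]

theorem sum_abs_permRep_le (a : ℝ[F]) (q : Q) :
    ∑ r, |permRep ℝ F Q a q r| ≤ a.coeff.sum fun _ c => |c| := by
  simp only [permRep_apply, Finsupp.sum]
  calc ∑ r, |∑ f ∈ a.coeff.support, if f⁻¹ • q = r then a.coeff f else 0|
      ≤ ∑ r, ∑ f ∈ a.coeff.support, |if f⁻¹ • q = r then a.coeff f else 0| :=
        Finset.sum_le_sum fun r _ => Finset.abs_sum_le_sum_abs _ _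
    _ = ∑ f ∈ a.coeff.support, |a.coeff f| := by
        rw [Finset.sum_comm]
        simp only [apply_ite abs, abs_zero, Finset.sum_ite_eq, Finset.mem_univ, if_true]

variable (Q) in
/-- The matrix over `k` obtained from a matrix over the group ring by letting the entries act
through the permutation representation on `Q`. -/
noncomputable def blockRep (A : Matrix s t k[F]) : Matrix (s × Q) (t × Q) k :=
  Matrix.comp s t Q Q k (A.map (permRep k F Q))

theorem blockRep_apply (A : Matrix s t k[F]) (i : s) (q : Q) (j : t) (r : Q) :
    blockRep Q A (i, q) (j, r) = permRep k F Q (A i j) q r :=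
  rfl

theorem vecMul_blockRep [Fintype s] (v : s × Q → k) (A : Matrix s t k[F]) (j : t) (q : Q) :
    (v ᵥ* blockRep Q A) (j, q) = ∑ i, (A i j).coeff.sum fun f c => c * v (i, f • q) := by
  simp only [vecMul, dotProduct, Fintype.sum_prod_type, blockRep_apply, permRep_apply, Finsupp.sum,
    Finset.mul_sum]
  refine Finset.sum_congr rfl fun i _ => ?_
  rw [Finset.sum_comm]
  refine Finset.sum_congr rfl fun f _ => ?_
  simp only [mul_ite, mul_zero, inv_smul_eq_iff, Finset.sum_ite_eq', Finset.mem_univ, if_true]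
  exact mul_comm _ _

theorem map_blockRep {k' : Type*} [CommRing k'] (φ : k →+* k') (A : Matrix s t k[F]) :
    (blockRep Q A).map φ = blockRep Q (A.map (MonoidAlgebra.mapRingHom F φ)) := by
  ext ⟨i, q⟩ ⟨j, r⟩
  exact congrFun₂ (map_permRep φ (A i j)) q r

theorem blockRep_mul [Fintype t] (A : Matrix s t k[F]) (B : Matrix t w k[F]) :
    blockRep Q (A * B) = blockRep Q A * blockRep Q B := by
  ext ⟨i, q⟩ ⟨j, r⟩
  simp only [blockRep_apply, Matrix.mul_apply, map_sum, map_mul, Matrix.sum_apply,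
    Fintype.sum_prod_type]

theorem blockRep_eq_algHom [Fintype s] [DecidableEq s] (A : Matrix s s k[F]) :
    blockRep Q A = ((compAlgEquiv s Q k k).toAlgHom.comp (permRep k F Q).mapMatrix) A :=
  rfl

/-- The adjoint of a matrix over the group ring: the transpose, with `f ↦ f⁻¹` applied to the
entries. -/
noncomputable def adjoint (A : Matrix s t k[F]) : Matrix t s k[F] :=
  (A.map (MonoidAlgebra.mapDomain Inv.inv))ᵀ

theorem blockRep_adjoint (A : Matrix s t k[F]) : blockRep Q (adjoint A) = (blockRep Q A)ᵀ := by
  ext ⟨i, q⟩ ⟨j, r⟩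
  exact congrFun₂ (permRep_mapDomain_inv (A j i)) q r

/-- The operator `1 - B⁻¹ A A*`, which restricts to the identity on the left kernel of `A`. -/
noncomputable def defect [Fintype t] [DecidableEq s] (A : Matrix s t ℝ[F]) (B : ℝ) :
    Matrix s s ℝ[F] :=
  1 - B⁻¹ • (A * adjoint A)

theorem blockRep_defect_pow [Fintype s] [Fintype t] [DecidableEq s] (A : Matrix s t ℝ[F]) (B : ℝ)
    (n : ℕ) : blockRep Q (defect A B ^ n) =
      (1 - B⁻¹ • (blockRep Q A * (blockRep Q A)ᵀ)) ^ n := by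
  rw [blockRep_eq_algHom, map_pow, defect, map_sub, map_one, map_smul, ← blockRep_eq_algHom,
    blockRep_mul, blockRep_adjoint]

/-- The von Neumann trace of a square matrix over the group ring. -/
def vnTrace [Fintype s] (M : Matrix s s k[F]) : k :=
  ∑ i, (M i i).coeff 1

/-- No element of `S` other than `1` fixes a point of `Q`. -/
def FixedPointFree {F : Type*} [Group F] (S : Finset F) (Q : Type*) [MulAction F Q] : Prop :=
  ∀ f ∈ S, f ≠ 1 → ∀ q : Q, f • q ≠ q

open Classical in
/-- The group elements occurring on the diagonal of a matrix over the group ring. -/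
noncomputable def diagSupport [Fintype s] (M : Matrix s s k[F]) : Finset F :=
  Finset.univ.biUnion fun i => (M i i).coeff.support

theorem sum_blockRep_diag [Fintype s] {M : Matrix s s k[F]} (hQ : FixedPointFree (diagSupport M) Q)
    (I : Finset Q) :
    ∑ x ∈ Finset.univ ×ˢ I, blockRep Q M x x = vnTrace M * I.card := by
  have mem_diagSupport : ∀ i, ∀ f ∈ (M i i).coeff.support, f ∈ diagSupport M := by
    classical exact fun i f hf => Finset.mem_biUnion.mpr ⟨i, Finset.mem_univ i, hf⟩
  have diag_apply : ∀ i q, blockRep Q M (i, q) (i, q) = (M i i).coeff 1 := fun i q =>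
    permRep_apply_self fun f hf hf_one => hQ f (mem_diagSupport i f hf) hf_one q
  simp only [Finset.sum_product, diag_apply, Finset.sum_const, nsmul_eq_mul, vnTrace,
    ← Finset.mul_sum, mul_comm]

end GroupRingMatrix

section KernelDimension

theorem sum_sq_le_mul_self_diag {ι κ : Type*} [Fintype ι] [Fintype κ] {M : Matrix ι ι ℝ}
    (hM : M.IsSymm) {u : κ → EuclideanSpace ℝ ι} (hu : Orthonormal ℝ u)
    (fixed : ∀ j, (u j).ofLp ᵥ* M = (u j).ofLp) (x : ι) :
    ∑ j, u j x ^ 2 ≤ (M * M) x x := by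
  let column : EuclideanSpace ℝ ι := WithLp.toLp 2 fun y => M y x
  have inner_column : ∀ j, inner ℝ (u j) column = u j x := by
    intro j
    rw [PiLp.inner_apply, ← congrFun (fixed j) x]
    simp only [column, vecMul, dotProduct, RCLike.inner_apply, conj_trivial, mul_comm]
  have norm_column : ‖column‖ ^ 2 = (M * M) x x := by
    rw [EuclideanSpace.norm_sq_eq, Matrix.mul_apply]
    refine Finset.sum_congr rfl fun y _ => ?_
    rw [Real.norm_eq_abs, sq_abs, sq]
    exact congrArg (· * M y x) (hM.apply x y)
  calc ∑ j, u j x ^ 2 = ∑ j, ‖inner ℝ (u j) column‖ ^ 2 := by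
        simp only [inner_column, Real.norm_eq_abs, sq_abs]
    _ ≤ ‖column‖ ^ 2 := hu.sum_inner_products_le column
    _ = (M * M) x x := norm_column

theorem finrank_le_sum_mul_self_diag {ι : Type*} [Fintype ι] {M : Matrix ι ι ℝ} (hM : M.IsSymm)
    {I : Finset ι} {V : Submodule ℝ (ι → ℝ)} (supported : ∀ v ∈ V, ∀ x ∉ I, v x = 0)
    (fixed : ∀ v ∈ V, v ᵥ* M = v) : (finrank ℝ V : ℝ) ≤ ∑ x ∈ I, (M * M) x x := by
  let W : Submodule ℝ (EuclideanSpace ℝ ι) :=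
    V.map (WithLp.linearEquiv 2 ℝ (ι → ℝ)).symm.toLinearMap
  have mem_V : ∀ w ∈ W, w.ofLp ∈ V := by
    rintro w ⟨v, hv, rfl⟩
    exact hv
  let basis := stdOrthonormalBasis ℝ W
  let u : Fin (finrank ℝ W) → EuclideanSpace ℝ ι := fun j => basis j
  have hu : Orthonormal ℝ u := basis.orthonormal.comp_linearIsometry W.subtypeₗᵢ
  have sum_sq : ∀ j, ∑ x ∈ I, u j x ^ 2 = 1 := by
    intro j
    have norm_sq := EuclideanSpace.norm_sq_eq (u j)
    simp only [hu.1 j, one_pow, Real.norm_eq_abs, sq_abs] at norm_sq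
    rw [norm_sq]
    refine Finset.sum_subset I.subset_univ fun x _ hx => ?_
    rw [supported _ (mem_V _ (basis j).2) x hx, zero_pow two_ne_zero]
  calc (finrank ℝ V : ℝ) = finrank ℝ W := by
        rw [LinearEquiv.finrank_map_eq (WithLp.linearEquiv 2 ℝ (ι → ℝ)).symm V]
    _ = ∑ j, ∑ x ∈ I, u j x ^ 2 := by simp [sum_sq]
    _ = ∑ x ∈ I, ∑ j, u j x ^ 2 := Finset.sum_comm
    _ ≤ ∑ x ∈ I, (M * M) x x := Finset.sum_le_sum fun x _ =>
        sum_sq_le_mul_self_diag hM hu (fun j => fixed _ (mem_V _ (basis j).2)) x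

variable {F : Type u} [Group F] {s t : Type*} [Fintype s] [Fintype t]

/-- The left kernel of `A`, acting through a sufficiently free finite `F`-set `Q`, contains no
subspace supported over `I ⊆ Q` of dimension more than `η |I|`. -/
def HasSmallKernel (A : Matrix s t ℝ[F]) (η : ℝ) : Prop :=
  ∃ S : Finset F, ∀ (Q : Type u) [MulAction F Q] [Fintype Q] [DecidableEq Q],
    FixedPointFree S Q → ∀ (I : Finset Q) (V : Submodule ℝ (s × Q → ℝ)),
      (∀ v ∈ V, ∀ i, ∀ q ∉ I, v (i, q) = 0) → (∀ v ∈ V, v ᵥ* blockRep Q A = 0) →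
        (finrank ℝ V : ℝ) ≤ η * I.card

theorem hasSmallKernel_of_vnTrace_le [DecidableEq s] {A : Matrix s t ℝ[F]} {B η : ℝ} {r : ℕ}
    (h : vnTrace (defect A B ^ (2 * r)) ≤ η) : HasSmallKernel A η := by
  refine ⟨diagSupport (defect A B ^ (2 * r)), fun Q _ _ _ hQ I V supported kernel => ?_⟩
  have symm : (blockRep Q (defect A B ^ r)).IsSymm := by
    rw [blockRep_defect_pow]
    simp only [IsSymm, transpose_pow, transpose_sub, transpose_one, transpose_smul, transpose_mul,
      transpose_transpose]
  have fixed_one : ∀ v ∈ V, v ᵥ* (1 - B⁻¹ • (blockRep Q A * (blockRep Q A)ᵀ)) = v := by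
    intro v hv
    rw [vecMul_sub, vecMul_one, vecMul_smul, ← vecMul_vecMul, kernel v hv, zero_vecMul, smul_zero,
      sub_zero]
  have fixed : ∀ n : ℕ, ∀ v ∈ V, v ᵥ* blockRep Q (defect A B ^ n) = v := by
    intro n v hv
    rw [blockRep_defect_pow]
    induction n with
    | zero => rw [pow_zero, vecMul_one]
    | succ n ih => rw [pow_succ, ← vecMul_vecMul, ih, fixed_one v hv]
  calc (finrank ℝ V : ℝ)
      ≤ ∑ x ∈ Finset.univ ×ˢ I, blockRep Q (defect A B ^ (2 * r)) x x := by
        rw [two_mul, pow_add, blockRep_mul]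
        exact finrank_le_sum_mul_self_diag symm
          (fun v hv x hx => supported v hv x.1 x.2 (by simpa using hx)) (fixed r)
    _ = vnTrace (defect A B ^ (2 * r)) * I.card := sum_blockRep_diag hQ I
    _ ≤ η * I.card := by gcongr

end KernelDimension

/-! ### Residual properties of free groups -/

section ResiduallyP

variable {G : Type*} [Group G] {p : ℕ}

/-- The group `G` is residually a finite `p`-group. -/
def IsResiduallyFiniteP (p : ℕ) (G : Type*) [Group G] : Prop :=
  ∀ g : G, g ≠ 1 → ∃ (N : Subgroup G) (_ : N.Normal),
    N.FiniteIndex ∧ IsPGroup p (G ⧸ N) ∧ g ∉ N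

theorem isPGroup_quotient_iff {N : Subgroup G} [N.Normal] :
    IsPGroup p (G ⧸ N) ↔ ∀ g : G, ∃ k : ℕ, g ^ p ^ k ∈ N := by
  rw [isPGroup_iff_pow_pow_eq_one, (QuotientGroup.mk'_surjective N).forall]
  simp only [QuotientGroup.mk'_apply, ← QuotientGroup.mk_pow, QuotientGroup.eq_one_iff]

theorem isPGroup_quotient_inf {M N : Subgroup G} [M.Normal] [N.Normal] (hM : IsPGroup p (G ⧸ M))
    (hN : IsPGroup p (G ⧸ N)) : IsPGroup p (G ⧸ (M ⊓ N)) := by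
  rw [isPGroup_quotient_iff] at *
  intro g
  obtain ⟨k, hk⟩ := hM g
  obtain ⟨l, hl⟩ := hN g
  refine ⟨k + l, ?_, ?_⟩
  · rw [pow_add, pow_mul]
    exact M.pow_mem hk _
  · rw [add_comm, pow_add, pow_mul]
    exact N.pow_mem hl _

theorem exists_normal_isPGroup_forall_notMem {S : Finset G}
    (h : ∀ g ∈ S, ∃ (N : Subgroup G) (_ : N.Normal),
      N.FiniteIndex ∧ IsPGroup p (G ⧸ N) ∧ g ∉ N) :
    ∃ (N : Subgroup G) (_ : N.Normal), N.FiniteIndex ∧ IsPGroup p (G ⧸ N) ∧ ∀ g ∈ S, g ∉ N := by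
  classical
  induction S using Finset.induction_on with
  | empty =>
    refine ⟨⊤, inferInstance, inferInstance, ?_, by simp⟩
    exact isPGroup_quotient_iff.mpr fun g => ⟨0, Subgroup.mem_top _⟩
  | insert g S _ ih =>
    obtain ⟨M, _, _, hM, g_notMem⟩ := h g (Finset.mem_insert_self g S)
    obtain ⟨N, _, _, hN, S_notMem⟩ := ih fun f hf => h f (Finset.mem_insert_of_mem hf)
    refine ⟨M ⊓ N, inferInstance, inferInstance, isPGroup_quotient_inf hM hN, ?_⟩
    rw [Finset.forall_mem_insert]
    exact ⟨fun hg => g_notMem hg.1, fun f hf hf_mem => S_notMem f hf hf_mem.2⟩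

end ResiduallyP

section Crossings

variable {X Q : Type*} [Group Q] (p : ℕ) (π : FreeGroup X →* Q) (x : X)

open Classical in
/-- The lift of `π` to the wreath product with `ℤ/p` whose base component counts, modulo `p`, the
signed traversals of the edges labelled `x` by a path in the Cayley graph of `Q`. -/
noncomputable def wreathLift : FreeGroup X →* RegularWreathProduct (Multiplicative (ZMod p)) Q :=
  FreeGroup.lift fun y =>
    ⟨if y = x then Pi.mulSingle 1 (Multiplicative.ofAdd 1) else 1, π (FreeGroup.of y)⟩

/-- The signed number, modulo `p`, of traversals of the edge labelled `x` with tail `q` by the path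
from `1` in the Cayley graph of `Q` that is described by a word. -/
noncomputable def crossings (w : FreeGroup X) (q : Q) : ZMod p :=
  ((wreathLift p π x w).left q).toAdd

/-- The tail of the edge of the Cayley graph of `Q` traversed, from either end, by a letter read at
`1`. -/
def edgeTail (a : X × Bool) : Q :=
  if a.2 then 1 else (π (FreeGroup.of a.1))⁻¹

theorem wreathLift_right (w : FreeGroup X) : (wreathLift p π x w).right = π w := by
  have : RegularWreathProduct.rightHom.comp (wreathLift p π x) = π := by
    ext y
    simp [wreathLift]
  exact DFunLike.congr_fun this w

theorem crossings_mul (v w : FreeGroup X) (q : Q) :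
    crossings p π x (v * w) q = crossings p π x v q + crossings p π x w ((π v)⁻¹ * q) := by
  simp [crossings, wreathLift_right]

theorem crossings_one (q : Q) : crossings p π x 1 q = 0 := by
  simp [crossings]

open Classical in
theorem crossings_of (y : X) (q : Q) :
    crossings p π x (FreeGroup.of y) q = if y = x ∧ q = 1 then 1 else 0 := by
  rw [crossings, wreathLift, FreeGroup.lift_apply_of]
  by_cases hy : y = x <;> by_cases hq : q = 1 <;> simp [hy, hq]

open Classical in
theorem crossings_inv_of (y : X) (q : Q) : crossings p π x (FreeGroup.of y)⁻¹ q =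
    if y = x ∧ q = (π (FreeGroup.of y))⁻¹ then -1 else 0 := by
  have cancel := crossings_mul p π x (FreeGroup.of y)⁻¹ (FreeGroup.of y) q
  rw [inv_mul_cancel, crossings_one, crossings_of, map_inv, inv_inv] at cancel
  rw [eq_neg_of_add_eq_zero_left cancel.symm, mul_eq_one_iff_eq_inv']
  split_ifs <;> simp

theorem mk_cons (a : X × Bool) (L : List (X × Bool)) :
    FreeGroup.mk (a :: L) = FreeGroup.mk [a] * FreeGroup.mk L :=
  (FreeGroup.mul_mk (L₁ := [a])).symm

theorem mk_append_singleton (L : List (X × Bool)) (a : X × Bool) :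
    FreeGroup.mk (L ++ [a]) = FreeGroup.mk L * FreeGroup.mk [a] :=
  FreeGroup.mul_mk.symm

theorem mk_singleton (a : X × Bool) :
    FreeGroup.mk [a] = if a.2 then FreeGroup.of a.1 else (FreeGroup.of a.1)⁻¹ := by
  obtain ⟨y, _ | _⟩ := a <;> rfl

variable {p π x}

theorem crossings_mk_singleton_eq_zero {a : X × Bool} {q : Q}
    (h : a.1 = x → q ≠ edgeTail π a) : crossings p π x (FreeGroup.mk [a]) q = 0 := by
  classical
  obtain ⟨y, _ | _⟩ := a
  · exact (crossings_inv_of p π x y q).trans (if_neg fun hq => h hq.1 hq.2)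
  · exact (crossings_of p π x y q).trans (if_neg fun hq => h hq.1 hq.2)

theorem crossings_mk_singleton_ne_zero [Fact p.Prime] (a : X × Bool) :
    crossings p π a.1 (FreeGroup.mk [a]) (edgeTail π a) ≠ 0 := by
  classical
  obtain ⟨y, _ | _⟩ := a
  · refine ((crossings_inv_of p π y y _).trans (if_pos ⟨rfl, rfl⟩)).trans_ne ?_
    exact neg_ne_zero.mpr one_ne_zero
  · exact ((crossings_of p π y y _).trans (if_pos ⟨rfl, rfl⟩)).trans_ne one_ne_zero

theorem exists_crossing_of_crossings_ne_zero {L : List (X × Bool)} {q : Q}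
    (h : crossings p π x (FreeGroup.mk L) q ≠ 0) :
    ∃ L₁ a L₂, L = L₁ ++ a :: L₂ ∧ a.1 = x ∧ π (FreeGroup.mk L₁) * edgeTail π a = q := by
  induction L using List.reverseRecOn with
  | nil => exact absurd (crossings_one p π x q) h
  | append_singleton L a ih =>
    by_cases crossed : crossings p π x (FreeGroup.mk L) q = 0
    · rw [mk_append_singleton, crossings_mul, crossed, zero_add] at h
      obtain ⟨ha, hq⟩ : a.1 = x ∧ (π (FreeGroup.mk L))⁻¹ * q = edgeTail π a := by
        by_contra hcon
        exact h (crossings_mk_singleton_eq_zero (not_and.mp hcon))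
      exact ⟨L, a, [], rfl, ha, by rw [← hq, mul_inv_cancel_left]⟩
    · obtain ⟨L₁, b, L₂, rfl, hb, hq⟩ := ih crossed
      exact ⟨L₁, b, L₂ ++ [a], by simp, hb, hq⟩

/-- The edge traversed by the first letter must be traversed again; the stretch of the word between
the two traversals, including each of them if positively resp. negatively oriented, is a loop. -/
theorem exists_infix_of_wreathLift_eq_one [Fact p.Prime] {a : X × Bool} {L : List (X × Bool)}
    (red : FreeGroup.IsReduced (a :: L)) (h : wreathLift p π a.1 (FreeGroup.mk (a :: L)) = 1) :
    ∃ M, M <:+: a :: L ∧ M ≠ [] ∧ M.length ≤ L.length ∧ π (FreeGroup.mk M) = 1 := by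
  have recrossed :
      crossings p π a.1 (FreeGroup.mk L) ((π (FreeGroup.mk [a]))⁻¹ * edgeTail π a) ≠ 0 := by
    intro hL
    have total : crossings p π a.1 (FreeGroup.mk (a :: L)) (edgeTail π a) = 0 := by
      rw [crossings, h]
      rfl
    rw [mk_cons, crossings_mul, hL, add_zero] at total
    exact crossings_mk_singleton_ne_zero a total
  obtain ⟨L₁, b, L₂, rfl, hb, edge⟩ := exists_crossing_of_crossings_ne_zero recrossed
  have length_lt : L₁.length < (L₁ ++ b :: L₂).length := by simp
  have opposite (hπ : π (FreeGroup.mk L₁) = 1) (hab : a.2 ≠ b.2) :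
      ∃ M, M <:+: a :: (L₁ ++ b :: L₂) ∧ M ≠ [] ∧ M.length ≤ (L₁ ++ b :: L₂).length ∧
        π (FreeGroup.mk M) = 1 := by
    refine ⟨L₁, ⟨[a], b :: L₂, by simp⟩, ?_, length_lt.le, hπ⟩
    rintro rfl
    exact hab ((FreeGroup.isReduced_cons_cons.mp red).1 hb.symm)
  obtain ⟨x, _ | _⟩ := a <;> obtain ⟨y, _ | _⟩ := b <;> obtain rfl : y = x := hb <;>
    simp only [edgeTail, mk_singleton, map_inv, if_true, if_false, Bool.false_eq_true, mul_one,
      inv_inv, mul_inv_cancel] at edge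
  · refine ⟨L₁ ++ [(y, false)], ⟨[(y, false)], L₂, by simp⟩, by simp, by simp, ?_⟩
    rw [mk_append_singleton, map_mul, mk_singleton, ← edge]
    simp
  · exact opposite edge (by simp)
  · exact opposite (mul_eq_right.mp edge) (by simp)
  · refine ⟨(y, true) :: L₁, ⟨[], (y, true) :: L₂, by simp⟩, by simp, length_lt, ?_⟩
    rw [mk_cons, map_mul, mk_singleton, edge]
    simp

end Crossings

section ResiduallyPFree

variable {X : Type*} {p : ℕ} [Fact p.Prime]

theorem isPGroup_wreathProduct {D Q : Type*} [Group D] [Group Q] [Finite D] [Finite Q]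
    (hD : IsPGroup p D) (hQ : IsPGroup p Q) : IsPGroup p (RegularWreathProduct D Q) := by
  obtain ⟨m, hm⟩ := IsPGroup.iff_card.mp hD
  obtain ⟨n, hn⟩ := IsPGroup.iff_card.mp hQ
  refine IsPGroup.of_card (n := m * Nat.card Q + n) ?_
  rw [RegularWreathProduct.card, hm, pow_add, pow_mul, ← hn]

theorem isResiduallyFiniteP_freeGroup : IsResiduallyFiniteP p (FreeGroup X) := by
  classical
  intro w hw
  induction hn : w.norm using Nat.strong_induction_on generalizing w with
  | _ n ih =>
  subst hn
  let S : Finset (FreeGroup X) :=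
    {v ∈ w.toWord.sublists.toFinset.image FreeGroup.mk | v ≠ 1 ∧ v.norm < w.norm}
  obtain ⟨N, _, _, hN, avoids⟩ := exists_normal_isPGroup_forall_notMem (S := S) (p := p)
    fun v hv => ih v.norm (Finset.mem_filter.mp hv).2.2 v (Finset.mem_filter.mp hv).2.1 rfl
  obtain ⟨a, L, hL⟩ := List.exists_cons_of_ne_nil (mt FreeGroup.toWord_eq_nil_iff.mp hw)
  have red : FreeGroup.IsReduced (a :: L) := hL ▸ FreeGroup.isReduced_toWord
  let lift := wreathLift p (QuotientGroup.mk' N) a.1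
  have hZMod : IsPGroup p (Multiplicative (ZMod p)) :=
    IsPGroup.of_card (n := 1) (by simp)
  have hlift := (isPGroup_wreathProduct hZMod hN).of_injective _
    (QuotientGroup.kerLift_injective lift)
  refine ⟨lift.ker, inferInstance, inferInstance, hlift, fun w_mem => ?_⟩
  rw [MonoidHom.mem_ker, ← FreeGroup.mk_toWord (x := w), hL] at w_mem
  obtain ⟨M, hM, M_ne, M_length, hπ⟩ := exists_infix_of_wreathLift_eq_one red w_mem
  have toWord_M : (FreeGroup.mk M).toWord = M := by
    obtain ⟨L₁, L₂, append_eq⟩ := hM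
    have red_append : FreeGroup.IsReduced (L₁ ++ M ++ L₂) := append_eq ▸ red
    exact FreeGroup.IsReduced.reduce_eq red_append.left_of_append.right_of_append
  refine avoids (FreeGroup.mk M) (Finset.mem_filter.mpr ⟨?_, ?_, ?_⟩)
    ((QuotientGroup.eq_one_iff _).mp hπ)
  · exact Finset.mem_image_of_mem _
      (List.mem_toFinset.mpr (List.mem_sublists.mpr (hL ▸ hM.sublist)))
  · rwa [Ne, ← FreeGroup.toWord_eq_nil_iff, toWord_M]
  · rw [FreeGroup.norm, FreeGroup.norm, toWord_M, hL]
    exact Nat.lt_succ_of_le M_length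

end ResiduallyPFree

/-! ### Kernels from integral Gram determinants -/

section Spectral

variable {ι : Type*} [Fintype ι] [DecidableEq ι] {T : Matrix ι ι ℝ}

theorem trace_one_sub_smul_pow (hT : T.IsHermitian) (c : ℝ) (n : ℕ) :
    trace ((1 - c • T) ^ n) = ∑ k, (1 - c * hT.eigenvalues k) ^ n := by
  let conj := Unitary.conjStarAlgAut ℝ (Matrix ι ι ℝ) hT.eigenvectorUnitary
  have diagonalize : (1 - c • T) ^ n = conj (diagonal fun k => (1 - c * hT.eigenvalues k) ^ n) := by
    have hdiag : (diagonal fun k => (1 - c * hT.eigenvalues k) ^ n) =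
        (1 - c • diagonal hT.eigenvalues) ^ n := by
      rw [← diagonal_one, ← diagonal_smul, diagonal_sub, diagonal_pow]
      rfl
    rw [hdiag, map_pow, map_sub, map_one, map_smul]
    exact congrArg (fun A => (1 - c • A) ^ n) hT.spectral_theorem
  rw [diagonalize, Unitary.conjStarAlgAut_apply, trace_mul_comm, ← Matrix.mul_assoc,
    Unitary.coe_star_mul_self, Matrix.one_mul, trace_diagonal]

theorem one_sub_pow_le_add_log_div_log {x δ : ℝ} (hx_pos : 0 < x) (hx_le : x ≤ 1) (hδ_pos : 0 < δ)
    (hδ_lt : δ < 1) (n : ℕ) : (1 - x) ^ n ≤ (1 - δ) ^ n + Real.log x / Real.log δ := by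
  have log_δ_neg : Real.log δ < 0 := Real.log_neg hδ_pos hδ_lt
  obtain h | h := le_or_gt δ x
  · have pow_le : (1 - x) ^ n ≤ (1 - δ) ^ n := by gcongr
    have log_div_nonneg : 0 ≤ Real.log x / Real.log δ :=
      div_nonneg_of_nonpos (Real.log_nonpos hx_pos.le hx_le) log_δ_neg.le
    linarith
  · have pow_le_one : (1 - x) ^ n ≤ 1 := pow_le_one₀ (by linarith) (by linarith)
    have one_le_log_div : 1 ≤ Real.log x / Real.log δ :=
      (one_le_div_of_neg log_δ_neg).mpr (Real.log_le_log hx_pos h.le)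
    have pow_nonneg : 0 ≤ (1 - δ) ^ n := pow_nonneg (by linarith) _
    linarith

theorem eigenvalues_le_of_sum_abs_le (hT : T.IsHermitian) {B : ℝ} (hB : ∀ i, ∑ j, |T i j| ≤ B)
    (k : ι) : hT.eigenvalues k ≤ B := by
  have eigenvalue : Module.End.HasEigenvalue (toLin' T) (hT.eigenvalues k) := by
    refine Module.End.hasEigenvalue_of_hasEigenvector (x := (hT.eigenvectorBasis k).ofLp) ⟨?_, ?_⟩
    · rw [Module.End.mem_eigenspace_iff, toLin'_apply, hT.mulVec_eigenvectorBasis]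
    · intro h
      exact hT.eigenvectorBasis.orthonormal.ne_zero k (by ext i; exact congrFun h i)
  obtain ⟨i, hi⟩ := eigenvalue_mem_ball eigenvalue
  simp only [Metric.mem_closedBall, Real.dist_eq, Real.norm_eq_abs] at hi
  calc hT.eigenvalues k ≤ T i i + ∑ j ∈ Finset.univ.erase i, |T i j| := by
        linarith [(abs_le.mp hi).2]
    _ ≤ |T i i| + ∑ j ∈ Finset.univ.erase i, |T i j| := by gcongr; exact le_abs_self _
    _ ≤ B := (Finset.add_sum_erase _ _ (Finset.mem_univ i)).trans_le (hB i)

theorem sum_log_eigenvalues_nonneg (hT : T.PosSemidef) (hdet : 1 ≤ T.det) :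
    (∀ k, 0 < hT.1.eigenvalues k) ∧ 0 ≤ ∑ k, Real.log (hT.1.eigenvalues k) := by
  have one_le_prod : 1 ≤ ∏ k, hT.1.eigenvalues k := by
    simpa only [hT.1.det_eq_prod_eigenvalues, RCLike.ofReal_real_eq_id, id_eq] using hdet
  have ne_zero : ∀ k, hT.1.eigenvalues k ≠ 0 := fun k =>
    Finset.prod_ne_zero_iff.mp (zero_lt_one.trans_le one_le_prod).ne' k (Finset.mem_univ k)
  refine ⟨fun k => (hT.eigenvalues_nonneg k).lt_of_ne' (ne_zero k), ?_⟩
  rw [← Real.log_prod fun k _ => ne_zero k]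
  exact Real.log_nonneg one_le_prod

/-- The eigenvalues have product at least `1` and are at most `B`, so that few of them can be
smaller than `B δ`. -/
theorem trace_one_sub_smul_pow_le (hT : T.PosSemidef) {B δ : ℝ} (n : ℕ) (hB_pos : 0 < B)
    (hB : ∀ i, ∑ j, |T i j| ≤ B) (hdet : 1 ≤ T.det) (hδ_pos : 0 < δ) (hδ_lt : δ < 1) :
    trace ((1 - B⁻¹ • T) ^ n) ≤
      Fintype.card ι * ((1 - δ) ^ n + Real.log B / -Real.log δ) := by
  obtain ⟨eigenvalues_pos, sum_log_nonneg⟩ := sum_log_eigenvalues_nonneg hT hdet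
  have log_δ_neg : Real.log δ < 0 := Real.log_neg hδ_pos hδ_lt
  have eigenvalue_bound : ∀ k, (1 - B⁻¹ * hT.1.eigenvalues k) ^ n ≤
      (1 - δ) ^ n + (Real.log B - Real.log (hT.1.eigenvalues k)) / -Real.log δ := by
    intro k
    refine (one_sub_pow_le_add_log_div_log (mul_pos (inv_pos.mpr hB_pos) (eigenvalues_pos k)) ?_
      hδ_pos hδ_lt n).trans_eq ?_
    · rw [inv_mul_le_iff₀ hB_pos, mul_one]
      exact eigenvalues_le_of_sum_abs_le hT.1 hB k
    · rw [Real.log_mul (inv_ne_zero hB_pos.ne') (eigenvalues_pos k).ne', Real.log_inv,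
        ← neg_div_neg_eq]
      ring_nf
  calc trace ((1 - B⁻¹ • T) ^ n) = ∑ k, (1 - B⁻¹ * hT.1.eigenvalues k) ^ n :=
        trace_one_sub_smul_pow hT.1 _ _
    _ ≤ ∑ k, ((1 - δ) ^ n + (Real.log B - Real.log (hT.1.eigenvalues k)) / -Real.log δ) :=
        Finset.sum_le_sum fun k _ => eigenvalue_bound k
    _ = Fintype.card ι * (1 - δ) ^ n +
          (Fintype.card ι * Real.log B - ∑ k, Real.log (hT.1.eigenvalues k)) / -Real.log δ := by
        rw [Finset.sum_add_distrib, ← Finset.sum_div, Finset.sum_sub_distrib]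
        simp only [Finset.sum_const, Finset.card_univ, nsmul_eq_mul]
    _ ≤ Fintype.card ι * (1 - δ) ^ n + Fintype.card ι * Real.log B / -Real.log δ := by
        gcongr
        · linarith
        · linarith
    _ = Fintype.card ι * ((1 - δ) ^ n + Real.log B / -Real.log δ) := by ring

end Spectral

section GramDeterminant

variable {ι κ : Type*} [Fintype ι] {p : ℕ}

/-- A nonzero integral solution of `v R = 0` can be divided by the greatest common divisor of its
entries, and then it does not vanish modulo `p`. -/
theorem eq_zero_of_vecMul_eq_zero_of_modp (hp : p.Prime) {R : Matrix ι κ ℤ}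
    (hR : ∀ v : ι → ZMod p, v ᵥ* R.map (Int.castRingHom (ZMod p)) = 0 → v = 0) {v : ι → ℤ}
    (hv : v ᵥ* R = 0) : v = 0 := by
  by_contra hv_ne
  obtain ⟨i₀, hi₀⟩ := Function.ne_iff.mp hv_ne
  obtain ⟨g, v_eq, gcd_g⟩ := Finset.extract_gcd v ⟨i₀, Finset.mem_univ i₀⟩
  have gcd_ne : Finset.univ.gcd v ≠ 0 := fun h =>
    hi₀ (Finset.gcd_eq_zero_iff.mp h i₀ (Finset.mem_univ i₀))
  have v_eq_smul : v = Finset.univ.gcd v • g := funext fun i => v_eq i (Finset.mem_univ i)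
  have hg : g ᵥ* R = 0 := by
    rw [v_eq_smul, smul_vecMul] at hv
    exact (smul_eq_zero.mp hv).resolve_left gcd_ne
  have g_modp : (Int.castRingHom (ZMod p)) ∘ g = 0 :=
    hR _ (funext fun j => by rw [← RingHom.map_vecMul, hg]; exact map_zero _)
  have p_dvd : (p : ℤ) ∣ 1 := gcd_g ▸ Finset.dvd_gcd fun i _ =>
    (ZMod.intCast_zmod_eq_zero_iff_dvd _ _).mp (congrFun g_modp i)
  exact hp.one_lt.ne' (Int.natCast_dvd_natCast.mp p_dvd |> Nat.dvd_one.mp)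

theorem det_mul_transpose_ne_zero_of_modp [DecidableEq ι] [Fintype κ] (hp : p.Prime)
    {R : Matrix ι κ ℤ} (hR : ∀ v : ι → ZMod p, v ᵥ* R.map (Int.castRingHom (ZMod p)) = 0 → v = 0) :
    (R * Rᵀ).det ≠ 0 := by
  intro det_eq_zero
  obtain ⟨v, v_ne, hv⟩ := exists_vecMul_eq_zero_iff.mpr det_eq_zero
  rw [← conjTranspose_eq_transpose_of_trivial, vecMul_self_mul_conjTranspose_eq_zero] at hv
  exact v_ne (eq_zero_of_vecMul_eq_zero_of_modp hp hR hv)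

theorem one_le_det_mul_transpose_of_ne_zero [DecidableEq ι] [Fintype κ] {R : Matrix ι κ ℤ}
    (hR : (R * Rᵀ).det ≠ 0) :
    1 ≤ (R.map (Int.castRingHom ℝ) * (R.map (Int.castRingHom ℝ))ᵀ).det := by
  have cast_det : (R.map (Int.castRingHom ℝ) * (R.map (Int.castRingHom ℝ))ᵀ).det =
      ((R * Rᵀ).det : ℝ) := by
    rw [← transpose_map, ← Matrix.map_mul]
    exact ((Int.castRingHom ℝ).map_det (R * Rᵀ)).symm
  have det_nonneg : 0 ≤ (R * Rᵀ).det := by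
    have gram_nonneg := (posSemidef_self_mul_conjTranspose (R.map (Int.castRingHom ℝ))).det_nonneg
    rw [conjTranspose_eq_transpose_of_trivial, cast_det] at gram_nonneg
    exact_mod_cast gram_nonneg
  rw [cast_det]
  exact_mod_cast det_nonneg.lt_of_ne' hR

end GramDeterminant

section Augmentation

/-- The augmentation of the group ring `k[F]`. -/
noncomputable def augmentation (k F : Type*) [CommRing k] [Group F] : k[F] →ₐ[k] k :=
  MonoidAlgebra.lift k k F 1

variable {k F : Type*} [CommRing k] [Group F]

theorem augmentation_apply (a : k[F]) : augmentation k F a = a.coeff.sum fun _ c => c := by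
  simp [augmentation, MonoidAlgebra.lift_apply]

theorem augmentation_mapRingHom {k' : Type*} [CommRing k'] (φ : k →+* k') (a : k[F]) :
    augmentation k' F (MonoidAlgebra.mapRingHom F φ a) = φ (augmentation k F a) := by
  induction a using MonoidAlgebra.induction_linear with
  | zero => simp
  | add a b ha hb => simp only [map_add, ha, hb]
  | single f c => simp [augmentation]

end Augmentation

section KernelModP

variable {p : ℕ} [Fact p.Prime] {G : Type*} [Group G]

theorem exists_ne_zero_forall_smul_eq {V : Type*} [AddCommGroup V] [Module (ZMod p) V] [Finite V]
    [Nontrivial V] [DistribMulAction G V] (hG : IsPGroup p G) :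
    ∃ v : V, v ≠ 0 ∧ ∀ g : G, g • v = v := by
  have p_dvd_card : p ∣ Nat.card V := by
    rw [Module.natCard_eq_pow_finrank (K := ZMod p), Nat.card_zmod]
    exact dvd_pow_self _ Module.finrank_pos.ne'
  obtain ⟨v, fixed, v_ne⟩ :=
    hG.exists_fixed_point_of_prime_dvd_card_of_fixed_point V p_dvd_card (a := 0) smul_zero
  exact ⟨v, v_ne.symm, fixed⟩

variable {F Q s t : Type*} [Group F] [Fintype Q] [DecidableEq Q] [MulAction F Q] [MulAction G Q]
  [Fintype s]

theorem vecMul_blockRep_comp_smul [SMulCommClass G F Q] {k : Type*} [CommRing k]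
    (A : Matrix s t k[F]) (v : s × Q → k) (g : G) (j : t) (q : Q) :
    ((fun x => v (x.1, g • x.2)) ᵥ* blockRep Q A) (j, q) = (v ᵥ* blockRep Q A) (j, g • q) := by
  simp only [vecMul_blockRep, smul_comm g]

theorem eq_zero_of_vecMul_blockRep_eq_zero [SMulCommClass G F Q] [MulAction.IsPretransitive G Q]
    (hG : IsPGroup p G) {A : Matrix s t (ZMod p)[F]}
    (hA : ∀ β : s → ZMod p, β ᵥ* A.map (augmentation (ZMod p) F) = 0 → β = 0)
    {v : s × Q → ZMod p} (hv : v ᵥ* blockRep Q A = 0) : v = 0 := by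
  let W : Submodule (ZMod p) (s × Q → ZMod p) := LinearMap.ker (vecMulLinear (blockRep Q A))
  let _ : DistribMulAction G W :=
    { smul g w := ⟨fun x => w.1 (x.1, g⁻¹ • x.2), by
        ext ⟨j, q⟩
        exact (vecMul_blockRep_comp_smul A w.1 g⁻¹ j q).trans (congrFun w.2 _)⟩
      one_smul w := by ext x; exact congrArg (fun q => w.1 (x.1, q)) (by simp)
      mul_smul g h w := by ext x; exact congrArg (fun q => w.1 (x.1, q)) (by simp [mul_smul])
      smul_zero g := rfl
      smul_add g w w' := rfl }
  by_contra hv_ne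
  have : Nontrivial W := ⟨⟨⟨v, hv⟩, 0, fun h => hv_ne (congrArg Subtype.val h)⟩⟩
  obtain ⟨w, w_ne, fixed⟩ := exists_ne_zero_forall_smul_eq (V := W) hG
  have const : ∀ i q r, w.1 (i, q) = w.1 (i, r) := by
    intro i q r
    obtain ⟨g, hg⟩ := MulAction.exists_smul_eq G r q
    rw [← hg, ← congrArg (fun w : W => w.1 (i, g • r)) (fixed g)]
    exact congrArg (fun q => w.1 (i, q)) (inv_smul_smul g r)
  refine w_ne (Subtype.ext (funext fun ⟨i, q⟩ => ?_))
  refine congrFun (hA (fun i => w.1 (i, q)) (funext fun j => ?_)) i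
  have hw : (w.1 ᵥ* blockRep Q A) (j, q) = 0 := congrFun w.2 (j, q)
  simp only [vecMul_blockRep, const _ _ q, mul_comm _ (w.1 _), ← Finsupp.mul_sum] at hw
  simpa only [vecMul, dotProduct, Matrix.map_apply, augmentation_apply, Pi.zero_apply] using hw

end KernelModP

section SmallKernel

theorem exists_fixedPointFree_quotient {F : Type*} [Group F] {p : ℕ}
    (hF : IsResiduallyFiniteP p F) (S : Finset F) :
    ∃ (N : Subgroup F) (_ : N.Normal),
      N.FiniteIndex ∧ IsPGroup p (F ⧸ N) ∧ FixedPointFree S (F ⧸ N) := by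
  classical
  obtain ⟨N, normal, finiteIndex, hN, avoids⟩ := exists_normal_isPGroup_forall_notMem (p := p)
    (S := S.erase 1) fun f hf => hF f (Finset.ne_of_mem_erase hf)
  refine ⟨N, normal, finiteIndex, hN, fun f hf f_ne q h => ?_⟩
  obtain ⟨g, rfl⟩ := QuotientGroup.mk_surjective q
  refine avoids f (Finset.mem_erase.mpr ⟨f_ne, hf⟩) ((QuotientGroup.eq_one_iff f).mp ?_)
  exact mul_eq_right.mp (show (f : F ⧸ N) * (g : F ⧸ N) = g from h)

variable {F Q s t : Type*} [Group F] [MulAction F Q] [Fintype Q] [DecidableEq Q] [Fintype s]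
  [Fintype t]

theorem trace_blockRep {M : Matrix s s ℝ[F]} (hQ : FixedPointFree (diagSupport M) Q) :
    trace (blockRep Q M) = vnTrace M * Fintype.card Q :=
  sum_blockRep_diag hQ Finset.univ

omit [Fintype s] in
theorem exists_sum_abs_blockRep_le [Finite s] (M : Matrix s t ℝ[F]) :
    ∃ B : ℝ, 1 ≤ B ∧ ∀ (Q : Type*) [MulAction F Q] [Fintype Q] [DecidableEq Q] (x : s × Q),
      ∑ y, |blockRep Q M x y| ≤ B := by
  let norm (i : s) (j : t) : ℝ := (M i j).coeff.sum fun _ c => |c|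
  obtain ⟨B, hB⟩ := (Set.finite_range fun i => ∑ j, norm i j).bddAbove
  refine ⟨max 1 B, le_max_left 1 B, fun Q _ _ _ ⟨i, q⟩ => ?_⟩
  calc ∑ y, |blockRep Q M (i, q) y| = ∑ j, ∑ r, |permRep ℝ F Q (M i j) q r| :=
        Fintype.sum_prod_type _
    _ ≤ ∑ j, norm i j := Finset.sum_le_sum fun j _ => sum_abs_permRep_le (M i j) q
    _ ≤ B := hB ⟨i, rfl⟩
    _ ≤ max 1 B := le_max_right 1 B

theorem vnTrace_defect_pow_le [Nonempty Q] [DecidableEq s] {A : Matrix s t ℝ[F]} {B δ : ℝ} {n : ℕ}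
    (hQ : FixedPointFree (diagSupport (defect A B ^ n)) Q) (hB_pos : 0 < B)
    (hB : ∀ x : s × Q, ∑ y, |blockRep Q (A * adjoint A) x y| ≤ B)
    (hdet : 1 ≤ (blockRep Q A * (blockRep Q A)ᵀ).det) (hδ_pos : 0 < δ) (hδ_lt : δ < 1) :
    vnTrace (defect A B ^ n) ≤ Fintype.card s * ((1 - δ) ^ n + Real.log B / -Real.log δ) := by
  have psd : (blockRep Q A * (blockRep Q A)ᵀ).PosSemidef := by
    rw [← conjTranspose_eq_transpose_of_trivial]
    exact posSemidef_self_mul_conjTranspose _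
  rw [blockRep_mul, blockRep_adjoint] at hB
  have trace_le := trace_one_sub_smul_pow_le psd n hB_pos hB hdet hδ_pos hδ_lt
  rw [← blockRep_defect_pow, trace_blockRep hQ, Fintype.card_prod, Nat.cast_mul, mul_right_comm]
    at trace_le
  exact le_of_mul_le_mul_right trace_le (Nat.cast_pos.mpr Fintype.card_pos)

theorem exists_one_sub_pow_add_div_log_le {C L η : ℝ} (hC : 0 ≤ C) (hL : 0 ≤ L) (hη : 0 < η) :
    ∃ δ : ℝ, 0 < δ ∧ δ < 1 ∧ ∃ r : ℕ, C * ((1 - δ) ^ (2 * r) + L / -Real.log δ) ≤ η := by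
  let z := 2 * C * L / η + 1
  have z_pos : 0 < z := by positivity
  have log_term : C * (L / z) ≤ η / 2 := by
    rw [mul_div_assoc', div_le_iff₀ z_pos,
      show η / 2 * z = C * L + η / 2 by simp only [z]; field_simp]
    linarith
  have exp_lt_one : Real.exp (-z) < 1 := Real.exp_lt_one_iff.mpr (neg_neg_of_pos z_pos)
  have pow_tendsto : Filter.Tendsto (fun r : ℕ => C * ((1 - Real.exp (-z)) ^ 2) ^ r) Filter.atTop
      (nhds 0) := by
    rw [← mul_zero C]
    refine (tendsto_pow_atTop_nhds_zero_of_lt_one (sq_nonneg _) ?_).const_mul C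
    exact pow_lt_one₀ (by linarith) (by linarith [Real.exp_pos (-z)]) two_ne_zero
  obtain ⟨r, hr⟩ := (pow_tendsto.eventually_le_const (half_pos hη)).exists
  refine ⟨Real.exp (-z), Real.exp_pos _, exp_lt_one, r, ?_⟩
  rw [Real.log_exp, neg_neg, mul_add, pow_mul]
  linarith

omit [Fintype t] in
theorem hasSmallKernel_of_augmentation_injective [Finite t] {F : Type u} [Group F]
    {p : ℕ} [Fact p.Prime] (hF : IsResiduallyFiniteP p F) {A : Matrix s t ℤ[F]}
    (hA : ∀ β : s → ZMod p, β ᵥ* A.map (fun a => (augmentation ℤ F a : ZMod p)) = 0 → β = 0)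
    {η : ℝ} (hη : 0 < η) :
    HasSmallKernel (A.map (MonoidAlgebra.mapRingHom F (Int.castRingHom ℝ))) η := by
  classical
  let _ := Fintype.ofFinite t
  set Aℝ := A.map (MonoidAlgebra.mapRingHom F (Int.castRingHom ℝ))
  obtain ⟨B, one_le_B, hB⟩ := exists_sum_abs_blockRep_le.{_, _, _, u} (Aℝ * adjoint Aℝ)
  obtain ⟨δ, δ_pos, δ_lt, r, hr⟩ := exists_one_sub_pow_add_div_log_le
    (Nat.cast_nonneg (Fintype.card s)) (Real.log_nonneg one_le_B) hη
  refine hasSmallKernel_of_vnTrace_le (B := B) (r := r) (le_trans ?_ hr)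
  obtain ⟨N, _, _, hN, free⟩ :=
    exists_fixedPointFree_quotient hF (diagSupport (defect Aℝ B ^ (2 * r)))
  let _ := Fintype.ofFinite (F ⧸ N)
  have : SMulCommClass (F ⧸ N)ᵐᵒᵖ F (F ⧸ N) := by
    refine ⟨fun g f q => ?_⟩
    obtain ⟨h, rfl⟩ := QuotientGroup.mk_surjective q
    exact mul_assoc (f : F ⧸ N) h g.unop
  have hR : ∀ v : s × (F ⧸ N) → ZMod p,
      v ᵥ* (blockRep (F ⧸ N) A).map (Int.castRingHom (ZMod p)) = 0 → v = 0 := by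
    intro v hv
    rw [map_blockRep] at hv
    refine eq_zero_of_vecMul_blockRep_eq_zero (hN.of_equiv (MulEquiv.inv' (F ⧸ N))) ?_ hv
    intro β hβ
    refine hA β ?_
    rw [Matrix.map_map] at hβ
    simpa only [Function.comp_def, augmentation_mapRingHom, Int.coe_castRingHom] using hβ
  have hdet := one_le_det_mul_transpose_of_ne_zero
    (det_mul_transpose_ne_zero_of_modp Fact.out hR)
  rw [map_blockRep] at hdet
  exact vnTrace_defect_pow_le free (zero_lt_one.trans_le one_le_B) (hB (F ⧸ N)) hdet δ_pos δ_lt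

end SmallKernel

/-! ### Derivations, Fox matrices and relations -/

section Derivations

variable {k F Q J s : Type*} [CommRing k] [Group F] [MulAction F Q]

/-- `D` restricts to a derivation (crossed homomorphism) from `P` to the module of functions
`Q → k`. Its values outside `P` are arbitrary. -/
def IsDerivationOn (P : Subgroup F) (D : F → Q → k) : Prop :=
  ∀ a ∈ P, ∀ b ∈ P, ∀ q, D (a * b) q = D a q + D b (a⁻¹ • q)

variable {P P' : Subgroup F} {D : F → Q → k}

theorem IsDerivationOn.mono (h : P ≤ P') (hD : IsDerivationOn P' D) : IsDerivationOn P D :=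
  fun a ha b hb => hD a (h ha) b (h hb)

theorem IsDerivationOn.map_one (hD : IsDerivationOn P D) (q : Q) : D 1 q = 0 := by
  simpa using hD 1 P.one_mem 1 P.one_mem q

theorem exists_isDerivationOn {κ : Type*} (b : FreeGroupBasis κ P) (V : κ → Q → k) :
    ∃ D : F → Q → k, IsDerivationOn P D ∧ ∀ i, D (b i) = V i := by
  classical
  let g (z : P) (i : κ) (q : Q) : k := V i (z⁻¹ • q)
  have edgeIntegral_mul (x z : P) (q : Q) :
      edgeIntegral b g (x * z) q = edgeIntegral b g x q + edgeIntegral b g z (x⁻¹ • q) := by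
    let translateBy : (Q → k) →+ (Q → k) :=
      { toFun v q := v (x⁻¹ • q)
        map_zero' := rfl
        map_add' _ _ := rfl }
    refine congrFun (edgeIntegral_mul_left b (g := g) (φ := translateBy) (fun z i => ?_) z) q
    funext q
    simp only [g, translateBy, AddMonoidHom.coe_mk, ZeroHom.coe_mk, _root_.mul_inv_rev, mul_smul]
  refine ⟨fun f => if h : f ∈ P then edgeIntegral b g ⟨f, h⟩ else 0, fun x hx z hz q => ?_,
    fun i => ?_⟩
  · simp only [dif_pos hx, dif_pos hz, dif_pos (P.mul_mem hx hz)]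
    exact edgeIntegral_mul ⟨x, hx⟩ ⟨z, hz⟩ q
  · have eval := edgeIntegral_mul_basis b g 1 i
    rw [one_mul, edgeIntegral_one, zero_add] at eval
    simp only [SetLike.coe_mem, dif_pos, Subtype.coe_eta, eval]
    funext q
    simp only [g, inv_one, one_smul]

end Derivations

section FoxMatrix

variable {k F Q J s : Type*} [CommRing k] [Group F] [Fintype s]

/-- `A` is a matrix of Fox derivatives of the family `l` with respect to the family `y`: its
entries are supported on `P` and satisfy the fundamental formula `∑ A i a (y a - 1) = l i - 1`. -/
structure IsFoxMatrix (P : Subgroup F) (y : s → F) (l : J → F) (A : Matrix J s k[F]) : Prop where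
  sum_mul_sub_one : ∀ i,
    ∑ a, A i a * (MonoidAlgebra.single (y a) 1 - 1) = MonoidAlgebra.single (l i) 1 - 1
  mem_of_mem_support : ∀ {i a f}, f ∈ (A i a).coeff.support → f ∈ P

omit [Fintype s] in
theorem exists_sum_mul_single_sub_one {κ : Type*} {y : κ → F} {w : F}
    (hw : w ∈ Subgroup.closure (Set.range y)) :
    ∃ c : κ →₀ k[F], (c.sum fun a x => x * (MonoidAlgebra.single (y a) 1 - 1)) =
      MonoidAlgebra.single w 1 - 1 := by
  let fox : (κ →₀ k[F]) →ₗ[k[F]] k[F] :=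
    Finsupp.linearCombination k[F] fun a => MonoidAlgebra.single (y a) 1 - 1
  suffices h : MonoidAlgebra.single w 1 - 1 ∈ fox.range from h
  induction hw using Subgroup.closure_induction with
  | mem w hw =>
    obtain ⟨a, rfl⟩ := hw
    exact ⟨Finsupp.single a 1, by simp [fox]⟩
  | one => exact ⟨0, by simp [MonoidAlgebra.one_def]⟩
  | mul v w _ _ hv hw =>
    convert add_mem hv (fox.range.smul_mem (MonoidAlgebra.single v 1) hw) using 1
    simp [mul_sub, MonoidAlgebra.single_mul_single]
  | inv w _ hw =>
    convert fox.range.smul_mem (-MonoidAlgebra.single w⁻¹ 1) hw using 1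
    simp [mul_sub, MonoidAlgebra.single_mul_single, MonoidAlgebra.one_def, neg_add_eq_sub]

omit [Fintype s] in
variable (k) in
theorem exists_isFoxMatrix [Finite J] {κ : Type*} {P : Subgroup F} {y : κ → P}
    (hy : Subgroup.closure (Set.range y) = ⊤) {l : J → F} (hl : ∀ i, l i ∈ P) :
    ∃ (s : Finset κ) (A : Matrix J s k[F]), IsFoxMatrix P (fun a : s => (y a : F)) l A := by
  classical
  have := Fintype.ofFinite J
  choose c hc using fun i => exists_sum_mul_single_sub_one (k := k) (y := y) (w := ⟨l i, hl i⟩)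
    (hy ▸ Subgroup.mem_top _)
  let incl := MonoidAlgebra.mapDomainRingHom k P.subtype
  let s := Finset.univ.biUnion fun i => (c i).support
  refine ⟨s, Matrix.of fun i a => incl (c i a), fun i => ?_, fun {i a f} hf => ?_⟩
  · have sum_eq := congrArg incl (hc i)
    rw [Finsupp.sum_of_support_subset (c i)
      (Finset.subset_biUnion_of_mem (fun i => (c i).support) (Finset.mem_univ i))
      (fun a x => x * (MonoidAlgebra.single (y a) 1 - 1)) (fun _ _ => zero_mul _),
      ← Finset.sum_coe_sort] at sum_eq
    have incl_single (p : P) : incl (MonoidAlgebra.single p 1) = MonoidAlgebra.single (p : F) 1 :=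
      MonoidAlgebra.mapDomain_single
    simpa only [map_sum, map_mul, map_sub, map_one, incl_single, of_apply] using sum_eq
  · obtain ⟨p, -, rfl⟩ := Finset.mem_image.mp (Finsupp.mapDomain_support hf)
    exact p.2

variable {P P' : Subgroup F} {y : s → F} {l : J → F} {A : Matrix J s k[F]}

theorem IsFoxMatrix.map_coeff {k' : Type*} [CommRing k'] (hA : IsFoxMatrix P y l A)
    (φ : k →+* k') : IsFoxMatrix P y l (A.map (MonoidAlgebra.mapRingHom F φ)) where
  sum_mul_sub_one i := by
    simpa using congrArg (MonoidAlgebra.mapRingHom F φ) (hA.sum_mul_sub_one i)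
  mem_of_mem_support {i a f} hf := by
    refine hA.mem_of_mem_support (i := i) (a := a) (Finsupp.mem_support_iff.mpr fun h => ?_)
    simp [h] at hf

theorem IsFoxMatrix.map_group {G : Type*} [Group G] (hA : IsFoxMatrix P y l A) (ψ : F →* G) :
    IsFoxMatrix ⊤ (fun a => ψ (y a)) (fun i => ψ (l i))
      (A.map (MonoidAlgebra.mapDomainRingHom k ψ)) where
  sum_mul_sub_one i := by
    simpa only [map_sum, map_mul, map_sub, map_one, MonoidAlgebra.mapDomainRingHom_apply,
      MonoidAlgebra.mapDomain_single, Matrix.map_apply]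
      using congrArg (MonoidAlgebra.mapDomainRingHom k ψ) (hA.sum_mul_sub_one i)
  mem_of_mem_support _ := Subgroup.mem_top _

theorem IsFoxMatrix.sub_eq_sum {W : Type*} [AddCommGroup W] [Module k W]
    (hA : IsFoxMatrix P y l A) (E : F → W) (i : J) :
    E (l i) - E 1 = ∑ a, (A i a).coeff.sum fun f c => c • (E (f * y a) - E f) := by
  let ext : k[F] →ₗ[k] W := Finsupp.linearCombination k E ∘ₗ
    (MonoidAlgebra.coeffLinearEquiv k).toLinearMap
  have ext_single (f : F) (c : k) : ext (MonoidAlgebra.single f c) = c • E f := by simp [ext]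
  have ext_mul (x : k[F]) (a : s) : ext (x * (MonoidAlgebra.single (y a) 1 - 1)) =
      x.coeff.sum fun f c => c • (E (f * y a) - E f) := by
    induction x using MonoidAlgebra.induction_linear with
    | zero => simp
    | add x x' hx hx' =>
      rw [add_mul, map_add, hx, hx', MonoidAlgebra.coeff_add, Finsupp.sum_add_index' (by simp)]
      exact fun _ _ _ => add_smul _ _ _
    | single f c =>
      rw [mul_sub, mul_one, MonoidAlgebra.single_mul_single, map_sub, ext_single, ext_single,
        mul_one, MonoidAlgebra.coeff_single, Finsupp.sum_single_index (by rw [zero_smul]), smul_sub]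
  have applied := congrArg ext (hA.sum_mul_sub_one i)
  rw [map_sum, map_sub, MonoidAlgebra.one_def, ext_single, ext_single, one_smul, one_smul]
    at applied
  simp only [← ext_mul, ← applied, MonoidAlgebra.one_def]

variable [MulAction F Q] [Fintype Q] [DecidableEq Q]

theorem blockRep_mulVec (M : Matrix J s k[F]) (v : s × Q → k) (i : J) (q : Q) :
    (blockRep Q M *ᵥ v) (i, q) = ∑ a, (M i a).coeff.sum fun f c => c * v (a, f⁻¹ • q) := by
  simp only [mulVec, dotProduct, Fintype.sum_prod_type, blockRep_apply, permRep_apply, Finsupp.sum,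
    Finset.sum_mul, ite_mul, zero_mul]
  refine Finset.sum_congr rfl fun a _ => ?_
  rw [Finset.sum_comm]
  simp only [Finset.sum_ite_eq, Finset.mem_univ, if_true]

theorem IsFoxMatrix.apply_eq_mulVec (hA : IsFoxMatrix P y l A) (hy : ∀ a, y a ∈ P) {D : F → Q → k}
    (hD : IsDerivationOn P D) :
    (fun x : J × Q => D (l x.1) x.2) = blockRep Q A *ᵥ fun x => D (y x.1) x.2 := by
  funext ⟨i, q⟩
  have expand := hA.sub_eq_sum (fun f => D f q) i
  rw [hD.map_one, sub_zero] at expand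
  rw [blockRep_mulVec, expand]
  refine Finset.sum_congr rfl fun a _ => Finsupp.sum_congr fun f hf => ?_
  rw [hD f (hA.mem_of_mem_support hf) _ (hy a), add_sub_cancel_left, smul_eq_mul]

end FoxMatrix

section Relations

variable {F Q J s : Type*} [Group F] [MulAction F Q] [Fintype Q] [Fintype J]

/-- `d` is a linear relation satisfied by the values on the family `l` of all derivations from `P`
to `Q → ℝ`. -/
def IsRelation (l : J → F) (P : Subgroup F) (d : J × Q → ℝ) : Prop :=
  ∀ D : F → Q → ℝ, IsDerivationOn P D → (d ⬝ᵥ fun x => D (l x.1) x.2) = 0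

/-- The space of relations on `l` over `P` that are supported over `I ⊆ Q`. -/
def relations (l : J → F) (P : Subgroup F) (I : Finset Q) : Submodule ℝ (J × Q → ℝ) where
  carrier := {d | (∀ i, ∀ q ∉ I, d (i, q) = 0) ∧ IsRelation l P d}
  zero_mem' := ⟨fun _ _ _ => rfl, fun _ _ => zero_dotProduct _⟩
  add_mem' := fun ⟨hd, hd'⟩ ⟨he, he'⟩ =>
    ⟨fun i q hq => by simp only [Pi.add_apply, hd i q hq, he i q hq, add_zero],
      fun D hD => by rw [add_dotProduct, hd' D hD, he' D hD, add_zero]⟩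
  smul_mem' := fun c _ ⟨hd, hd'⟩ =>
    ⟨fun i q hq => by simp only [Pi.smul_apply, hd i q hq, smul_zero],
      fun D hD => by rw [smul_dotProduct, hd' D hD, smul_zero]⟩

variable {l : J → F} {P P' : Subgroup F} {d : J × Q → ℝ}

theorem relations_mono (h : P ≤ P') (I : Finset Q) : relations l P I ≤ relations l P' I :=
  fun _ hd => ⟨hd.1, fun D hD => hd.2 D (hD.mono h)⟩

variable [DecidableEq Q] [Fintype s] {y : s → F} {A : Matrix J s ℝ[F]}

theorem IsFoxMatrix.isRelation_of_vecMul_eq_zero (hA : IsFoxMatrix P y l A) (hy : ∀ a, y a ∈ P)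
    (hd : d ᵥ* blockRep Q A = 0) : IsRelation l P d := by
  intro D hD
  rw [hA.apply_eq_mulVec hy hD, dotProduct_mulVec, hd, zero_dotProduct]

omit [Fintype s] in
theorem IsFoxMatrix.vecMul_eq_zero_of_isRelation {κ : Type*} {b : FreeGroupBasis κ P}
    {s : Finset κ} {A : Matrix J s ℝ[F]} (hA : IsFoxMatrix P (fun a : s => (b a : F)) l A)
    (hd : IsRelation l P d) : d ᵥ* blockRep Q A = 0 := by
  classical
  refine dotProduct_eq_zero _ fun w => ?_
  obtain ⟨D, hD, hV⟩ := exists_isDerivationOn b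
    fun a q => if h : a ∈ s then w (⟨a, h⟩, q) else 0
  have w_eq : (fun x : s × Q => D (b x.1) x.2) = w := by
    funext x
    simp only [hV, SetLike.coe_mem, dif_pos, Subtype.coe_eta]
  rw [← w_eq, ← dotProduct_mulVec, ← hA.apply_eq_mulVec (fun a => (b a).2) hD, hd D hD]

end Relations

/-! ### Reduction of relations to a subgroup -/

section RelationsReduceTo

variable {F : Type u} {J : Type*} [Group F] [Fintype J]

/-- Restricting derivations from `P` to `P'` creates few new relations on the family `l`: at most
`ε |I|` dimensions over `I ⊆ Q`, for every finite `F`-set `Q` on which the elements of a finite set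
depending only on `ε` act without fixed points. -/
def RelationsReduceTo (l : J → F) (P P' : Subgroup F) : Prop :=
  ∀ ε : ℝ, 0 < ε → ∃ S : Finset F, ∀ (Q : Type u) [MulAction F Q] [Fintype Q],
    FixedPointFree S Q → ∀ I : Finset Q,
      (finrank ℝ (relations l P I) : ℝ) ≤ finrank ℝ (relations l P' I) + ε * I.card

variable {l : J → F} {P P' P'' : Subgroup F}

theorem RelationsReduceTo.refl (l : J → F) (P : Subgroup F) : RelationsReduceTo l P P :=
  fun ε hε => ⟨∅, fun Q _ _ _ I => le_add_of_nonneg_right (by positivity)⟩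

theorem RelationsReduceTo.trans (h : RelationsReduceTo l P P') (h' : RelationsReduceTo l P' P'') :
    RelationsReduceTo l P P'' := by
  classical
  intro ε hε
  obtain ⟨S, hS⟩ := h (ε / 2) (half_pos hε)
  obtain ⟨S', hS'⟩ := h' (ε / 2) (half_pos hε)
  refine ⟨S ∪ S', fun Q _ _ hQ I => ?_⟩
  have bound := hS Q (fun f hf => hQ f (Finset.mem_union_left _ hf)) I
  have bound' := hS' Q (fun f hf => hQ f (Finset.mem_union_right _ hf)) I
  linarith

open Classical in
/-- The group elements occurring in the entries of a matrix over the group ring. -/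
noncomputable def entrySupport {k s : Type*} [CommRing k] [Fintype s] (M : Matrix J s k[F]) :
    Finset F :=
  Finset.univ.biUnion fun x : J × s => (M x.1 x.2).coeff.support

theorem vecMul_blockRep_eq_zero_of_smul_notMem {k s Q : Type*} [CommRing k] [MulAction F Q]
    [Fintype Q] [DecidableEq Q] {M : Matrix J s k[F]} {d : J × Q → k} {I : Finset Q}
    (hd : ∀ i, ∀ q ∉ I, d (i, q) = 0) {a : s} {q : Q}
    (hq : ∀ i, ∀ f ∈ (M i a).coeff.support, f • q ∉ I) : (d ᵥ* blockRep Q M) (a, q) = 0 := by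
  rw [vecMul_blockRep]
  refine Finset.sum_eq_zero fun i _ => Finset.sum_eq_zero fun f hf => ?_
  simp only [hd i _ (hq i f hf), mul_zero]

theorem vecMul_blockRep_eq_zero_of_invariant {k s Q : Type*} [CommRing k] [MulAction F Q]
    [Fintype Q] [DecidableEq Q] {M : Matrix J s k[F]}
    (hM : ∀ i a, ∀ f ∈ (M i a).coeff.support, f ∈ P) {I : Finset Q}
    (hI : ∀ f ∈ P, ∀ q ∈ I, f • q ∈ I) {d : J × Q → k} (hd : ∀ i, ∀ q ∉ I, d (i, q) = 0) (a : s)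
    {q : Q} (hq : q ∉ I) : (d ᵥ* blockRep Q M) (a, q) = 0 :=
  vecMul_blockRep_eq_zero_of_smul_notMem hd fun i f hf mem =>
    hq (inv_smul_smul f q ▸ hI _ (P.inv_mem (hM i a f hf)) _ mem)

open Classical in
theorem relationsReduceTo_of_hasSmallKernel {s : Type*} [Fintype s] (M : Matrix J s ℝ[F])
    (isRelation : ∀ (Q : Type u) [MulAction F Q] [Fintype Q] (d : J × Q → ℝ),
      d ᵥ* blockRep Q M = 0 → IsRelation l P' d)
    (smallKernel : ∀ η : ℝ, 0 < η → ∃ (t : Type v) (A : Matrix s t ℝ[F]), HasSmallKernel A η ∧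
      ∀ (Q : Type u) [MulAction F Q] [Fintype Q] (d : J × Q → ℝ), IsRelation l P d →
        d ᵥ* blockRep Q (M * A) = 0) :
    RelationsReduceTo l P P' := by
  intro ε hε
  obtain ⟨t, A, ⟨S, hS⟩, mul_eq_zero⟩ :=
    smallKernel (ε / ((entrySupport M).card + 1)) (by positivity)
  refine ⟨S, fun Q _ _ hQ I => ?_⟩
  let image : relations l P I →ₗ[ℝ] s × Q → ℝ :=
    (vecMulLinear (blockRep Q M)).domRestrict (relations l P I)
  have ker_le : finrank ℝ (LinearMap.ker image) ≤ finrank ℝ (relations l P' I) := by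
    rw [LinearEquiv.finrank_eq (Submodule.equivSubtypeMap (relations l P I) (LinearMap.ker image))]
    refine Submodule.finrank_mono ?_
    rintro _ ⟨d, hd, rfl⟩
    exact ⟨d.2.1, isRelation Q d hd⟩
  have range_le : (finrank ℝ (LinearMap.range image) : ℝ) ≤ ε * I.card := by
    have card_le : (((entrySupport M)⁻¹ • I).card : ℝ) ≤ (entrySupport M).card * I.card :=
      mod_cast Finset.card_inv (entrySupport M) ▸ Finset.card_smul_le
    calc (finrank ℝ (LinearMap.range image) : ℝ)
        ≤ ε / ((entrySupport M).card + 1) * ((entrySupport M)⁻¹ • I).card := by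
          refine hS Q hQ _ _ ?_ ?_
          · rintro _ ⟨d, rfl⟩ a q hq
            refine vecMul_blockRep_eq_zero_of_smul_notMem d.2.1 fun i f hf mem => hq ?_
            have hf' : f ∈ entrySupport M := Finset.mem_biUnion.mpr ⟨(i, a), Finset.mem_univ _, hf⟩
            exact Finset.mem_smul.mpr ⟨f⁻¹, Finset.inv_mem_inv hf', f • q, mem, inv_smul_smul f q⟩
          · rintro _ ⟨d, rfl⟩
            simpa only [blockRep_mul, ← vecMul_vecMul] using! mul_eq_zero Q d d.2.2
      _ ≤ ε / ((entrySupport M).card + 1) * (((entrySupport M).card + 1) * I.card) := by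
          gcongr
          linarith [show (0 : ℝ) ≤ I.card by positivity]
      _ = ε * I.card := by field_simp
  have rank_nullity : (finrank ℝ (LinearMap.range image) : ℝ) + finrank ℝ (LinearMap.ker image) =
      finrank ℝ (relations l P I) := mod_cast image.finrank_range_add_finrank_ker
  have ker_le' : (finrank ℝ (LinearMap.ker image) : ℝ) ≤ finrank ℝ (relations l P' I) :=
    mod_cast ker_le
  linarith

end RelationsReduceTo

section Cosets

variable {k F Q J s : Type*} [CommRing k] [Group F] [Fintype J] [Fintype s]
  {P : Subgroup F} {T : Set F}

open Classical in
/-- The representatives in the transversal `T` of the cosets of `P` met by the entries of `A`. -/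
noncomputable def cosetReps (hT : Subgroup.IsComplement (P : Set F) T) (A : Matrix J s k[F]) :
    Finset T :=
  (entrySupport A).image fun f => (hT.equiv f).2

open Classical in
/-- The matrix obtained from `A` by splitting each entry along the decomposition of `k[F]` as a free
left `k[P]`-module with basis the transversal `T`; its entries are supported on `P`. -/
noncomputable def cosetMatrix (hT : Subgroup.IsComplement (P : Set F) T) (A : Matrix J s k[F]) :
    Matrix J (cosetReps hT A × s) k[F] :=
  of fun i x => (A i x.2).coeff.sum fun f c =>
    if (hT.equiv f).2 = x.1 then MonoidAlgebra.single ((hT.equiv f).1 : F) c else 0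

variable (k) in
/-- The matrix whose rows list the images of the elements of `R` under the endomorphisms `ψ j`. -/
noncomputable def orbitMatrix {ι : Type*} (R : Finset T) (ψ : ι → F →* F) : Matrix R ι k[F] :=
  of fun r j => MonoidAlgebra.single (ψ j (r : T)) 1

variable (k s) in
/-- The block diagonal matrix with one block `orbitMatrix R ψ` for each element of `s`. -/
noncomputable def twistMatrix [DecidableEq s] {ι : Type*} (R : Finset T) (ψ : ι → F →* F) :
    Matrix (R × s) (ι × s) k[F] :=
  blockDiagonal fun _ : s => orbitMatrix k R ψ

theorem eq_of_mul_inv_mem (hT : Subgroup.IsComplement (P : Set F) T) {r r' : T}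
    (h : (r : F) * (r' : F)⁻¹ ∈ P) : r = r' := by
  have snd_eq (r : T) : (hT.equiv r).2 = r :=
    hT.equiv_snd_eq_self_of_mem_of_one_mem P.one_mem r.2
  have equiv_mul := hT.equiv_mul_left_of_mem (g := r') h
  rw [inv_mul_cancel_right] at equiv_mul
  rw [← snd_eq r, equiv_mul, snd_eq]

variable (hT : Subgroup.IsComplement (P : Set F) T) (A : Matrix J s k[F])

open Classical in
theorem sum_cosetReps_ite {W : Type*} [AddCommMonoid W] {i : J} {a : s} {f : F}
    (hf : f ∈ (A i a).coeff.support) (g : T → W) :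
    (∑ r : cosetReps hT A, if (hT.equiv f).2 = r then g r else 0) = g (hT.equiv f).2 := by
  have mem : (hT.equiv f).2 ∈ cosetReps hT A := Finset.mem_image_of_mem _
    (Finset.mem_biUnion.mpr ⟨(i, a), Finset.mem_univ _, hf⟩)
  rw [Finset.sum_coe_sort (cosetReps hT A) fun r => if (hT.equiv f).2 = r then g r else 0,
    Finset.sum_ite_eq, if_pos mem]

theorem cosetMatrix_mul_twistMatrix [DecidableEq s] {ι : Type*} {ψ : ι → F →* F}
    (hψ : ∀ j, ∀ f ∈ P, ψ j f = f) :
    cosetMatrix hT A * twistMatrix k s (cosetReps hT A) ψ =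
      of fun i x => MonoidAlgebra.mapDomain (ψ x.1) (A i x.2) := by
  classical
  ext1 i ⟨j, a⟩
  have ψ_mul (f : F) : ((hT.equiv f).1 : F) * ψ j (hT.equiv f).2 = ψ j f := by
    rw [← hψ j _ (hT.equiv f).1.2, ← map_mul, hT.equiv_fst_mul_equiv_snd]
  simp only [mul_apply, Fintype.sum_prod_type, twistMatrix, blockDiagonal_apply,
    orbitMatrix, of_apply, mul_ite, mul_zero, Finset.sum_ite_eq', Finset.mem_univ, if_true,
    cosetMatrix, Finsupp.sum, Finset.sum_mul, ite_mul, zero_mul, MonoidAlgebra.single_mul_single,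
    mul_one]
  conv_rhs => rw [← (A i a).sum_coeff_single, MonoidAlgebra.mapDomain_sum]
  rw [Finset.sum_comm]
  refine Finset.sum_congr rfl fun f hf => ?_
  rw [sum_cosetReps_ite hT A hf fun r =>
    MonoidAlgebra.single ((hT.equiv f).1 * ψ j r) ((A i a).coeff f), ψ_mul]
  exact MonoidAlgebra.mapDomain_single.symm

open Classical in
theorem cosetMatrix_coeff (i : J) (x : cosetReps hT A × s) :
    (cosetMatrix hT A i x).coeff = ∑ f ∈ (A i x.2).coeff.support,
      if (hT.equiv f).2 = x.1 then Finsupp.single ((hT.equiv f).1 : F) ((A i x.2).coeff f)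
      else 0 := by
  simp only [cosetMatrix, of_apply, Finsupp.sum, MonoidAlgebra.coeff_sum,
    apply_ite MonoidAlgebra.coeff, MonoidAlgebra.coeff_single, MonoidAlgebra.coeff_zero]

theorem mem_of_mem_support_cosetMatrix {i : J} {x : cosetReps hT A × s} {f : F}
    (hf : f ∈ (cosetMatrix hT A i x).coeff.support) : f ∈ P := by
  classical
  rw [cosetMatrix_coeff] at hf
  obtain ⟨f', -, hf'⟩ := Finset.mem_biUnion.mp (Finsupp.support_finsetSum hf)
  split_ifs at hf'
  · rw [Finset.mem_singleton.mp (Finsupp.support_single_subset hf')]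
    exact (hT.equiv f').1.2
  · simp at hf'

open Classical in
theorem cosetMatrix_coeff_sum (i : J) (x : cosetReps hT A × s) (v : F → k) :
    ((cosetMatrix hT A i x).coeff.sum fun f c => c * v f) =
      (A i x.2).coeff.sum fun f c => if (hT.equiv f).2 = x.1 then c * v (hT.equiv f).1 else 0 := by
  rw [cosetMatrix_coeff,
    ← Finsupp.sum_finsetSum_index (fun _ => zero_mul _) fun _ _ _ => add_mul _ _ _]
  refine Finset.sum_congr rfl fun f _ => ?_
  by_cases h : (hT.equiv f).2 = x.1
  · simp only [if_pos h]
    exact Finsupp.sum_single_index (zero_mul (v _))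
  · simp only [if_neg h]
    exact Finsupp.sum_zero_index

theorem IsFoxMatrix.isRelation_of_vecMul_cosetMatrix [DecidableEq Q] [MulAction F Q] [Fintype Q]
    {P' : Subgroup F} {A : Matrix J s ℝ[F]} {y : s → F} {l : J → F} (hA : IsFoxMatrix P' y l A)
    (h1 : 1 ∈ T) (hl : ∀ i, l i ∈ P) {d : J × Q → ℝ}
    (hd : d ᵥ* blockRep Q (cosetMatrix hT A) = 0) : IsRelation l P d := by
  classical
  intro D hD
  let E (f : F) : Q → ℝ := D (hT.equiv f).1
  let V (r : T) (a : s) : Q → ℝ := E (r * y a)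
  have E_of_mem {f : F} (hf : f ∈ P) : E f = D f := by
    simp only [E, (hT.equiv_fst_eq_self_iff_mem h1).mpr hf]
  have E_mul_sub (f : F) (a : s) (q : Q) :
      E (f * y a) q - E f q = V (hT.equiv f).2 a (((hT.equiv f).1 : F)⁻¹ • q) := by
    have decomp : f * y a = ((hT.equiv f).1 : F) * ((hT.equiv f).2 * y a) := by
      rw [← mul_assoc, hT.equiv_fst_mul_equiv_snd]
    simp only [E, V, decomp, hT.equiv_mul_left_of_mem (hT.equiv f).1.2]
    rw [Subgroup.coe_mul, hD _ (hT.equiv f).1.2 _ (hT.equiv _).1.2, add_sub_cancel_left]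
  have eq_mulVec : (fun x : J × Q => D (l x.1) x.2) =
      blockRep Q (cosetMatrix hT A) *ᵥ fun x => V x.1.1 x.1.2 x.2 := by
    funext ⟨i, q⟩
    have expand := hA.sub_eq_sum (fun f => E f q) i
    rw [E_of_mem (hl i), E_of_mem P.one_mem, hD.map_one, sub_zero] at expand
    rw [blockRep_mulVec, expand, Fintype.sum_prod_type, Finset.sum_comm]
    refine Finset.sum_congr rfl fun a _ => ?_
    rw [Fintype.sum_congr _ _ fun r : cosetReps hT A =>
      cosetMatrix_coeff_sum hT A i (r, a) fun f => V r a (f⁻¹ • q)]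
    simp only [Finsupp.sum]
    rw [Finset.sum_comm]
    refine Finset.sum_congr rfl fun f hf => ?_
    rw [E_mul_sub, sum_cosetReps_ite hT A hf fun r => _ * V r a _, smul_eq_mul]
  rw [eq_mulVec, dotProduct_mulVec, hd, zero_dotProduct]

end Cosets

/-! ### Dimension counts for relations -/

section LowerBound

variable {F Q J κ : Type*} [Group F] [MulAction F Q] [Fintype Q] [Fintype J] [Fintype κ]

theorem card_mul_card_le_finrank_relations {K : Subgroup F} {y : κ → K}
    (hy : Subgroup.closure (Set.range y) = ⊤) {l : J → F} (hl : ∀ i, l i ∈ K) {I : Finset Q}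
    (hI : ∀ f ∈ K, ∀ q ∈ I, f • q ∈ I) :
    Fintype.card J * I.card ≤ finrank ℝ (relations l K I) + Fintype.card κ * I.card := by
  classical
  obtain ⟨s, A, hA⟩ := exists_isFoxMatrix ℝ hy hl
  let inclJ : J × I → J × Q := Prod.map id Subtype.val
  let inclS : s × I → s × Q := Prod.map id Subtype.val
  have inclJ_injective : Function.Injective inclJ :=
    Function.injective_id.prodMap Subtype.val_injective
  let extend : (J × I → ℝ) →ₗ[ℝ] (J × Q → ℝ) := Function.ExtendByZero.linearMap ℝ inclJ
  have extend_injective : Function.Injective extend :=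
    Function.extend_injective inclJ_injective (0 : J × Q → ℝ)
  have extend_eq_zero (d : J × I → ℝ) (i : J) (q : Q) (hq : q ∉ I) : extend d (i, q) = 0 := by
    refine Function.extend_apply' _ _ _ ?_
    rintro ⟨⟨j, q'⟩, hx⟩
    obtain rfl : (q' : Q) = q := congrArg Prod.snd hx
    exact hq q'.2
  let Φ : (J × I → ℝ) →ₗ[ℝ] (s × I → ℝ) :=
    LinearMap.funLeft ℝ ℝ inclS ∘ₗ vecMulLinear (blockRep Q A) ∘ₗ extend
  have ker_le : finrank ℝ (LinearMap.ker Φ) ≤ finrank ℝ (relations l K I) := by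
    rw [(Submodule.equivMapOfInjective extend extend_injective (LinearMap.ker Φ)).finrank_eq]
    refine Submodule.finrank_mono ?_
    rintro _ ⟨d, hd, rfl⟩
    refine ⟨extend_eq_zero d, hA.isRelation_of_vecMul_eq_zero (fun a => (y a).2) ?_⟩
    funext ⟨a, q⟩
    by_cases hq : q ∈ I
    · exact congrFun hd (a, ⟨q, hq⟩)
    · exact vecMul_blockRep_eq_zero_of_invariant (fun i a f => hA.mem_of_mem_support) hI
        (extend_eq_zero d) a hq
  have range_le : finrank ℝ (LinearMap.range Φ) ≤ Fintype.card κ * I.card := by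
    refine (Submodule.finrank_le _).trans ?_
    simpa using Nat.mul_le_mul_right I.card s.card_le_univ
  have rank_nullity := Φ.finrank_range_add_finrank_ker
  have domain : finrank ℝ (J × I → ℝ) = Fintype.card J * I.card := by simp
  omega

end LowerBound

section Independence

variable {F Q J s ι : Type*} [Group F] [MulAction F Q] [Fintype Q] [Fintype J] [Fintype s]
  {L H : Subgroup F} {T : Set F}

theorem eq_zero_of_isRelation_basis {c : FreeGroupBasis ι L} {κ : J → ι}
    (hκ : Function.Injective κ) {d : J × Q → ℝ} (hd : IsRelation (fun j => (c (κ j) : F)) L d) :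
    d = 0 := by
  refine dotProduct_eq_zero _ fun w => ?_
  obtain ⟨D, hD, hV⟩ := exists_isDerivationOn c (Function.extend κ (fun j q => w (j, q)) 0)
  simpa only [hV, hκ.extend_apply] using hd D hD

theorem vecMul_blockRep_twistMatrix [DecidableEq Q] [DecidableEq s] {k : Type*} [CommRing k]
    {R : Finset T} {ψ : ι → F →* F} (e : (R × s) × Q → k) (j : ι) (a : s) (q : Q) :
    (e ᵥ* blockRep Q (twistMatrix k s R ψ)) ((j, a), q) = ∑ r : R, e ((r, a), ψ j (r : T) • q) := by
  simp only [vecMul_blockRep, twistMatrix, orbitMatrix, blockDiagonal_apply, of_apply,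
    Fintype.sum_prod_type]
  refine Fintype.sum_congr _ _ fun r => ?_
  rw [Fintype.sum_eq_single a fun a' ha' => ?_, if_pos rfl,
    MonoidAlgebra.coeff_single, Finsupp.sum_single_index (zero_mul _), one_mul]
  rw [if_neg ha', MonoidAlgebra.coeff_zero, Finsupp.sum_zero_index]

theorem eq_zero_of_vecMul_twistMatrix [DecidableEq Q] [DecidableEq s] {R : Finset T}
    {I : Finset Q}
    (hR : ∀ r ∈ R, ∀ r' ∈ R, r ≠ r' → ∀ q ∈ I, ((r : F) * (r' : F)⁻¹) • q ∉ I)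
    {e : (R × s) × Q → ℝ} (he : ∀ x, ∀ q ∉ I, e (x, q) = 0)
    (h : e ᵥ* blockRep Q (twistMatrix ℝ s R fun _ : Unit => MonoidHom.id F) = 0) : e = 0 := by
  funext ⟨⟨r₀, a⟩, q⟩
  by_cases hq : q ∈ I
  swap
  · exact he _ q hq
  have sum_eq := congrFun h (((), a), (r₀ : F)⁻¹ • q)
  rw [vecMul_blockRep_twistMatrix, Finset.sum_eq_single r₀] at sum_eq
  · simpa using sum_eq
  · intro r _ hr
    refine he _ _ ?_
    rw [MonoidHom.id_apply, ← mul_smul]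
    exact hR r r.2 r₀ r₀.2 (Subtype.coe_injective.ne hr) q hq
  · exact fun notMem => (notMem (Finset.mem_univ r₀)).elim

variable {b : FreeGroupBasis ι H} {s : Finset ι} {l : J → F} {A : Matrix J s ℝ[F]}

theorem IsFoxMatrix.isRelation_of_le (hT : Subgroup.IsComplement (L : Set F) T) (h1 : 1 ∈ T)
    (hA : IsFoxMatrix H (fun a : s => (b a : F)) l A) (hl : ∀ i, l i ∈ L) {I : Finset Q}
    (hI : ∀ f ∈ L, ∀ q ∈ I, f • q ∈ I)
    (hR : ∀ r ∈ cosetReps hT A, ∀ r' ∈ cosetReps hT A, r ≠ r' →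
      ∀ q ∈ I, ((r : F) * (r' : F)⁻¹) • q ∉ I)
    {d : J × Q → ℝ} (hd : d ∈ relations l H I) : IsRelation l L d := by
  classical
  refine hA.isRelation_of_vecMul_cosetMatrix hT h1 hl ?_
  refine eq_zero_of_vecMul_twistMatrix hR (fun x q hq => ?_) ?_
  · exact vecMul_blockRep_eq_zero_of_invariant
      (fun _ _ _ => mem_of_mem_support_cosetMatrix hT A) hI hd.1 x hq
  · rw [vecMul_vecMul, ← blockRep_mul, cosetMatrix_mul_twistMatrix hT A fun _ _ _ => rfl]
    funext ⟨⟨_, a⟩, q⟩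
    have vecMul_eq_zero := congrFun (hA.vecMul_eq_zero_of_isRelation hd.2) (a, q)
    have mapDomain_id (x : ℝ[F]) : MonoidAlgebra.mapDomain (MonoidHom.id F) x = x :=
      DFunLike.congr_fun (MonoidAlgebra.mapDomainRingHom_id (R := ℝ) (M := F)) x
    simp only [vecMul_blockRep] at vecMul_eq_zero ⊢
    simpa only [of_apply, mapDomain_id, Pi.zero_apply] using vecMul_eq_zero

theorem exists_forall_relations_eq_bot (b : FreeGroupBasis ι H) {κ : Type*}
    (c : FreeGroupBasis κ L) (hLH : L ≤ H) {j : J → κ} (hj : Function.Injective j) :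
    ∃ S : Finset F, (∀ f ∈ S, f ∈ H ∧ f ∉ L) ∧
      ∀ (Q : Type u) [MulAction F Q] [Fintype Q] (I : Finset Q), (∀ f ∈ L, ∀ q ∈ I, f • q ∈ I) →
        (∀ f ∈ S, ∀ q ∈ I, f • q ∉ I) → relations (fun i => (c (j i) : F)) H I = ⊥ := by
  classical
  have hl (i : J) : (c (j i) : F) ∈ L := (c (j i)).2
  obtain ⟨s, A, hA⟩ := exists_isFoxMatrix ℝ (closure_range_basis b) fun i => hLH (hl i)
  obtain ⟨T, hT, h1⟩ := L.exists_isComplement_right 1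
  refine ⟨(cosetReps hT A).offDiag.image fun x => (x.1 : F) * (x.2 : F)⁻¹, ?_, ?_⟩
  · have reps_mem {r : T} (hr : r ∈ cosetReps hT A) : (r : F) ∈ H := by
      obtain ⟨f, hf, rfl⟩ := Finset.mem_image.mp hr
      obtain ⟨x, -, hx⟩ := Finset.mem_biUnion.mp hf
      rw [hT.equiv_snd_eq_inv_mul]
      exact H.mul_mem (H.inv_mem (hLH (hT.equiv f).1.2)) (hA.mem_of_mem_support hx)
    intro f hf
    obtain ⟨⟨r, r'⟩, hx, rfl⟩ := Finset.mem_image.mp hf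
    obtain ⟨hr, hr', hne⟩ := Finset.mem_offDiag.mp hx
    exact ⟨H.mul_mem (reps_mem hr) (H.inv_mem (reps_mem hr')),
      fun mem => hne (eq_of_mul_inv_mem hT mem)⟩
  · intro Q _ _ I hI hS
    refine (Submodule.eq_bot_iff _).mpr fun d hd => eq_zero_of_isRelation_basis hj
      (hA.isRelation_of_le hT h1 hl hI (fun r hr r' hr' hne => ?_) hd)
    exact hS _ (Finset.mem_image.mpr ⟨(r, r'), Finset.mem_offDiag.mpr ⟨hr, hr', hne⟩, rfl⟩)

end Independence

/-! ### Reduction to the fixed subgroup of a power -/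

section TwistKernel

variable {F s ι : Type*} [Group F] [Fintype ι] {T : Set F}
  {R : Finset T} {ψ : ι → F →* F}

theorem coeff_one_sum_single_mul_sum_single {u : ι → F} (hu : Function.Injective u) :
    ((∑ j, MonoidAlgebra.single (u j) (1 : ℝ)) * ∑ j, MonoidAlgebra.single (u j)⁻¹ 1).coeff 1 =
      (Fintype.card ι : ℝ) := by
  classical
  simp only [Finset.sum_mul_sum, MonoidAlgebra.single_mul_single, mul_one,
    MonoidAlgebra.coeff_sum, Finsupp.finsetSum_apply, MonoidAlgebra.coeff_single,
    Finsupp.single_apply, mul_inv_eq_one, hu.eq_iff, Finset.sum_ite_eq, Finset.mem_univ, if_true,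
    Finset.sum_const, Finset.card_univ, nsmul_eq_mul]

theorem orbitMatrix_mul_adjoint_apply (r r' : R) :
    (orbitMatrix ℝ R ψ * adjoint (orbitMatrix ℝ R ψ)) r r' =
      ∑ j, MonoidAlgebra.single (ψ j ((r : T) * (r' : F)⁻¹)) 1 := by
  simp only [mul_apply, orbitMatrix, adjoint, transpose_apply, map_apply, of_apply,
    MonoidAlgebra.mapDomain_single, MonoidAlgebra.single_mul_single, map_mul, map_inv, mul_one]

variable [DecidableEq F]

theorem vnTrace_defect_orbitMatrix_sq_le [Nonempty ι]
    (hψ : ∀ r ∈ R, ∀ r' ∈ R, r ≠ r' → Function.Injective fun j => ψ j ((r : T) * (r' : F)⁻¹)) :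
    vnTrace (k := ℝ) (defect (orbitMatrix ℝ R ψ) (Fintype.card ι) ^ 2) ≤
      (R.card : ℝ) ^ 2 / Fintype.card ι := by
  set N : ℝ := (Fintype.card ι : ℝ)
  have N_ne : N ≠ 0 := Nat.cast_ne_zero.mpr Fintype.card_ne_zero
  have N_nonneg : 0 ≤ N := Nat.cast_nonneg _
  let X := defect (orbitMatrix ℝ R ψ) N
  have X_apply (r r' : R) : X r r' = (1 : Matrix R R ℝ[F]) r r' -
      N⁻¹ • ∑ j, MonoidAlgebra.single (ψ j ((r : T) * (r' : F)⁻¹)) 1 := by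
    rw [← orbitMatrix_mul_adjoint_apply]; rfl
  have X_diag (r : R) : X r r = 0 := by
    simp only [X_apply, one_apply_eq, mul_inv_cancel, map_one, Finset.sum_const, Finset.card_univ]
    rw [← MonoidAlgebra.one_def, ← Nat.cast_smul_eq_nsmul ℝ, inv_smul_smul₀ N_ne, sub_self]
  have coeff_le (r r' : R) : (X r r' * X r' r).coeff 1 ≤ N⁻¹ := by
    obtain rfl | hne := eq_or_ne r r'
    · simpa [X_diag] using N_nonneg
    have inv_eq (j : ι) : ψ j ((r' : T) * (r : F)⁻¹) = (ψ j ((r : T) * (r' : F)⁻¹))⁻¹ := by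
      rw [← map_inv, _root_.mul_inv_rev, inv_inv]
    rw [X_apply, X_apply, one_apply_ne hne, one_apply_ne hne.symm, zero_sub, zero_sub,
      neg_mul_neg, smul_mul_smul_comm, MonoidAlgebra.coeff_smul, Finsupp.smul_apply]
    simp only [inv_eq]
    rw [coeff_one_sum_single_mul_sum_single (hψ r r.2 r' r'.2 (Subtype.coe_injective.ne hne)),
      smul_eq_mul, mul_assoc, inv_mul_cancel₀ N_ne, mul_one]
  calc vnTrace (X ^ 2) = ∑ r, ∑ r', (X r r' * X r' r).coeff 1 := by
        simp only [vnTrace, pow_two, mul_apply, MonoidAlgebra.coeff_sum, Finsupp.finsetSum_apply]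
    _ ≤ ∑ _ : R, ∑ _ : R, N⁻¹ := by gcongr; exact coeff_le _ _
    _ = (R.card : ℝ) ^ 2 / N := by
        simp only [Finset.sum_const, Finset.card_univ, Fintype.card_coe, nsmul_eq_mul]
        ring

variable [Fintype s] [DecidableEq s]

theorem vnTrace_defect_twistMatrix_sq :
    vnTrace (k := ℝ) (defect (twistMatrix ℝ s R ψ) (Fintype.card ι) ^ 2) =
      Fintype.card s * vnTrace (k := ℝ) (defect (orbitMatrix ℝ R ψ) (Fintype.card ι) ^ 2) := by
  have mul_adjoint : twistMatrix ℝ s R ψ * adjoint (twistMatrix ℝ s R ψ) =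
      blockDiagonal fun _ => orbitMatrix ℝ R ψ * adjoint (orbitMatrix ℝ R ψ) := by
    have adjoint_eq :
        adjoint (twistMatrix ℝ s R ψ) = blockDiagonal fun _ => adjoint (orbitMatrix ℝ R ψ) := by
      rw [adjoint, twistMatrix, blockDiagonal_map _ _ (MonoidAlgebra.mapDomain_zero _),
        blockDiagonal_transpose]
      rfl
    rw [adjoint_eq, blockDiagonal_mul]
    rfl
  have defect_eq : defect (twistMatrix ℝ s R ψ) (Fintype.card ι) =
      blockDiagonal fun _ => defect (orbitMatrix ℝ R ψ) (Fintype.card ι) := by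
    rw [defect, mul_adjoint, ← blockDiagonal_smul, ← blockDiagonal_one, ← blockDiagonal_sub]
    rfl
  rw [defect_eq, ← blockDiagonal_pow]
  simp only [vnTrace, Fintype.sum_prod_type, blockDiagonal_apply_eq, Pi.pow_apply,
    Finset.sum_const, Finset.card_univ, nsmul_eq_mul, Finset.mul_sum]

theorem hasSmallKernel_twistMatrix {F : Type u} {s ι : Type*} [Group F] [Fintype s] [DecidableEq s]
    [Fintype ι] [Nonempty ι] {T : Set F} {R : Finset T} {ψ : ι → F →* F}
    (hψ : ∀ r ∈ R, ∀ r' ∈ R, r ≠ r' → Function.Injective fun j => ψ j ((r : T) * (r' : F)⁻¹))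
    {η : ℝ} (hη : Fintype.card s * (R.card : ℝ) ^ 2 ≤ η * Fintype.card ι) :
    HasSmallKernel (twistMatrix ℝ s R ψ) η := by
  classical
  refine hasSmallKernel_of_vnTrace_le (B := Fintype.card ι) (r := 1) ?_
  rw [mul_one, vnTrace_defect_twistMatrix_sq]
  calc Fintype.card s * vnTrace (k := ℝ) (defect (orbitMatrix ℝ R ψ) (Fintype.card ι) ^ 2)
      ≤ Fintype.card s * ((R.card : ℝ) ^ 2 / Fintype.card ι) := by
        gcongr
        exact vnTrace_defect_orbitMatrix_sq_le hψ
    _ ≤ η := by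
        rwa [← mul_div_assoc, div_le_iff₀ (Nat.cast_pos.mpr Fintype.card_pos)]

end TwistKernel

section FixedSubgroups

variable {F : Type u} [Group F] {φ : MulAut F}

theorem exists_pos_forall_isPeriodicPt {α : Type*} (f : α → α) (U : Finset α) :
    ∃ n > 0, ∀ x ∈ U, x ∈ Function.periodicPts f → Function.IsPeriodicPt f n x := by
  classical
  refine ⟨∏ x ∈ U with x ∈ Function.periodicPts f, Function.minimalPeriod f x,
    Finset.prod_pos fun x hx => ?_, fun x hxU hx => ?_⟩
  · exact Function.minimalPeriod_pos_of_mem_periodicPts (Finset.mem_filter.mp hx).2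
  · exact (Function.isPeriodicPt_minimalPeriod f x).trans_dvd
      (Finset.dvd_prod_of_mem _ (Finset.mem_filter.mpr ⟨hxU, hx⟩))

theorem iterate_eq_pow (φ : MulAut F) (n : ℕ) : (⇑φ)^[n] = ⇑(φ ^ n) :=
  smul_iterate φ n

theorem mem_fixedSubgroup_pow {n : ℕ} {x : F} :
    x ∈ fixedSubgroup (φ ^ n).toMonoidHom ↔ Function.IsPeriodicPt φ n x := by
  rw [Function.IsPeriodicPt, Function.IsFixedPt, iterate_eq_pow]
  rfl

theorem fixedSubgroup_pow_le_pow_mul (φ : MulAut F) (m n : ℕ) :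
    fixedSubgroup (φ ^ m).toMonoidHom ≤ fixedSubgroup (φ ^ (m * n)).toMonoidHom := by
  intro x hx
  have := (MulAction.stabilizer (MulAut F) x).pow_mem hx n
  rwa [← pow_mul] at this

theorem injective_pow_apply {u : F} (hu : u ∉ Function.periodicPts φ) :
    Function.Injective fun n : ℕ => (φ ^ n) u := by
  intro m n h
  wlog hle : m ≤ n generalizing m n
  · exact (this h.symm (le_of_not_ge hle)).symm
  by_contra hne
  refine hu (Function.mk_mem_periodicPts (n := n - m) (by omega) ?_)
  apply (φ ^ m).injective
  rw [iterate_eq_pow, ← MulAut.mul_apply, ← pow_add, Nat.add_sub_cancel' hle]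
  exact h.symm

variable {κ J : Type*} [Fintype J]

theorem IsFoxMatrix.vecMul_cosetMatrix_mul_twistMatrix {Q ι : Type*} [MulAction F Q] [Fintype Q]
    [DecidableEq Q] [DecidableEq κ] {P : Subgroup F} {T : Set F}
    (hT : Subgroup.IsComplement (P : Set F) T) {b : FreeGroupBasis κ F} {s : Finset κ} {l : J → F}
    {A : Matrix J s ℝ[F]} (hA : IsFoxMatrix ⊤ (fun a : s => b a) l A) {ψ : ι → MulAut F}
    (hP : ∀ j, ∀ f ∈ P, ψ j f = f) (hl : ∀ j i, ψ j (l i) = l i) {d : J × Q → ℝ}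
    (hd : IsRelation l ⊤ d) :
    d ᵥ* blockRep Q (cosetMatrix hT A * twistMatrix ℝ s (cosetReps hT A)
      fun j => (ψ j).toMonoidHom) = 0 := by
  rw [cosetMatrix_mul_twistMatrix hT A hP]
  funext ⟨⟨j, a⟩, q⟩
  have hA' := hA.map_group (ψ j).toMonoidHom
  let b' : FreeGroupBasis κ (⊤ : Subgroup F) := b.map ((ψ j).trans Subgroup.topEquiv.symm)
  have b'_apply (a : κ) : (b' a : F) = ψ j (b a) := by simp [b']
  simp only [MulEquiv.coe_toMonoidHom, hl, ← b'_apply] at hA'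
  have vecMul_eq_zero := congrFun (hA'.vecMul_eq_zero_of_isRelation hd) (a, q)
  rw [vecMul_blockRep] at vecMul_eq_zero ⊢
  exact vecMul_eq_zero

theorem div_notMem_periodicPts {m : ℕ} (hm : 0 < m) {T : Set F}
    (hT : Subgroup.IsComplement (fixedSubgroup (φ ^ m).toMonoidHom : Set F) T) {f f' : F}
    (hff' : f * f'⁻¹ ∈ Function.periodicPts φ → Function.IsPeriodicPt φ m (f * f'⁻¹))
    (hne : (hT.equiv f).2 ≠ (hT.equiv f').2) :
    ((hT.equiv f).2 : F) * ((hT.equiv f').2 : F)⁻¹ ∉ Function.periodicPts φ := by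
  rintro ⟨n, hn, hu⟩
  let P (k : ℕ) : Subgroup F := fixedSubgroup (φ ^ k).toMonoidHom
  let p := (hT.equiv f).1
  let p' := (hT.equiv f').1
  let u := ((hT.equiv f).2 : F) * ((hT.equiv f').2 : F)⁻¹
  have decomp : f * f'⁻¹ = p * u * (p' : F)⁻¹ := by
    rw [← hT.equiv_fst_mul_equiv_snd f, ← hT.equiv_fst_mul_equiv_snd f']
    simp only [u, p, p']
    group
  have u_mem : u ∈ P (m * n) :=
    mul_comm n m ▸ fixedSubgroup_pow_le_pow_mul φ n m (mem_fixedSubgroup_pow.mpr hu)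
  have div_mem : f * f'⁻¹ ∈ P (m * n) := by
    have le := fixedSubgroup_pow_le_pow_mul φ m n
    exact decomp ▸ mul_mem (mul_mem (le p.2) u_mem) (inv_mem (le p'.2))
  have div_mem' : p * u * (p' : F)⁻¹ ∈ P m := decomp ▸ mem_fixedSubgroup_pow.mpr
    (hff' (Function.mk_mem_periodicPts (Nat.mul_pos hm hn) (mem_fixedSubgroup_pow.mp div_mem)))
  refine hne (eq_of_mul_inv_mem hT ?_)
  exact (mul_mem_cancel_left p.2).mp ((mul_mem_cancel_right (inv_mem p'.2)).mp div_mem')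

theorem exists_relationsReduceTo_fixedSubgroup_pow (b : FreeGroupBasis κ F) (φ : MulAut F)
    {l : J → F} (hl : ∀ i, φ (l i) = l i) :
    ∃ m > 0, RelationsReduceTo l ⊤ (fixedSubgroup (φ ^ m).toMonoidHom) := by
  classical
  let b' : FreeGroupBasis κ (⊤ : Subgroup F) := b.map Subgroup.topEquiv.symm
  obtain ⟨s, A, hA : IsFoxMatrix ⊤ (fun a : s => b a) l A⟩ :=
    exists_isFoxMatrix ℝ (closure_range_basis b') fun i => Subgroup.mem_top (l i)
  obtain ⟨m, hm, period⟩ := exists_pos_forall_isPeriodicPt φ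
    ((entrySupport A ×ˢ entrySupport A).image fun x => x.1 * x.2⁻¹)
  obtain ⟨T, hT, h1⟩ := (fixedSubgroup (φ ^ m).toMonoidHom).exists_isComplement_right 1
  have hl' (n : ℕ) (i : J) : (φ ^ n) (l i) = l i :=
    (MulAction.stabilizer (MulAut F) (l i)).pow_mem (hl i) n
  refine ⟨m, hm, relationsReduceTo_of_hasSmallKernel (cosetMatrix hT A)
    (fun Q _ _ d => hA.isRelation_of_vecMul_cosetMatrix hT h1 (hl' m)) fun η hη => ?_⟩
  let R := cosetReps hT A
  obtain ⟨N, hN⟩ := exists_nat_gt (s.card * (R.card : ℝ) ^ 2 / η)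
  have : NeZero N := ⟨by
    rintro rfl
    exact absurd hN (not_lt.mpr (by rw [Nat.cast_zero]; positivity))⟩
  let ψ (j : Fin N) : MulAut F := φ ^ (m * j)
  refine ⟨Fin N × s, twistMatrix ℝ s R fun j => (ψ j).toMonoidHom,
    hasSmallKernel_twistMatrix ?_ ?_, fun Q _ _ d hd => ?_⟩
  · intro r hr r' hr' hne
    obtain ⟨f, hf, rfl⟩ := Finset.mem_image.mp hr
    obtain ⟨f', hf', rfl⟩ := Finset.mem_image.mp hr'
    have notMem := div_notMem_periodicPts hm hT (period (f * f'⁻¹)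
      (Finset.mem_image.mpr ⟨(f, f'), Finset.mem_product.mpr ⟨hf, hf'⟩, rfl⟩)) hne
    exact fun j j' h => Fin.ext (Nat.eq_of_mul_eq_mul_left hm (injective_pow_apply notMem h))
  · rw [div_lt_iff₀ hη] at hN
    simpa [mul_comm η] using hN.le
  · exact hA.vecMul_cosetMatrix_mul_twistMatrix (ψ := ψ) hT
      (fun j f hf => fixedSubgroup_pow_le_pow_mul φ m j hf) (fun j => hl' _) hd

end FixedSubgroups

/-! ### Reduction from a prime power to its root -/

section RestrictedAutomorphism

variable {F : Type*} [Group F] (α : MulAut F) (n : ℕ)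

theorem map_fixedSubgroup_pow : (fixedSubgroup (α ^ n).toMonoidHom).map α.toMonoidHom =
    fixedSubgroup (α ^ n).toMonoidHom := by
  have comap_eq : (fixedSubgroup (α ^ n).toMonoidHom).comap α.toMonoidHom =
      fixedSubgroup (α ^ n).toMonoidHom := by
    ext x
    change (α ^ n) (α x) = α x ↔ (α ^ n) x = x
    rw [← MulAut.mul_apply, ← pow_succ, pow_succ', MulAut.mul_apply, α.injective.eq_iff]
  calc (fixedSubgroup (α ^ n).toMonoidHom).map α.toMonoidHom
      = ((fixedSubgroup (α ^ n).toMonoidHom).comap α.toMonoidHom).map α.toMonoidHom := by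
        rw [comap_eq]
    _ = fixedSubgroup (α ^ n).toMonoidHom :=
        Subgroup.map_comap_eq_self_of_surjective α.surjective _

/-- The automorphism of the fixed subgroup of `α ^ n` induced by `α`. -/
def restrictFixedSubgroupPow : MulAut (fixedSubgroup (α ^ n).toMonoidHom) :=
  (α.subgroupMap _).trans (MulEquiv.subgroupCongr (map_fixedSubgroup_pow α n))

variable {α n}

theorem coe_restrictFixedSubgroupPow_pow_apply (m : ℕ) (x : fixedSubgroup (α ^ n).toMonoidHom) :
    ((restrictFixedSubgroupPow α n ^ m) x : F) = (α ^ m) x := by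
  induction m generalizing x with
  | zero => rfl
  | succ _ ih => exact ih _

theorem restrictFixedSubgroupPow_pow_self : restrictFixedSubgroupPow α n ^ n = 1 := by
  ext x
  exact (coe_restrictFixedSubgroupPow_pow_apply n x).trans x.2

theorem mem_fixedSubgroup_subgroupOf (x : fixedSubgroup (α ^ n).toMonoidHom) :
    x ∈ (fixedSubgroup α.toMonoidHom).subgroupOf (fixedSubgroup (α ^ n).toMonoidHom) ↔
      restrictFixedSubgroupPow α n x = x :=
  (Subtype.ext_iff (a1 := restrictFixedSubgroupPow α n x) (a2 := x)).symm

theorem fixedSubgroup_le_fixedSubgroup_pow (α : MulAut F) (n : ℕ) :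
    fixedSubgroup α.toMonoidHom ≤ fixedSubgroup (α ^ n).toMonoidHom :=
  fun x hx => (MulAction.stabilizer (MulAut F) x).pow_mem hx n

theorem exists_extension_fixedSubgroup_pow {k Y : Type*} [AddCommGroup k] {p : ℕ} (hp : p.Prime)
    (b : FreeGroupBasis Y (fixedSubgroup (α ^ p).toMonoidHom)) (htf : ∀ x : F, x ^ p = 1 → x = 1)
    (hk : ∀ z : k, p • z = 0) (χ : fixedSubgroup α.toMonoidHom →* Multiplicative k) :
    ∃ u : fixedSubgroup (α ^ p).toMonoidHom →* Multiplicative k,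
      ∀ h, u (Subgroup.inclusion (fixedSubgroup_le_fixedSubgroup_pow α p) h) = χ h := by
  let e := Subgroup.subgroupOfEquivOfLe (fixedSubgroup_le_fixedSubgroup_pow α p)
  obtain ⟨u, hu⟩ := exists_extension_of_pow_eq_one hp restrictFixedSubgroupPow_pow_self b
    (fun x hx => Subtype.ext (htf x (congrArg Subtype.val hx))) hk mem_fixedSubgroup_subgroupOf
    (χ.comp e.toMonoidHom)
  exact ⟨u, fun h => (hu (e.symm h)).trans (congrArg χ (e.apply_symm_apply h))⟩

end RestrictedAutomorphism

section PrimePower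

theorem IsFoxMatrix.mul {k F J s t : Type*} [CommRing k] [Group F] [Fintype s] [Fintype t]
    {P P' : Subgroup F} {y : s → F} {z : t → F} {l : J → F} {A : Matrix J s k[F]}
    {C : Matrix s t k[F]} (hA : IsFoxMatrix P y l A) (hC : IsFoxMatrix P' z y C) (h : P ≤ P') :
    IsFoxMatrix P' z l (A * C) where
  sum_mul_sub_one i := by
    simp only [mul_apply, Finset.sum_mul, mul_assoc]
    rw [Finset.sum_comm]
    simp only [← Finset.mul_sum, hC.sum_mul_sub_one, hA.sum_mul_sub_one]
  mem_of_mem_support {i b f} hf := by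
    classical
    rw [mul_apply, MonoidAlgebra.coeff_sum] at hf
    obtain ⟨a, -, ha⟩ := Finset.mem_biUnion.mp (Finsupp.support_finsetSum hf)
    obtain ⟨x, hx, y, hy, rfl⟩ := Finset.mem_mul.mp (MonoidAlgebra.support_coeff_mul_subset _ _ ha)
    exact P'.mul_mem (h (hA.mem_of_mem_support hx)) (hC.mem_of_mem_support hy)

theorem IsFoxMatrix.toAdd_apply_eq_sum {k F J t : Type*} [CommRing k] [Group F] [Fintype t]
    {P : Subgroup F} {z : t → P} {l : J → P} {C : Matrix J t ℤ[F]}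
    (hC : IsFoxMatrix P (fun y => (z y : F)) (fun i => (l i : F)) C) (u : P →* Multiplicative k)
    (i : J) : (u (l i)).toAdd = ∑ y, (augmentation ℤ F (C i y) : k) * (u (z y)).toAdd := by
  classical
  have expand := hC.sub_eq_sum (fun f => if h : f ∈ P then (u ⟨f, h⟩).toAdd else 0) i
  simp only [SetLike.coe_mem, dif_pos, Subtype.coe_eta, P.one_mem] at expand
  have u_one : u ⟨1, P.one_mem⟩ = 1 := map_one u
  rw [u_one, toAdd_one, sub_zero] at expand
  rw [expand]
  refine Finset.sum_congr rfl fun y _ => ?_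
  rw [augmentation_apply, Finsupp.sum, Finsupp.sum, Int.cast_sum, Finset.sum_mul]
  refine Finset.sum_congr rfl fun f hf => ?_
  have mem := hC.mem_of_mem_support hf
  have u_mul : u ⟨f * z y, P.mul_mem mem (z y).2⟩ = u ⟨f, mem⟩ * u (z y) := map_mul u ⟨f, mem⟩ _
  rw [dif_pos mem, dif_pos (P.mul_mem mem (z y).2), u_mul, toAdd_mul, add_sub_cancel_left,
    zsmul_eq_mul]

theorem IsFoxMatrix.augmentation_injective {F κ Y : Type*} [Group F] {p : ℕ} [Fact p.Prime]
    (htf : ∀ x : F, x ^ p = 1 → x = 1) {α : MulAut F}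
    (b : FreeGroupBasis κ (fixedSubgroup α.toMonoidHom)) {s : Finset κ}
    (b' : FreeGroupBasis Y (fixedSubgroup (α ^ p).toMonoidHom)) {t : Finset Y}
    {C : Matrix s t ℤ[F]} (hC : IsFoxMatrix (fixedSubgroup (α ^ p).toMonoidHom)
      (fun y : t => (b' y : F)) (fun a : s => (b a : F)) C)
    {β : s → ZMod p} (hβ : β ᵥ* C.map (fun a => (augmentation ℤ F a : ZMod p)) = 0) : β = 0 := by
  classical
  refine dotProduct_eq_zero β fun w => ?_
  let χ : fixedSubgroup α.toMonoidHom →* Multiplicative (ZMod p) :=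
    b.lift fun a => Multiplicative.ofAdd (if h : a ∈ s then w ⟨a, h⟩ else 0)
  have χ_apply (a : κ) : χ (b a) = Multiplicative.ofAdd (if h : a ∈ s then w ⟨a, h⟩ else 0) :=
    congrFun (b.lift.symm_apply_apply _) a
  obtain ⟨u, hu⟩ := exists_extension_fixedSubgroup_pow Fact.out b' htf
    (fun z : ZMod p => by rw [nsmul_eq_mul, CharP.cast_eq_zero, zero_mul]) χ
  have w_eq : w = C.map (fun a => (augmentation ℤ F a : ZMod p)) *ᵥ fun y => (u (b' y)).toAdd := by
    funext a
    rw [mulVec, dotProduct]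
    refine Eq.trans ?_ (IsFoxMatrix.toAdd_apply_eq_sum (l := fun a : s =>
      Subgroup.inclusion (fixedSubgroup_le_fixedSubgroup_pow α p) (b a)) hC u a)
    rw [hu, χ_apply, dif_pos a.2, toAdd_ofAdd]
  rw [w_eq, dotProduct_mulVec, hβ, zero_dotProduct]

variable {X : Type u} {J : Type*} [Fintype J]

theorem relationsReduceTo_fixedSubgroup_of_prime {p : ℕ} [Fact p.Prime] {α : MulAut (FreeGroup X)}
    {l : J → FreeGroup X} (hl : ∀ i, α (l i) = l i) :
    RelationsReduceTo l (fixedSubgroup (α ^ p).toMonoidHom) (fixedSubgroup α.toMonoidHom) := by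
  classical
  let b := IsFreeGroup.basis (fixedSubgroup α.toMonoidHom)
  let b' := IsFreeGroup.basis (fixedSubgroup (α ^ p).toMonoidHom)
  have le := fixedSubgroup_le_fixedSubgroup_pow α p
  obtain ⟨s, A, hA⟩ := exists_isFoxMatrix ℝ (closure_range_basis b) hl
  obtain ⟨t, C, hC⟩ := exists_isFoxMatrix ℤ (closure_range_basis b') fun a : s => le (b a).2
  have augmentation_injective (β : s → ZMod p) :=
    IsFoxMatrix.augmentation_injective (β := β)
      (fun _ => (pow_eq_one_iff_left (Fact.out : p.Prime).ne_zero).mp) b b' hC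
  refine relationsReduceTo_of_hasSmallKernel A
    (fun Q _ _ d hd => hA.isRelation_of_vecMul_eq_zero (fun a => (b a).2) hd) fun η hη =>
    ⟨t, C.map (MonoidAlgebra.mapRingHom _ (Int.castRingHom ℝ)),
      hasSmallKernel_of_augmentation_injective isResiduallyFiniteP_freeGroup augmentation_injective
        hη, fun Q _ _ d hd => ?_⟩
  exact (hA.mul (hC.map_coeff (Int.castRingHom ℝ)) le).vecMul_eq_zero_of_isRelation hd

theorem relationsReduceTo_fixedSubgroup_pow {n : ℕ} (hn : 0 < n) {φ : MulAut (FreeGroup X)}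
    {l : J → FreeGroup X} (hl : ∀ i, φ (l i) = l i) :
    RelationsReduceTo l (fixedSubgroup (φ ^ n).toMonoidHom) (fixedSubgroup φ.toMonoidHom) := by
  induction n using Nat.recOnMul generalizing φ with
  | zero => exact absurd hn (lt_irrefl 0)
  | one => rw [pow_one]; exact RelationsReduceTo.refl l _
  | prime p hp =>
    have : Fact p.Prime := ⟨hp⟩
    exact relationsReduceTo_fixedSubgroup_of_prime hl
  | mul a b ha hb =>
    rw [pow_mul]
    exact (hb (Nat.pos_of_mul_pos_left hn) fun i =>
      fixedSubgroup_le_fixedSubgroup_pow φ a (hl i)).trans (ha (Nat.pos_of_mul_pos_right hn) hl)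

theorem relationsReduceTo_top_fixedSubgroup (φ : MulAut (FreeGroup X))
    {l : J → FreeGroup X} (hl : ∀ i, φ (l i) = l i) :
    RelationsReduceTo l ⊤ (fixedSubgroup φ.toMonoidHom) := by
  obtain ⟨m, hm, reduce⟩ :=
    exists_relationsReduceTo_fixedSubgroup_pow (FreeGroupBasis.ofFreeGroup X) φ hl
  exact reduce.trans (relationsReduceTo_fixedSubgroup_pow hm hl)

end PrimePower

/-! ### Subgroup separability -/

section SubgroupSeparability

variable {X Ω : Type*} [MulAction (FreeGroup X) Ω]

theorem exists_permHom_extending_partial_action (V : Finset Ω) :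
    ∃ Φ : FreeGroup X →* Equiv.Perm V, ∀ (a : X × Bool) (v : V),
      FreeGroup.mk [a] • (v : Ω) ∈ V →
        (Φ (FreeGroup.mk [a]) v : Ω) = FreeGroup.mk [a] • (v : Ω) := by
  classical
  let e (x : X) : {v : V // FreeGroup.of x • (v : Ω) ∈ V} ≃
      {v : V // (FreeGroup.of x)⁻¹ • (v : Ω) ∈ V} :=
    { toFun v := ⟨⟨FreeGroup.of x • v.1, v.2⟩, by simp⟩
      invFun v := ⟨⟨(FreeGroup.of x)⁻¹ • v.1, v.2⟩, by simp⟩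
      left_inv v := by simp
      right_inv v := by simp }
  let Φ : FreeGroup X →* Equiv.Perm V := FreeGroup.lift fun x => (e x).extendSubtype
  have Φ_of (x : X) (v : V) (hv : FreeGroup.of x • (v : Ω) ∈ V) :
      Φ (FreeGroup.of x) v = ⟨FreeGroup.of x • (v : Ω), hv⟩ := by
    rw [FreeGroup.lift_apply_of, Equiv.extendSubtype_apply_of_mem (e x) v hv]
    rfl
  refine ⟨Φ, fun ⟨x, sign⟩ v hv => ?_⟩
  cases sign with
  | true => exact congrArg Subtype.val (Φ_of x v hv)
  | false =>
    change ((Φ (FreeGroup.of x)⁻¹ v : V) : Ω) = (FreeGroup.of x)⁻¹ • (v : Ω)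
    change (FreeGroup.of x)⁻¹ • (v : Ω) ∈ V at hv
    have eq : Φ (FreeGroup.of x)⁻¹ v = ⟨(FreeGroup.of x)⁻¹ • (v : Ω), hv⟩ := by
      rw [map_inv, Equiv.Perm.inv_eq_iff_eq, Φ_of x _ (by simp)]
      simp
    rw [eq]

theorem coe_permHom_mk_apply {V : Finset Ω} {Φ : FreeGroup X →* Equiv.Perm V}
    (hΦ : ∀ (a : X × Bool) (v : V),
      FreeGroup.mk [a] • (v : Ω) ∈ V → (Φ (FreeGroup.mk [a]) v : Ω) = FreeGroup.mk [a] • (v : Ω))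
    (v : V) {L : List (X × Bool)} (hL : ∀ L', L' <:+ L → FreeGroup.mk L' • (v : Ω) ∈ V) :
    (Φ (FreeGroup.mk L) v : Ω) = FreeGroup.mk L • (v : Ω) := by
  induction L with
  | nil => rw [← FreeGroup.one_eq_mk, map_one, one_smul, Equiv.Perm.one_apply]
  | cons a L ih =>
    have tail := ih fun L' h => hL L' (h.trans (List.suffix_cons a L))
    have mk_cons : FreeGroup.mk (a :: L) = FreeGroup.mk [a] * FreeGroup.mk L := by
      rw [FreeGroup.mul_mk, List.singleton_append]
    have mem := hL _ (List.suffix_refl _)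
    rw [mk_cons, mul_smul, ← tail] at mem ⊢
    rw [map_mul, Equiv.Perm.mul_apply, hΦ a _ mem]

theorem exists_finiteIndex_forall_mem_iff (K : Subgroup (FreeGroup X))
    (W : Finset (FreeGroup X)) :
    ∃ H : Subgroup (FreeGroup X), H.FiniteIndex ∧ ∀ w ∈ W, w ∈ H ↔ w ∈ K := by
  classical
  let base : FreeGroup X ⧸ K := (1 : FreeGroup X)
  let V : Finset (FreeGroup X ⧸ K) := insert base <|
    W.biUnion fun w => (w.toWord.tails.map fun L => FreeGroup.mk L • base).toFinset
  obtain ⟨Φ, hΦ⟩ := exists_permHom_extending_partial_action (X := X) V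
  let base' : V := ⟨base, Finset.mem_insert_self _ _⟩
  refine ⟨(MulAction.stabilizer (Equiv.Perm V) base').comap Φ, ?_, fun w hw => ?_⟩
  · have := Subgroup.finiteIndex_ker Φ
    exact Subgroup.finiteIndex_of_le (Φ.ker_le_comap _)
  have smul_mem (L : List (X × Bool)) (hL : L <:+ w.toWord) : FreeGroup.mk L • base ∈ V :=
    Finset.mem_insert_of_mem <| Finset.mem_biUnion.mpr ⟨w, hw, List.mem_toFinset.mpr <|
      List.mem_map.mpr ⟨L, (List.mem_tails _ _).mpr hL, rfl⟩⟩
  have apply_base := coe_permHom_mk_apply hΦ base' smul_mem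
  rw [FreeGroup.mk_toWord] at apply_base
  calc w ∈ (MulAction.stabilizer (Equiv.Perm V) base').comap Φ
      ↔ (Φ w base' : FreeGroup X ⧸ K) = base := Subtype.ext_iff
    _ ↔ w ∈ K := by
      rw [apply_base, eq_comm]
      exact QuotientGroup.eq.trans (by simp)

theorem exists_finiteIndex_ge_disjoint {K : Subgroup (FreeGroup X)} (hK : K.FG)
    {S : Finset (FreeGroup X)} (hS : ∀ f ∈ S, f ∉ K) :
    ∃ H : Subgroup (FreeGroup X), H.FiniteIndex ∧ K ≤ H ∧ ∀ f ∈ S, f ∉ H := by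
  classical
  obtain ⟨T, rfl⟩ := hK
  obtain ⟨H, finiteIndex, mem_iff⟩ :=
    exists_finiteIndex_forall_mem_iff (Subgroup.closure (T : Set (FreeGroup X))) (T ∪ S)
  refine ⟨H, finiteIndex, (Subgroup.closure_le H).mpr fun f hf => ?_, fun f hf => ?_⟩
  · exact (mem_iff f (Finset.mem_union_left _ hf)).mpr (Subgroup.subset_closure hf)
  · rw [mem_iff f (Finset.mem_union_right _ hf)]
    exact hS f hf

end SubgroupSeparability

/-! ### Inertia -/

section Rank

variable {G : Type u} [Group G] {H : Subgroup G}

theorem rk_le_mk_of_basis {κ : Type u} (b : FreeGroupBasis κ H) : rk H ≤ Cardinal.mk κ := by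
  have closure_eq : Subgroup.closure (Set.range fun i => (b i : G)) = H := by
    have := congrArg (Subgroup.map H.subtype) (closure_range_basis b)
    rwa [MonoidHom.map_closure, ← Set.range_comp, ← MonoidHom.range_eq_map, H.range_subtype]
      at this
  exact (ciInf_le' _ ⟨_, closure_eq⟩).trans Cardinal.mk_range_le

theorem exists_finset_closure_eq_and_card_eq_rk (hH : H.FG) :
    ∃ T : Finset G, Subgroup.closure (T : Set G) = H ∧ (T.card : Cardinal) = rk H := by
  have : Nonempty {S : Set G // Subgroup.closure S = H} := ⟨⟨H, H.closure_eq⟩⟩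
  obtain ⟨⟨S, closure_eq⟩, mk_eq⟩ :=
    ciInf_mem fun S : {S : Set G // Subgroup.closure S = H} => Cardinal.mk S.1
  obtain ⟨T₀, closure_T₀⟩ := hH
  have rk_lt : rk H < Cardinal.aleph0 :=
    (ciInf_le' _ ⟨_, closure_T₀⟩).trans_lt (Cardinal.lt_aleph0_of_finite T₀)
  have finite : S.Finite := Cardinal.lt_aleph0_iff_finite.mp (mk_eq.trans_lt rk_lt)
  refine ⟨finite.toFinset, by rwa [finite.coe_toFinset], ?_⟩
  rw [← Cardinal.mk_coe_finset, ← Finset.coe_sort_coe, finite.coe_toFinset]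
  exact mk_eq

end Rank

section Inertia

variable {X : Type u}

theorem exists_fixedPointFree_invariant {K : Subgroup (FreeGroup X)} (hK : K.FG)
    (S : Finset (FreeGroup X)) {S' : Finset (FreeGroup X)} (hS' : ∀ f ∈ S', f ∉ K) :
    ∃ (Q : Type u) (_ : MulAction (FreeGroup X) Q) (_ : Fintype Q) (I : Finset Q),
      FixedPointFree S Q ∧ I.Nonempty ∧ (∀ f ∈ K, ∀ q ∈ I, f • q ∈ I) ∧
        ∀ f ∈ S', ∀ q ∈ I, f • q ∉ I := by
  classical
  obtain ⟨H, _, K_le_H, avoids⟩ := exists_finiteIndex_ge_disjoint hK hS'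
  have : Fact (Nat.Prime 2) := ⟨Nat.prime_two⟩
  obtain ⟨N, _, _, -, free⟩ :=
    exists_fixedPointFree_quotient (p := 2) (isResiduallyFiniteP_freeGroup (X := X)) S
  let Q := (FreeGroup X ⧸ H) × (FreeGroup X ⧸ N)
  let _ : Fintype Q := Fintype.ofFinite Q
  let I : Finset Q := {q | q.1 = (1 : FreeGroup X)}
  have smul_mem_iff (f : FreeGroup X) {q : Q} (hq : q ∈ I) : f • q ∈ I ↔ f ∈ H := by
    have base_eq : q.1 = (1 : FreeGroup X) := (Finset.mem_filter_univ q).mp hq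
    rw [Finset.mem_filter_univ, Prod.smul_fst, base_eq, eq_comm]
    exact QuotientGroup.eq.trans (by simp)
  exact ⟨Q, inferInstance, inferInstance, I,
    fun f hf hf1 q h => free f hf hf1 q.2 (congrArg Prod.snd h),
    ⟨((1 : FreeGroup X), (1 : FreeGroup X)), (Finset.mem_filter_univ _).mpr rfl⟩,
    fun f hf q hq => (smul_mem_iff f hq).mpr (K_le_H hf),
    fun f hf q hq => mt (smul_mem_iff f hq).mp (avoids f hf)⟩

theorem card_le_card_of_basis_inf (φ : MulAut (FreeGroup X)) (T : Finset (FreeGroup X))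
    {ι : Type*} (c : FreeGroupBasis ι (fixedSubgroup φ.toMonoidHom ⊓
      Subgroup.closure (T : Set (FreeGroup X)) : Subgroup (FreeGroup X)))
    (s : Finset ι) : s.card ≤ T.card := by
  let K := Subgroup.closure (T : Set (FreeGroup X))
  let y (t : T) : K := ⟨t, Subgroup.subset_closure t.2⟩
  have hy : Subgroup.closure (Set.range y) = ⊤ := by
    rw [← Subgroup.closure_closure_coe_preimage]
    congr
    ext x
    exact ⟨fun ⟨t, ht⟩ => ht ▸ t.2, fun hx => ⟨⟨x, hx⟩, rfl⟩⟩
  let l (a : s) : FreeGroup X := c a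
  obtain ⟨S, reduce⟩ :=
    relationsReduceTo_top_fixedSubgroup φ (l := l) (fun a => (c a).2.1) (1 / 2) one_half_pos
  obtain ⟨S', hS', vanish⟩ := exists_forall_relations_eq_bot
    (IsFreeGroup.basis (fixedSubgroup φ.toMonoidHom)) c inf_le_left
    (Subtype.val_injective (p := (· ∈ s)))
  obtain ⟨Q, _, _, I, free, nonempty, invariant, disjoint⟩ :=
    exists_fixedPointFree_invariant ⟨T, rfl⟩ S fun f hf hfK => (hS' f hf).2 ⟨(hS' f hf).1, hfK⟩
  have lower : s.card * I.card ≤ finrank ℝ (relations l K I) + T.card * I.card := by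
    simpa only [Fintype.card_coe] using
      card_mul_card_le_finrank_relations (l := l) hy (fun a => (c a).2.2) invariant
  have mono : finrank ℝ (relations l K I) ≤ finrank ℝ (relations l ⊤ I) :=
    Submodule.finrank_mono (relations_mono le_top I)
  have upper := reduce Q free I
  rw [vanish Q I (fun f hf => invariant f hf.2) disjoint, finrank_bot] at upper
  by_contra! lt
  have card_pos : (0 : ℝ) < I.card := by exact_mod_cast nonempty.card_pos
  have excess : (I.card : ℝ) ≤ finrank ℝ (relations l ⊤ I) := by
    have := Nat.mul_le_mul_right I.card lt
    rw [Nat.succ_mul] at this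
    exact_mod_cast (by omega : I.card ≤ finrank ℝ (relations l ⊤ I))
  push_cast at upper
  linarith

end Inertia

end DicksVentura

open DicksVentura in
theorem fixedSubgroup_isInert_general {X : Type*} (φ : FreeGroup X ≃* FreeGroup X) :
    IsInert (fixedSubgroup φ.toMonoidHom) := by
  intro K hK
  obtain ⟨T, rfl, card_eq⟩ := exists_finset_closure_eq_and_card_eq_rk hK
  let c := IsFreeGroup.basis (fixedSubgroup φ.toMonoidHom ⊓
    Subgroup.closure (T : Set (FreeGroup X)) : Subgroup (FreeGroup X))
  calc rk (fixedSubgroup φ.toMonoidHom ⊓ Subgroup.closure (T : Set (FreeGroup X)))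
      ≤ Cardinal.mk _ := rk_le_mk_of_basis c
    _ ≤ T.card := Cardinal.card_le_of (card_le_card_of_basis_inf φ T c)
    _ = rk (Subgroup.closure (T : Set (FreeGroup X))) := card_eq

/-- (Dicks–Ventura) The fixed subgroup of an automorphism of `F_n` is inert in `F_n`. -/
theorem fixedSubgroup_isInert (n : ℕ) (φ : FreeGroup (Fin n) ≃* FreeGroup (Fin n)) :
    IsInert (fixedSubgroup φ.toMonoidHom) :=
  fixedSubgroup_isInert_general φ
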